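/- arXiv:math/0203180 — 3 statements merged into one kernel-verified Lean document; each statement's English description precedes it below -/
import Mathlib

section
/- Assume k has characteristic 0. Let t ≥ 2 and let p_2, …, p_t ∈ k \ {0,1} be distinct elements generating a free abelian subgroup of k^× of rank t−1. Let D_1 be the k-linear endomorphism of k[Y,Y⁻¹] determined by D_1(Yⁿ) = n·Y^{n−1} for all n ∈ ℤ (formal differentiation d/dY). Then the k-subalgebra of End_k(k[Y,Y⁻¹]) generated by D_1, D_{p_2}, …, D_{p_t} is a noetherian ring. -/
set_option synthInstance.maxHeartbeats 1000000
set_option maxHeartbeats 4000000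
set_option maxSynthPendingDepth 3

noncomputable section

open Polynomial Filter Topology

/-- A series in falling factorials whose coefficients tend to zero in a nonarchimedean field
and which vanishes at infinitely many natural numbers has all its coefficients zero. -/
theorem descFactorial_series_eq_zero {K : Type*} [NormedField K] [IsUltrametricDist K]
    (b : ℕ → K) (hb : Tendsto b atTop (𝓝 0)) [CharZero K]
    (hinf : {n : ℕ | ∑ i ∈ Finset.range (n + 1), b i * (n.descFactorial i : K) = 0}.Infinite) :
    ∀ i, b i = 0 := by
  by_contra! hne
  obtain ⟨i0, hi0⟩ := hne
  have hfin : {i | ‖b i0‖ ≤ ‖b i‖}.Finite := by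
    have h1 : ∀ᶠ i in atTop, ‖b i‖ < ‖b i0‖ :=
      (tendsto_zero_iff_norm_tendsto_zero.1 hb).eventually_lt_const (norm_pos_iff.2 hi0)
    rw [← Nat.cofinite_eq_atTop, eventually_cofinite] at h1
    simpa using h1
  obtain ⟨N, hNmem, hNmax⟩ := Finset.exists_max_image hfin.toFinset
    (fun i => toLex (‖b i‖, i)) ⟨i0, by simp⟩
  have hNmem' : ‖b i0‖ ≤ ‖b N‖ := by simpa using hNmem
  have hNpos : 0 < ‖b N‖ := (norm_pos_iff.2 hi0).trans_le hNmem'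
  have hlt : ∀ i, N < i → ‖b i‖ < ‖b N‖ := by
    intro i hi
    by_cases h : ‖b i0‖ ≤ ‖b i‖
    · have := hNmax i (by simpa using h)
      rw [Prod.Lex.le_iff] at this
      rcases this with h' | ⟨_, h'⟩
      · exact h'
      · simp at h'; omega
    · exact (not_le.1 h).trans_le hNmem'
  obtain ⟨t, hts, htc⟩ := hinf.exists_subset_card_eq (N + 1)
  let D : ℤ[X] := ∏ n ∈ t, (X - C (n : ℤ))
  have hDm : D.Monic := monic_prod_of_monic _ _ fun n _ => monic_X_sub_C _
  have hDdeg : D.natDegree = N + 1 := by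
    rw [natDegree_prod_of_monic _ _ fun n _ => monic_X_sub_C _]
    simp only [natDegree_X_sub_C, Finset.sum_const, htc, smul_eq_mul, mul_one]
  let m := max (t.sup id) N
  let P : K[X] := ∑ i ∈ Finset.range (m + 1), b i • descPochhammer K i
  have hroot : ∀ n ∈ t, P.eval (n : K) = 0 := by
    intro n hn
    have h0 : ∑ i ∈ Finset.range (n + 1), b i * (n.descFactorial i : K) = 0 := hts hn
    have hnm : n ≤ m := le_max_of_le_left (Finset.le_sup (f := id) hn)
    simp only [P, eval_finsetSum, eval_smul, smul_eq_mul, descPochhammer_eval_eq_descFactorial]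
    rw [← h0]
    symm
    apply Finset.sum_subset (by intro i; simp; omega)
    intro i _ hi
    rw [Nat.descFactorial_of_lt (by simpa using hi)]
    simp
  have hdvd : D.map (Int.castRingHom K) ∣ P := by
    simp only [D, Polynomial.map_prod]
    apply Finset.prod_dvd_of_coprime
    · intro i _ j _ hij
      have := pairwise_coprime_X_sub_C (K := K) (s := fun n : ℕ => (n : K)) Nat.cast_injective hij
      simpa [Function.onFun] using this
    · intro n hn
      have hmap : Polynomial.map (Int.castRingHom K) (X - C (n : ℤ)) = X - C (n : K) := by simp
      rw [hmap, dvd_iff_isRoot]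
      exact hroot n hn
  have hmod : P %ₘ (D.map (Int.castRingHom K)) = 0 :=
    (modByMonic_eq_zero_iff_dvd (hDm.map _)).2 hdvd
  have hsum : ∑ i ∈ Finset.range (m + 1),
      b i * (((descPochhammer ℤ i %ₘ D).coeff N : ℤ) : K) = 0 := by
    have h2 := congrArg (fun q => q.coeff N) hmod
    change (modByMonicHom (D.map (Int.castRingHom K)) P).coeff N = _ at h2
    simp only [P, map_sum, map_smul, finsetSum_coeff, coeff_smul, coeff_zero, smul_eq_mul] at h2
    rw [← h2]
    refine Finset.sum_congr rfl fun i _ => ?_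
    congr 1
    change _ = (descPochhammer K i %ₘ (D.map (Int.castRingHom K))).coeff N
    rw [← descPochhammer_map (Int.castRingHom K) i, ← map_modByMonic _ hDm, coeff_map]
    simp
  rw [← Finset.add_sum_erase _ _ (show N ∈ Finset.range (m + 1) by simp [m])] at hsum
  have hself : ∀ i ≤ N, descPochhammer ℤ i %ₘ D = descPochhammer ℤ i := by
    intro i hi
    rw [modByMonic_eq_self_iff hDm]
    apply degree_lt_degree
    rw [descPochhammer_natDegree, hDdeg]
    omega
  have hone : (descPochhammer ℤ N %ₘ D).coeff N = 1 := by
    rw [hself N le_rfl]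
    have := monic_descPochhammer ℤ N
    rwa [Monic, leadingCoeff, descPochhammer_natDegree] at this
  rw [hone, Int.cast_one, mul_one] at hsum
  have hterm : ∀ i ∈ (Finset.range (m + 1)).erase N,
      ‖b i * (((descPochhammer ℤ i %ₘ D).coeff N : ℤ) : K)‖ < ‖b N‖ := by
    intro i hi
    rcases lt_or_gt_of_ne (Finset.ne_of_mem_erase hi) with h | h
    · rw [hself i h.le, coeff_eq_zero_of_natDegree_lt (by rwa [descPochhammer_natDegree])]
      simpa using hNpos
    · rw [norm_mul]
      exact (mul_le_of_le_one_right (norm_nonneg _)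
        (IsUltrametricDist.norm_intCast_le_one K _)).trans_lt (hlt i h)
  have hlt2 : ‖∑ i ∈ (Finset.range (m + 1)).erase N,
      b i * (((descPochhammer ℤ i %ₘ D).coeff N : ℤ) : K)‖ < ‖b N‖ := by
    rcases ((Finset.range (m + 1)).erase N).eq_empty_or_nonempty with h | h
    · rw [h]; simpa using hNpos
    · have : Nonempty ℕ := ⟨0⟩
      obtain ⟨i, hi, hle⟩ := IsUltrametricDist.exists_norm_finsetSum_le
        ((Finset.range (m + 1)).erase N)
        (fun i => b i * (((descPochhammer ℤ i %ₘ D).coeff N : ℤ) : K))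
      exact hle.trans_lt (hterm i (hi h))
  rw [add_eq_zero_iff_eq_neg] at hsum
  rw [hsum, norm_neg] at hlt2
  exact lt_irrefl _ hlt2

/-- Exponential polynomials with distinct nonzero bases are linearly independent. -/
theorem exp_poly_independent {k : Type*} [Field k] [CharZero k] {ι : Type*} [Fintype ι]
    (β : ι → k) (hβ0 : ∀ i, β i ≠ 0) (hβ : Function.Injective β) (f : ι → k[X])
    (h : ∀ m : ℕ, ∑ i, (f i).eval (m : k) * β i ^ m = 0) : ∀ i, f i = 0 := by
  classical
  let E : Module.End k (ℕ → k) := LinearMap.funLeft k k Nat.succ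
  have hE : ∀ (g : k → k) (c : k) (n : ℕ),
      ((E - c • (1 : Module.End k (ℕ → k))) ^ n) (fun m => g m * c ^ m) =
        c ^ n • fun m : ℕ => (fwdDiff 1)^[n] g m * c ^ m := by
    intro g c n
    induction n with
    | zero => simp
    | succ n ih =>
      rw [pow_succ', Module.End.mul_apply, ih]
      ext m
      simp only [map_smul, Function.iterate_succ_apply', fwdDiff]
      simp [E, LinearMap.funLeft_apply]
      ring
  have hmem : ∀ i, (fun m : ℕ => (f i).eval (m : k) * β i ^ m) ∈ E.maxGenEigenspace (β i) := by
    intro i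
    rw [Module.End.mem_maxGenEigenspace]
    refine ⟨(f i).natDegree + 1, ?_⟩
    rw [hE (fun x => (f i).eval x), fwdDiff_iter_degree_add_one_eq_zero]
    ext; simp
  have hind := (E.independent_maxGenEigenspace).comp hβ
  have hz : ∀ i, (fun m : ℕ => (f i).eval (m : k) * β i ^ m) = 0 := by
    intro i
    have hi := hind i
    rw [Submodule.disjoint_def] at hi
    apply hi _ (hmem i)
    have hs : (fun m : ℕ => (f i).eval (m : k) * β i ^ m) =
        -∑ j ∈ Finset.univ.erase i, (fun m : ℕ => (f j).eval (m : k) * β j ^ m) := by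
      ext m
      have := h m
      rw [← Finset.add_sum_erase _ _ (Finset.mem_univ i)] at this
      simpa using eq_neg_of_add_eq_zero_left this
    rw [hs]
    refine Submodule.neg_mem _ (Submodule.sum_mem _ fun j hj => ?_)
    exact Submodule.mem_iSup_of_mem j (Submodule.mem_iSup_of_mem (Finset.ne_of_mem_erase hj)
      (hmem j))
  intro i
  apply eq_zero_of_infinite_isRoot
  refine (Set.infinite_range_of_injective (Nat.cast_injective (R := k))).mono ?_
  rintro _ ⟨m, rfl⟩
  have := congrFun (hz i) m
  simpa [hβ0 i] using this

/-- Sequences given by a series in falling factorials with coefficients tending to zero. -/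
def IsFactorialSeries {K : Type*} [NormedField K] (g : ℕ → K) : Prop :=
  ∃ b : ℕ → K, Tendsto b atTop (𝓝 0) ∧
    ∀ n, g n = ∑ i ∈ Finset.range (n + 1), b i * (n.descFactorial i : K)

namespace IsFactorialSeries

variable {K : Type*} [NormedField K]

theorem zero : IsFactorialSeries (fun _ => (0 : K)) :=
  ⟨fun _ => 0, tendsto_const_nhds, by simp⟩

theorem add {g h : ℕ → K} (hg : IsFactorialSeries g) (hh : IsFactorialSeries h) :
    IsFactorialSeries (fun n => g n + h n) := by
  obtain ⟨b, hb, hgb⟩ := hg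
  obtain ⟨c, hc, hhc⟩ := hh
  refine ⟨fun i => b i + c i, by simpa using hb.add hc, fun n => ?_⟩
  simp only [hgb, hhc, add_mul, Finset.sum_add_distrib]

theorem const_mul (a : K) {g : ℕ → K} (hg : IsFactorialSeries g) :
    IsFactorialSeries (fun n => a * g n) := by
  obtain ⟨b, hb, hgb⟩ := hg
  refine ⟨fun i => a * b i, by simpa using hb.const_mul a, fun n => ?_⟩
  simp only [hgb, Finset.mul_sum, mul_assoc]

theorem sum {ι : Type*} (s : Finset ι) {g : ι → ℕ → K}
    (hg : ∀ i ∈ s, IsFactorialSeries (g i)) :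
    IsFactorialSeries (fun n => ∑ i ∈ s, g i n) := by
  classical
  induction s using Finset.induction_on with
  | empty => simpa using zero
  | insert a s ha ih =>
    simp only [Finset.sum_insert ha]
    exact (hg a (by simp)).add (ih fun i hi => hg i (by simp [hi]))

theorem nat_mul [IsUltrametricDist K] {g : ℕ → K} (hg : IsFactorialSeries g) :
    IsFactorialSeries (fun n => (n : K) * g n) := by
  obtain ⟨b, hb, hgb⟩ := hg
  refine ⟨fun i => (match i with | 0 => 0 | j + 1 => b j) + (i : K) * b i, ?_, fun n => ?_⟩
  · rw [← add_zero (0 : K)]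
    refine Tendsto.add ?_ ?_
    · rw [← tendsto_add_atTop_iff_nat 1]
      exact hb
    · refine squeeze_zero_norm (fun i => ?_) (tendsto_zero_iff_norm_tendsto_zero.1 hb)
      rw [norm_mul]
      exact mul_le_of_le_one_left (norm_nonneg _) (IsUltrametricDist.norm_natCast_le_one K i)
  · have hrec : ∀ i, i ≤ n → (n : K) * (n.descFactorial i : K) =
        (n.descFactorial (i + 1) : K) + i * (n.descFactorial i : K) := by
      intro i hi
      rw [Nat.descFactorial_succ]
      push_cast [hi]
      ring
    have h1 : ∑ i ∈ Finset.range (n + 1),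
        (match i with | 0 => (0 : K) | j + 1 => b j) * (n.descFactorial i : K) =
        ∑ i ∈ Finset.range (n + 1), b i * (n.descFactorial (i + 1) : K) := by
      rw [Finset.sum_range_succ' _ n, Finset.sum_range_succ _ n,
        Nat.descFactorial_of_lt (Nat.lt_succ_self n)]
      simp
    simp only [add_mul, Finset.sum_add_distrib]
    rw [h1, ← Finset.sum_add_distrib, hgb, Finset.mul_sum]
    refine Finset.sum_congr rfl fun i hi => ?_
    rw [mul_left_comm, hrec i (by simpa [Nat.lt_succ_iff] using hi)]
    ring

theorem eval_mul [IsUltrametricDist K] (f : K[X]) {g : ℕ → K} (hg : IsFactorialSeries g) :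
    IsFactorialSeries (fun n => f.eval (n : K) * g n) := by
  have hpow : ∀ j : ℕ, IsFactorialSeries (fun n => (n : K) ^ j * g n) := by
    intro j
    induction j with
    | zero => simpa using hg
    | succ j ih => simpa [pow_succ', mul_assoc] using ih.nat_mul
  simp only [eval_eq_sum_range, Finset.sum_mul, mul_assoc]
  exact sum _ fun i _ => (hpow i).const_mul _

theorem pow [CharZero K] {r : ℝ} (hr : 0 < r) (hfac : ∀ i : ℕ, r ^ i ≤ ‖(i.factorial : K)‖)
    {β : K} (hβ : ‖β - 1‖ < r) : IsFactorialSeries (fun n => β ^ n) := by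
  refine ⟨fun i => (β - 1) ^ i / (i.factorial : K), ?_, fun n => ?_⟩
  · have h1 : Tendsto (fun i : ℕ => (‖β - 1‖ / r) ^ i) atTop (𝓝 0) :=
      tendsto_pow_atTop_nhds_zero_of_lt_one (by positivity) ((div_lt_one hr).2 hβ)
    refine squeeze_zero_norm (fun i => ?_) h1
    rw [norm_div, norm_pow, div_pow]
    exact div_le_div_of_nonneg_left (by positivity) (by positivity) (hfac i)
  · change β ^ n = _
    conv_lhs => rw [← sub_add_cancel β 1, add_pow]
    refine Finset.sum_congr rfl fun i _ => ?_
    rw [Nat.descFactorial_eq_factorial_mul_choose]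
    have : (i.factorial : K) ≠ 0 := Nat.cast_ne_zero.2 i.factorial_ne_zero
    push_cast
    field_simp
    simp

end IsFactorialSeries

/-- The Skolem-Mahler-Lech theorem for nondegenerate exponential polynomials over a nonarchimedean
field in which every base has a power close to one. -/
theorem exp_poly_eq_zero_of_close_to_one {K : Type*} [NormedField K] [IsUltrametricDist K]
    [CharZero K] {r : ℝ} (hr : 0 < r) (hfac : ∀ i : ℕ, r ^ i ≤ ‖(i.factorial : K)‖)
    {ι : Type*} [Fintype ι] (α : ι → K) (hα0 : ∀ i, α i ≠ 0)
    {N : ℕ} (hN : N ≠ 0) (hclose : ∀ i, ‖α i ^ N - 1‖ < r)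
    (hα : Function.Injective fun i => α i ^ N) (f : ι → K[X])
    (hinf : {n : ℕ | ∑ i, (f i).eval (n : K) * α i ^ n = 0}.Infinite) : ∀ i, f i = 0 := by
  have hex : ∃ c < N, {m : ℕ | c + N * m ∈
      {n : ℕ | ∑ i, (f i).eval (n : K) * α i ^ n = 0}}.Infinite := by
    by_contra! hcon
    apply hinf
    refine ((Set.finite_lt_nat N).biUnion (t := fun c => (fun m => c + N * m) ''
      {m : ℕ | c + N * m ∈ {n : ℕ | ∑ i, (f i).eval (n : K) * α i ^ n = 0}})
      fun c hc => (Set.not_infinite.1 (by simpa using hcon c hc)).image _).subset ?_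
    intro n hn
    simp only [Set.mem_iUnion, Set.mem_image]
    exact ⟨n % N, Nat.mod_lt _ (Nat.pos_of_ne_zero hN), n / N,
      by rw [Set.mem_ofPred_eq, Nat.mod_add_div]; exact hn, Nat.mod_add_div n N⟩
  obtain ⟨c, -, hc⟩ := hex
  let h : ι → K[X] := fun i => C (α i ^ c) * (f i).comp (C (c : K) + C (N : K) * X)
  have hval : ∀ m : ℕ, ∑ i, (f i).eval ((c + N * m : ℕ) : K) * α i ^ (c + N * m) =
      ∑ i, (h i).eval (m : K) * (α i ^ N) ^ m := by
    intro m
    refine Finset.sum_congr rfl fun i _ => ?_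
    simp only [h, eval_mul, eval_C, eval_comp, eval_add, eval_X]
    push_cast
    ring
  have hser : IsFactorialSeries (fun m : ℕ => ∑ i, (h i).eval (m : K) * (α i ^ N) ^ m) :=
    IsFactorialSeries.sum _ fun i _ => (IsFactorialSeries.pow hr hfac (hclose i)).eval_mul (h i)
  obtain ⟨b, hb, hgb⟩ := hser
  dsimp only at hgb
  have hb0 := descFactorial_series_eq_zero b hb (by
    refine hc.mono fun m hm => ?_
    rw [Set.mem_ofPred_eq, ← hgb m, ← hval m]
    exact hm)
  have hz : ∀ i, h i = 0 := by
    refine exp_poly_independent (fun i => α i ^ N) (fun i => pow_ne_zero _ (hα0 i)) hα h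
      fun m => ?_
    rw [hgb m]
    simp [hb0]
  intro i
  apply eq_zero_of_infinite_isRoot
  have hinj : Function.Injective fun m : ℕ => (c : K) + N * m := by
    intro a b hab
    have hN' : (N : K) ≠ 0 := Nat.cast_ne_zero.2 hN
    simpa [hN'] using hab
  refine (Set.infinite_range_of_injective hinj).mono ?_
  rintro _ ⟨m, rfl⟩
  have := congrArg (eval (m : K)) (hz i)
  simpa [h, hα0 i, eval_comp] using this

namespace PadicAlgCl

variable (p : ℕ) [hp : Fact p.Prime]

theorem norm_natCast (n : ℕ) : ‖(n : PadicAlgCl p)‖ = ‖(n : ℚ_[p])‖ := by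
  rw [← norm_extends p (n : ℚ_[p]), map_natCast]

theorem norm_intCast (n : ℤ) : ‖(n : PadicAlgCl p)‖ = ‖(n : ℚ_[p])‖ := by
  rw [← norm_extends p (n : ℚ_[p]), map_intCast]

theorem inv_pow_le_norm_factorial (i : ℕ) :
    ((p : ℝ)⁻¹) ^ i ≤ ‖(i.factorial : PadicAlgCl p)‖ := by
  rw [norm_natCast]
  have h1 : (1 : ℝ) < p := by exact_mod_cast hp.1.one_lt
  have h2 : padicValNat p i.factorial ≤ i := by
    rcases eq_or_ne i 0 with rfl | h
    · simp
    · exact (padicValNat_factorial_lt_of_ne_zero p h).le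
  rw [Padic.norm_eq_zpow_neg_valuation (by exact_mod_cast i.factorial_ne_zero),
    Padic.valuation_natCast, zpow_neg, zpow_natCast, inv_pow]
  exact inv_anti₀ (by positivity) (pow_le_pow_right₀ h1.le h2)

/-- Units of the ring of integers have powers arbitrarily close to one. -/
theorem exists_pow_sub_one_norm_lt {u : PadicAlgCl p} (hu : ‖u‖ = 1) {ε : ℝ} (hε : 0 < ε) :
    ∃ N : ℕ, N ≠ 0 ∧ ‖u ^ N - 1‖ < ε := by
  let S : Submodule ℚ_[p] (PadicAlgCl p) := Subalgebra.toSubmodule (Algebra.adjoin ℚ_[p] {u})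
  have hfd : FiniteDimensional ℚ_[p] S := by
    rw [← Submodule.fg_iff_finiteDimensional]
    exact (Algebra.IsIntegral.isIntegral (R := ℚ_[p]) u).fg_adjoin_singleton
  have hprop : ProperSpace S := FiniteDimensional.proper ℚ_[p] S
  let x : ℕ → S := fun n => ⟨u ^ n, Subalgebra.pow_mem _ (Algebra.self_mem_adjoin_singleton _ u) n⟩
  have hx : ∀ n, x n ∈ Metric.closedBall (0 : S) 1 := by
    intro n
    simp [x, hu]
  obtain ⟨a, -, φ, hφ, hlim⟩ := (isCompact_closedBall (0 : S) 1).tendsto_subseq hx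
  have hc := hlim.cauchySeq
  rw [Metric.cauchySeq_iff'] at hc
  obtain ⟨M, hM⟩ := hc ε hε
  have h1 := hM (M + 1) (by omega)
  have hlt : φ M < φ (M + 1) := hφ (by omega)
  refine ⟨φ (M + 1) - φ M, by omega, ?_⟩
  rw [Subtype.dist_eq, dist_eq_norm] at h1
  have h2 : u ^ φ (M + 1) - u ^ φ M = u ^ φ M * (u ^ (φ (M + 1) - φ M) - 1) := by
    rw [mul_sub, ← pow_add, mul_one, Nat.add_sub_cancel' hlt.le]
  simpa [x, h2, hu] using h1

end PadicAlgCl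

/-- The Skolem-Mahler-Lech theorem for nondegenerate exponential polynomials whose bases are
units of the ring of integers of an algebraic closure of the `p`-adic numbers. -/
theorem exp_poly_eq_zero_padic (p : ℕ) [hp : Fact p.Prime] {ι : Type*} [Fintype ι]
    (α : ι → PadicAlgCl p) (hα1 : ∀ i, ‖α i‖ = 1)
    (hα : ∀ N : ℕ, N ≠ 0 → Function.Injective fun i => α i ^ N) (f : ι → (PadicAlgCl p)[X])
    (hinf : {n : ℕ | ∑ i, (f i).eval (n : PadicAlgCl p) * α i ^ n = 0}.Infinite) :
    ∀ i, f i = 0 := by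
  have hp0 : (0 : ℝ) < (p : ℝ)⁻¹ := inv_pos.2 (by exact_mod_cast hp.1.pos)
  choose M hM0 hM using fun i => PadicAlgCl.exists_pow_sub_one_norm_lt p (hα1 i) hp0
  have hN0 : ∏ i, M i ≠ 0 := Finset.prod_ne_zero_iff.2 fun i _ => hM0 i
  refine exp_poly_eq_zero_of_close_to_one hp0 (PadicAlgCl.inv_pow_le_norm_factorial p) α
    (fun i => norm_ne_zero_iff.1 (by rw [hα1 i]; exact one_ne_zero)) hN0 (fun i => ?_)
    (hα _ hN0) f hinf
  obtain ⟨q, hq⟩ := Finset.dvd_prod_of_mem M (Finset.mem_univ i)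
  rw [hq, pow_mul]
  refine lt_of_le_of_lt ?_ (hM i)
  rw [← mul_geom_sum, norm_mul]
  refine mul_le_of_le_one_right (norm_nonneg _) ?_
  refine IsUltrametricDist.norm_sum_le_of_forall_le_of_nonneg zero_le_one fun j _ => ?_
  simp [hα1 i]

namespace PadicAlgCl

variable (p : ℕ) [hp : Fact p.Prime]

theorem norm_natCast_self_lt_one : ‖(p : PadicAlgCl p)‖ < 1 := by
  rw [norm_natCast]
  exact Padic.norm_p_lt_one

theorem norm_intCast_le_one (n : ℤ) : ‖(n : PadicAlgCl p)‖ ≤ 1 := by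
  rw [norm_intCast]
  exact Padic.norm_int_le_one n

/-- Algebraically independent elements exist in every residue class of integer points. -/
theorem exists_algebraicIndependent_near {ι : Type} [Fintype ι] (c : ι → ℤ) :
    ∃ τ : ι → PadicAlgCl p, AlgebraicIndependent ℤ τ ∧ ∀ i, ‖τ i - c i‖ < 1 := by
  obtain ⟨ι', v, hv⟩ := exists_isTranscendenceBasis' ℤ (PadicAlgCl p)
  have hinf : Infinite ι' := by
    by_contra hfin
    rw [not_infinite_iff_finite] at hfin
    have h1 := IsAlgClosed.cardinal_le_max_transcendence_basis' v hv
    have h2 : Cardinal.mk ι' ≤ Cardinal.aleph0 := Cardinal.mk_le_aleph0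
    have h3 : Cardinal.continuum ≤ Cardinal.mk (PadicAlgCl p) :=
      (continuum_le_cardinal_of_nontriviallyNormedField ℚ_[p]).trans
        (Cardinal.mk_le_of_injective (algebraMap ℚ_[p] (PadicAlgCl p)).injective)
    have h4 : Cardinal.mk (PadicAlgCl p) ≤ Cardinal.aleph0 :=
      h1.trans (max_le (max_le (by simp) h2) le_rfl)
    exact absurd (h3.trans h4) (not_le.2 Cardinal.aleph0_lt_continuum)
  obtain ⟨e⟩ : Nonempty (ι ↪ ι') := by
    exact ⟨(Fintype.equivFin ι).toEmbedding.trans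
      (Fin.valEmbedding.trans (Infinite.natEmbedding ι'))⟩
  have hξ : AlgebraicIndependent ℤ (v ∘ e) := hv.1.comp e e.injective
  have hM : ∀ i, ∃ M : ℕ, ‖(p : PadicAlgCl p)‖ ^ M * ‖v (e i)‖ < 1 := by
    intro i
    have h := (tendsto_pow_atTop_nhds_zero_of_lt_one (norm_nonneg _)
      (norm_natCast_self_lt_one p)).mul_const ‖v (e i)‖
    rw [zero_mul] at h
    exact (h.eventually_lt_const one_pos).exists
  choose M hM using hM
  refine ⟨_, hξ.polynomial_aeval_of_transcendental
    (f := fun i => Polynomial.C ((p : ℤ) ^ M i) * Polynomial.X + Polynomial.C (c i)) ?_, ?_⟩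
  · intro i
    have h0 : ((p : ℤ) ^ M i) ≠ 0 := pow_ne_zero _ (by exact_mod_cast hp.1.ne_zero)
    refine Polynomial.transcendental _ ?_ ?_
    · rw [Polynomial.natDegree_linear h0]; exact one_ne_zero
    · rw [Polynomial.leadingCoeff_linear h0]
      exact mem_nonZeroDivisors_of_ne_zero h0
  · intro i
    simpa [norm_mul] using hM i

theorem norm_aeval_le_one_and_sub_lt {ι : Type*} (τ : ι → PadicAlgCl p) (c : ι → ℤ)
    (h : ∀ i, ‖τ i - c i‖ < 1) (P : MvPolynomial ι ℤ) :
    ‖MvPolynomial.aeval τ P‖ ≤ 1 ∧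
      ‖MvPolynomial.aeval τ P - (MvPolynomial.eval c P : ℤ)‖ < 1 := by
  have key : ∀ P : MvPolynomial ι ℤ,
      ‖MvPolynomial.aeval τ P - (MvPolynomial.eval c P : ℤ)‖ < 1 →
      ‖MvPolynomial.aeval τ P‖ ≤ 1 := by
    intro P hP
    have h1 := IsUltrametricDist.norm_add_le_max
      (MvPolynomial.aeval τ P - (MvPolynomial.eval c P : ℤ))
      ((MvPolynomial.eval c P : ℤ) : PadicAlgCl p)
    rw [sub_add_cancel] at h1
    exact h1.trans (max_le hP.le (norm_intCast_le_one p _))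
  have main : ‖MvPolynomial.aeval τ P - (MvPolynomial.eval c P : ℤ)‖ < 1 := by
    induction P using MvPolynomial.induction_on with
    | C a => simp
    | add P Q hP hQ =>
      have h1 := IsUltrametricDist.norm_add_le_max
        (MvPolynomial.aeval τ P - (MvPolynomial.eval c P : ℤ))
        (MvPolynomial.aeval τ Q - (MvPolynomial.eval c Q : ℤ))
      refine lt_of_le_of_lt (le_of_eq_of_le ?_ h1) (max_lt hP hQ)
      congr 1
      simp only [map_add, Int.cast_add]
      ring
    | mul_X P i hP =>
      have h1 := IsUltrametricDist.norm_add_le_max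
        (MvPolynomial.aeval τ P * (τ i - c i))
        ((MvPolynomial.aeval τ P - (MvPolynomial.eval c P : ℤ)) * c i)
      refine lt_of_le_of_lt (le_of_eq_of_le ?_ h1) (max_lt ?_ ?_)
      · congr 1
        simp only [map_mul, Int.cast_mul, MvPolynomial.aeval_X, MvPolynomial.eval_X]
        ring
      · rw [norm_mul]
        exact (mul_le_of_le_one_left (norm_nonneg _) (key P hP)).trans_lt (h i)
      · rw [norm_mul]
        exact (mul_le_of_le_one_right (norm_nonneg _) (norm_intCast_le_one p _)).trans_lt hP
  exact ⟨key P main, main⟩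

end PadicAlgCl

/-- Integral elements over a ring mapping to the unit ball lie in the unit ball. -/
theorem norm_le_one_of_isIntegral {R K : Type*} [CommRing R] [NormedField K]
    [IsUltrametricDist K] [Algebra R K] (hR : ∀ r : R, ‖algebraMap R K r‖ ≤ 1) {x : K}
    (hx : IsIntegral R x) : ‖x‖ ≤ 1 := by
  obtain ⟨P, hP, hx⟩ := hx
  by_contra! hlt
  have h0 : P.natDegree ≠ 0 := by
    intro h
    rw [hP.natDegree_eq_zero.1 h] at hx
    simp at hx
  rw [Polynomial.eval₂_eq_sum_range, Finset.sum_range_succ, hP.coeff_natDegree, map_one,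
    one_mul] at hx
  have h1 : ‖x ^ P.natDegree‖ ≤ ‖x‖ ^ (P.natDegree - 1) := by
    rw [← neg_eq_of_add_eq_zero_right hx, norm_neg]
    refine IsUltrametricDist.norm_sum_le_of_forall_le_of_nonneg (by positivity) fun i hi => ?_
    rw [norm_mul, norm_pow]
    refine (mul_le_of_le_one_left (by positivity) (hR _)).trans
      (pow_le_pow_right₀ hlt.le ?_)
    have := Finset.mem_range.1 hi
    omega
  rw [norm_pow] at h1
  exact absurd h1 (not_le.2 (pow_lt_pow_right₀ hlt (by omega)))

/-- Cassels' embedding: finitely many elements of a field of characteristic zero can be moved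
into an algebraic closure of some field of `p`-adic numbers in such a way that the nonzero ones
become units of the ring of integers. -/
theorem exists_padic_embedding {k : Type*} [Field k] [CharZero k] (G : Set k) (hG : G.Finite) :
    ∃ (p : ℕ) (_ : Fact p.Prime) (A : Subalgebra ℤ k) (φ : A →+* PadicAlgCl p),
      Function.Injective φ ∧ G ⊆ A ∧ ∀ x : A, (x : k) ∈ G → x ≠ 0 → ‖φ x‖ = 1 := by
  classical
  let S : Set k := G ∪ (fun x => x⁻¹) '' G
  have hS : S.Finite := hG.union (hG.image _)
  let A := Algebra.adjoin ℤ S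
  let s : Set A := ((↑) : A → k) ⁻¹' S
  have hs : s.Finite := hS.preimage Subtype.val_injective.injOn
  have hsS : ∀ x : A, (x : k) ∈ S → x ∈ s := fun x hx => hx
  have htop : Algebra.adjoin ℤ s = ⊤ := Algebra.adjoin_adjoin_coe_preimage
  have halg : Algebra.IsAlgebraic (Algebra.adjoin ℤ s) A := by
    constructor
    intro a
    have ha : a ∈ Algebra.adjoin ℤ s := htop ▸ Algebra.mem_top
    exact isAlgebraic_algebraMap (⟨a, ha⟩ : Algebra.adjoin ℤ s)
  obtain ⟨t, hts, ht⟩ := exists_isTranscendenceBasis_subset (R := ℤ) s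
  have htfin : Finite t := (hs.subset hts).to_subtype
  obtain ⟨n, ⟨en⟩⟩ := Finite.exists_equiv_fin t
  let x : Fin n → A := fun i => (en.symm i : A)
  have hx : IsTranscendenceBasis ℤ x := ht.comp_equiv en.symm
  let R := Algebra.adjoin ℤ (Set.range x)
  have hRA : Algebra.IsAlgebraic R A := hx.isAlgebraic
  obtain ⟨y, hy0, hy⟩ := Algebra.IsAlgebraic.exists_integral_multiples R hs.toFinset
  let E := hx.1.aevalEquiv
  have hy' : E.symm y ≠ 0 := by simpa using hy0
  obtain ⟨c, hc⟩ : ∃ c : Fin n → ℤ, MvPolynomial.eval c (E.symm y) ≠ 0 := by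
    by_contra! h
    exact hy' (MvPolynomial.funext fun c => by simpa using h c)
  obtain ⟨p, hpgt, hp⟩ := Nat.exists_infinite_primes
    ((MvPolynomial.eval c (E.symm y)).natAbs + 1)
  have hfact : Fact p.Prime := ⟨hp⟩
  obtain ⟨τ, hτ, hτc⟩ := PadicAlgCl.exists_algebraicIndependent_near p c
  let ψ : R →ₐ[ℤ] PadicAlgCl p := (MvPolynomial.aeval τ).comp E.symm.toAlgHom
  have hψinj : Function.Injective ψ :=
    (show Function.Injective (MvPolynomial.aeval (R := ℤ) τ) from hτ).comp E.symm.injective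
  have hψle : ∀ r, ‖ψ r‖ ≤ 1 := fun r =>
    (PadicAlgCl.norm_aeval_le_one_and_sub_lt p τ c hτc (E.symm r)).1
  have hψy : ‖ψ y‖ = 1 := by
    have h1 := (PadicAlgCl.norm_aeval_le_one_and_sub_lt p τ c hτc (E.symm y)).2
    have h2 : ‖((MvPolynomial.eval c (E.symm y) : ℤ) : PadicAlgCl p)‖ = 1 := by
      refine le_antisymm (PadicAlgCl.norm_intCast_le_one p _) (not_lt.1 fun hlt => ?_)
      rw [PadicAlgCl.norm_intCast, Padic.norm_intCast_lt_one_iff] at hlt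
      have := Int.natAbs_dvd_natAbs.2 hlt
      have := Nat.le_of_dvd (Int.natAbs_pos.2 hc) this
      simp at this
      omega
    have h3 : ‖MvPolynomial.aeval τ (E.symm y) - (MvPolynomial.eval c (E.symm y) : ℤ)‖ <
        ‖((MvPolynomial.eval c (E.symm y) : ℤ) : PadicAlgCl p)‖ := by rw [h2]; exact h1
    have h4 := IsUltrametricDist.norm_add_eq_max_of_norm_ne_norm h3.ne
    rw [sub_add_cancel, max_eq_right h3.le, h2] at h4
    exact h4
  let : Algebra R (PadicAlgCl p) := ψ.toRingHom.toAlgebra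
  have hmap : ∀ r : R, algebraMap R (PadicAlgCl p) r = ψ r := fun r => rfl
  have hinj : Function.Injective (algebraMap R (PadicAlgCl p)) := hψinj
  have : FaithfulSMul R (PadicAlgCl p) := (faithfulSMul_iff_algebraMap_injective _ _).2 hinj
  have : Module.IsTorsionFree R (PadicAlgCl p) := inferInstance
  let φ : A →ₐ[R] PadicAlgCl p := IsAlgClosed.lift
  have hφinj : Function.Injective φ := by
    rw [injective_iff_map_eq_zero]
    intro a ha
    by_contra ha0
    refine Ideal.comap_ne_bot_of_algebraic_mem (R := R) (I := RingHom.ker φ) ha0 ha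
      (hRA.isAlgebraic a) ?_
    rw [eq_bot_iff]
    intro r hr
    have : φ (algebraMap R A r) = 0 := hr
    rw [φ.commutes] at this
    exact hinj (by rw [this, map_zero])
  have hφle : ∀ z : A, (z : k) ∈ S → ‖φ z‖ ≤ 1 := by
    intro z hz
    have h1 := norm_le_one_of_isIntegral (R := R) (K := PadicAlgCl p) hψle
      ((hy z (by simpa using hsS z hz)).map φ)
    rwa [map_smul, Algebra.smul_def, norm_mul, hmap, hψy, one_mul] at h1
  refine ⟨p, hfact, A, φ.toRingHom, hφinj,
    fun z hz => Algebra.subset_adjoin (Or.inl hz), fun z hz hz0 => ?_⟩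
  refine le_antisymm (hφle z (Or.inl hz)) ?_
  have hinvS : (z : k)⁻¹ ∈ S := Or.inr ⟨z, hz, rfl⟩
  let w : A := ⟨(z : k)⁻¹, Algebra.subset_adjoin hinvS⟩
  have hzw : z * w = 1 := by
    ext
    exact mul_inv_cancel₀ fun h => hz0 (Subtype.ext h)
  have h1 : ‖φ z‖ * ‖φ w‖ = 1 := by rw [← norm_mul, ← map_mul, hzw, map_one, norm_one]
  have h2 := hφle w hinvS
  have h3 := norm_nonneg (φ z)
  change 1 ≤ ‖φ z‖
  nlinarith

/-- The Skolem-Mahler-Lech theorem for nondegenerate exponential polynomials. -/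
theorem exp_poly_eq_zero {k : Type*} [Field k] [CharZero k] {ι : Type*} [Fintype ι]
    (α : ι → k) (hα0 : ∀ i, α i ≠ 0)
    (hα : ∀ N : ℕ, N ≠ 0 → Function.Injective fun i => α i ^ N) (f : ι → k[X])
    (hinf : {n : ℕ | ∑ i, (f i).eval (n : k) * α i ^ n = 0}.Infinite) :
    ∀ i, f i = 0 := by
  classical
  let G : Set k := Set.range α ∪ ⋃ i, ((f i).coeffs : Set k)
  have hG : G.Finite := (Set.finite_range α).union
    (Set.finite_iUnion fun i => Finset.finite_toSet _)
  obtain ⟨p, hp, A, φ, hφ, hGA, hφ1⟩ := exists_padic_embedding G hG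
  have hαG : ∀ i, α i ∈ G := fun i => Or.inl ⟨i, rfl⟩
  let β : ι → A := fun i => ⟨α i, hGA (hαG i)⟩
  have hβ0 : ∀ i, β i ≠ 0 := fun i h => hα0 i (congrArg Subtype.val h)
  have hfG : ∀ i, ((f i).coeffs : Set k) ⊆ A.toSubring := fun i z hz =>
    hGA (Or.inr (Set.mem_iUnion.2 ⟨i, hz⟩))
  let g : ι → A[X] := fun i => (f i).toSubring A.toSubring (hfG i)
  have hg : ∀ i, (g i).map (algebraMap A k) = f i := fun i =>
    Polynomial.map_toSubring (f i) A.toSubring (hfG i)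
  have key := exp_poly_eq_zero_padic p (fun i => φ (β i))
    (fun i => hφ1 _ (hαG i) (hβ0 i)) ?_ (fun i => (g i).map φ) ?_
  · intro i
    have h1 := key i
    rw [Polynomial.map_eq_zero_iff hφ] at h1
    rw [← hg i, h1, Polynomial.map_zero]
  · intro N hN i j hij
    simp only [← map_pow] at hij
    exact hα N hN (congrArg Subtype.val (hφ hij))
  · refine hinf.mono fun n hn => ?_
    have h1 : ∑ i, (g i).eval (n : A) * β i ^ n = 0 := by
      apply Subtype.val_injective
      change algebraMap A k _ = 0
      rw [map_sum]
      refine Eq.trans (Finset.sum_congr rfl fun i _ => ?_) hn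
      rw [map_mul, map_pow, ← Polynomial.eval_map_apply, hg, map_natCast]
      rfl
    have h2 := congrArg φ h1
    rw [map_sum, map_zero] at h2
    refine Eq.trans (Finset.sum_congr rfl fun i _ => ?_) h2
    rw [map_mul, map_pow, ← Polynomial.eval_map_apply, map_natCast]

/-- A finite-dimensional, shift invariant space of functions on `ℤ` containing the polynomials of
degree at most one, whose powers behave like spaces of polynomials of bounded degree with respect
to zeros and interpolation. -/
structure IsSymbolSpace {k : Type*} [Field k] (F : Submodule k (ℤ → k)) : Prop where
  fg : F.FG
  one_mem : (1 : ℤ → k) ∈ F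
  id_mem : (fun j : ℤ => (j : k)) ∈ F
  shift_mem : ∀ g ∈ F, ∀ l : ℤ, (fun j => g (j + l)) ∈ F
  finite_zeros : ∀ (n : ℕ), ∀ f ∈ F ^ n, f ≠ 0 → {j | f j = 0}.Finite
  exists_zeros : ∀ b : ℕ, ∃ e : ℕ, ∃ g ∈ F ^ e, g ≠ 0 ∧ ∀ j : ℤ, 0 ≤ j → j < e + b → g j = 0

/-- The functions in `F` vanishing at `n`. -/
def vanishingAt {k : Type*} [Field k] (F : Submodule k (ℤ → k)) (n : ℤ) :
    Submodule k (ℤ → k) :=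
  F ⊓ LinearMap.ker (LinearMap.proj n)

/-- The product of the spaces `vanishingAt F (b + j)` for `j < n`. -/
def vanishingProd {k : Type*} [Field k] (F : Submodule k (ℤ → k)) (b : ℤ) :
    ℕ → Submodule k (ℤ → k)
  | 0 => 1
  | n + 1 => vanishingAt F (b + n) * vanishingProd F b n

section Vanishing

variable {k : Type*} [Field k] {F : Submodule k (ℤ → k)}

theorem mem_vanishingAt {n : ℤ} {w : ℤ → k} : w ∈ vanishingAt F n ↔ w ∈ F ∧ w n = 0 :=
  Iff.rfl

theorem vanishingAt_le (n : ℤ) : vanishingAt F n ≤ F :=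
  inf_le_left

theorem apply_eq_zero_of_mem_mul {M N : Submodule k (ℤ → k)} {j : ℤ}
    (h : ∀ f ∈ M, ∀ g ∈ N, f j * g j = 0) {f : ℤ → k} (hf : f ∈ M * N) : f j = 0 := by
  have : M * N ≤ LinearMap.ker (LinearMap.proj (R := k) (φ := fun _ : ℤ => k) j) :=
    Submodule.mul_le.2 fun f hf g hg => h f hf g hg
  exact this hf

theorem vanishingProd_le_pow (b : ℤ) (n : ℕ) : vanishingProd F b n ≤ F ^ n := by
  induction n with
  | zero => exact le_rfl
  | succ n ih =>
    rw [pow_succ']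
    exact mul_le_mul' (vanishingAt_le _) ih

theorem apply_eq_zero_of_mem_vanishingProd (b : ℤ) (n : ℕ) {g : ℤ → k}
    (hg : g ∈ vanishingProd F b n) (j : ℕ) (hj : j < n) : g (b + j) = 0 := by
  induction n generalizing g with
  | zero => omega
  | succ n ih =>
    refine apply_eq_zero_of_mem_mul (fun w hw u hu => ?_) hg
    rcases Nat.lt_succ_iff_lt_or_eq.1 hj with h | rfl
    · rw [ih hu h, mul_zero]
    · rw [(mem_vanishingAt.1 hw).2, zero_mul]

theorem vanishingProd_mul_le {L : ℕ → Submodule k (ℤ → k)}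
    (hL : ∀ n : ℕ, vanishingAt F n * L n ≤ L (n + 1)) (b n : ℕ) :
    vanishingProd F b n * L b ≤ L (b + n) := by
  induction n with
  | zero => exact (one_mul (L b)).le
  | succ n ih =>
    rw [vanishingProd, mul_assoc]
    refine (mul_le_mul' le_rfl ih).trans ?_
    have := hL (b + n)
    push_cast at this
    exact this

end Vanishing

namespace IsSymbolSpace

variable {k : Type*} [Field k] {F : Submodule k (ℤ → k)}

theorem one_le (hF : IsSymbolSpace F) : 1 ≤ F :=
  Submodule.one_le.2 hF.one_mem

theorem pow_le_pow (hF : IsSymbolSpace F) {m n : ℕ} (h : m ≤ n) : F ^ m ≤ F ^ n :=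
  pow_le_pow_right' hF.one_le h

theorem shift_mem_pow (hF : IsSymbolSpace F) {n : ℕ} {g : ℤ → k} (hg : g ∈ F ^ n) (l : ℤ) :
    (fun j => g (j + l)) ∈ F ^ n := by
  let S : (ℤ → k) →ₐ[k] (ℤ → k) := AlgHom.pi fun j => Pi.evalAlgHom k _ (j + l)
  have h1 : F.map S.toLinearMap ≤ F := by
    rintro _ ⟨g, hg, rfl⟩
    exact hF.shift_mem g hg l
  have h2 : (F ^ n).map S.toLinearMap ≤ F ^ n := by
    rw [Submodule.map_pow]
    exact pow_le_pow_left' h1 n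
  exact h2 ⟨g, hg, rfl⟩

theorem id_sub_mem (hF : IsSymbolSpace F) (c : ℤ) : (fun j : ℤ => ((j - c : ℤ) : k)) ∈ F := by
  have : (fun j : ℤ => ((j - c : ℤ) : k)) = (fun j : ℤ => (j : k)) - (c : k) • (1 : ℤ → k) := by
    ext j
    simp
  rw [this]
  exact F.sub_mem hF.id_mem (F.smul_mem _ hF.one_mem)

theorem id_sub_mem_vanishingAt (hF : IsSymbolSpace F) (c : ℤ) :
    (fun j : ℤ => ((j - c : ℤ) : k)) ∈ vanishingAt F c :=
  ⟨hF.id_sub_mem c, by simp⟩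

theorem le_one_sup (hF : IsSymbolSpace F) (n : ℤ) : F ≤ 1 ⊔ vanishingAt F n := by
  intro f hf
  refine Submodule.mem_sup.2 ⟨f n • 1, ?_, f - f n • 1, ?_, by simp⟩
  · exact Submodule.smul_mem _ _ (Submodule.one_le.1 le_rfl)
  · exact ⟨F.sub_mem hf (F.smul_mem _ hF.one_mem), by simp⟩

theorem pow_succ_le_one_sup (hF : IsSymbolSpace F) (n : ℤ) (m : ℕ) :
    F ^ (m + 1) ≤ 1 ⊔ vanishingAt F n * F ^ m := by
  induction m with
  | zero => simpa using hF.le_one_sup n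
  | succ m ih =>
    rw [pow_succ']
    refine (mul_le_mul' (hF.le_one_sup n) le_rfl).trans ?_
    rw [Submodule.sup_mul, one_mul]
    refine sup_le (ih.trans (sup_le le_sup_left ?_)) le_sup_right
    exact (mul_le_mul' le_rfl (hF.pow_le_pow m.le_succ)).trans le_sup_right

theorem mem_vanishingAt_mul_pow (hF : IsSymbolSpace F) {n : ℤ} {m : ℕ} {g : ℤ → k}
    (hg : g ∈ F ^ (m + 1)) (h0 : g n = 0) : g ∈ vanishingAt F n * F ^ m := by
  obtain ⟨a, ha, w, hw, rfl⟩ := Submodule.mem_sup.1 (hF.pow_succ_le_one_sup n m hg)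
  obtain ⟨c, rfl⟩ := Submodule.mem_one.1 ha
  have h1 : w n = 0 := apply_eq_zero_of_mem_mul (fun f hf g _ => by rw [(mem_vanishingAt.1 hf).2, zero_mul]) hw
  have h2 : c = 0 := by simpa [h1] using h0
  simpa [h2] using hw

variable [CharZero k]

theorem le_vanishingAt_sup (hF : IsSymbolSpace F) {i c : ℤ} (hic : i ≠ c) :
    F ≤ vanishingAt F i ⊔ Submodule.span k {fun j : ℤ => ((j - c : ℤ) : k)} := by
  intro f hf
  have h0 : ((i - c : ℤ) : k) ≠ 0 := by exact_mod_cast sub_ne_zero.2 hic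
  refine Submodule.mem_sup.2 ⟨f - (f i / ((i - c : ℤ) : k)) • (fun j : ℤ => ((j - c : ℤ) : k)),
    ⟨F.sub_mem hf (F.smul_mem _ (hF.id_sub_mem c)), ?_⟩, _,
    Submodule.smul_mem _ (f i / ((i - c : ℤ) : k)) (Submodule.mem_span_singleton_self _),
    sub_add_cancel _ _⟩
  change f i - f i / ((i - c : ℤ) : k) * ((i - c : ℤ) : k) = 0
  rw [div_mul_cancel₀ _ h0, sub_self]

theorem pow_le_vanishingProd_sup (hF : IsSymbolSpace F) (b c : ℤ) (m : ℕ)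
    (hc : b + m < c) : F ^ (m + 1) ≤ vanishingProd F b (m + 1) ⊔
      Submodule.span k {fun j : ℤ => ((j - c : ℤ) : k)} * F ^ m := by
  induction m with
  | zero => simpa [vanishingProd] using hF.le_vanishingAt_sup (i := b) (c := c) (by omega)
  | succ m ih =>
    rw [pow_succ']
    refine (mul_le_mul' le_rfl (ih (by push_cast at hc; omega))).trans ?_
    rw [Submodule.mul_sup]
    refine sup_le ?_ ?_
    · refine (mul_le_mul' (hF.le_vanishingAt_sup (i := b + (m + 1 : ℕ)) (c := c)
        (by omega)) le_rfl).trans ?_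
      rw [Submodule.sup_mul]
      exact sup_le_sup le_rfl (mul_le_mul' le_rfl (vanishingProd_le_pow _ _))
    · rw [mul_left_comm, ← pow_succ']
      exact le_sup_right

/-- The elements of `F ^ n` vanishing at `n` consecutive points are sums of products. -/
theorem mem_vanishingProd (hF : IsSymbolSpace F) (b : ℤ) (n : ℕ) {g : ℤ → k} (hg : g ∈ F ^ n)
    (h0 : ∀ j : ℕ, j < n → g (b + j) = 0) : g ∈ vanishingProd F b n := by
  induction n generalizing g with
  | zero => exact hg
  | succ n ih =>
    have h1 := hF.mem_vanishingAt_mul_pow hg (h0 n n.lt_succ_self)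
    rcases n with _ | n
    · exact h1
    set c : ℤ := b + (n + 1 : ℕ) with hc
    have h2 := mul_le_mul' (le_refl (vanishingAt F c))
      (hF.pow_le_vanishingProd_sup b c n (by push_cast at hc; omega)) h1
    rw [Submodule.mul_sup] at h2
    obtain ⟨G, hG, v, hv, rfl⟩ := Submodule.mem_sup.1 h2
    rw [mul_left_comm] at hv
    obtain ⟨u, hu, rfl⟩ := Submodule.mem_span_singleton_mul.1 hv
    have hG' : G ∈ vanishingProd F b (n + 1 + 1) := hG
    refine Submodule.add_mem _ hG' (Submodule.mul_mem_mul (hF.id_sub_mem_vanishingAt c) (ih ?_ ?_))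
    · rw [pow_succ']
      exact mul_le_mul' (vanishingAt_le _) le_rfl hu
    · intro j hj
      have h3 := h0 j (by omega)
      rw [Pi.add_apply, apply_eq_zero_of_mem_vanishingProd b _ hG' j (by omega), zero_add,
        Pi.mul_apply] at h3
      refine (mul_eq_zero.1 h3).resolve_left ?_
      exact_mod_cast sub_ne_zero.2 (by push_cast at hc; omega)

end IsSymbolSpace

namespace IsSymbolSpace

variable {k : Type*} [Field k] {F : Submodule k (ℤ → k)}

theorem exists_ne_zero_of_finite {f : ℤ → k} (hf : {j | f j = 0}.Finite) (a : ℤ) (d : ℤ)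
    (hd : d ≠ 0) : ∃ r : ℕ, f (a + r * d) ≠ 0 := by
  by_contra! h
  have hinj : Function.Injective fun r : ℕ => a + r * d := by
    intro r r' hr
    have := mul_right_cancel₀ hd (add_left_cancel hr)
    exact_mod_cast this
  refine (Set.infinite_range_of_injective hinj) (hf.subset ?_)
  rintro _ ⟨r, rfl⟩
  exact h r

/-- There are elements of `F ^ e` vanishing at `e + b` consecutive points to the left of the
origin but not at the origin, and the same to the right. -/
theorem exists_isolated (hF : IsSymbolSpace F) (b : ℕ) :
    ∃ e : ℕ, (∃ g ∈ F ^ e, g 0 ≠ 0 ∧ ∀ j : ℤ, 0 < j → j ≤ e + b → g (-j) = 0) ∧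
      ∃ g ∈ F ^ e, g 0 ≠ 0 ∧ ∀ j : ℤ, 0 < j → j ≤ e + b → g j = 0 := by
  classical
  obtain ⟨e, g, hg, hg0, hz⟩ := hF.exists_zeros b
  have hfin := hF.finite_zeros e g hg hg0
  refine ⟨e, ?_, ?_⟩
  · have hex := exists_ne_zero_of_finite hfin (e + b) 1 one_ne_zero
    refine ⟨_, hF.shift_mem_pow hg ((e + b) + (Nat.find hex) * 1),
      by simpa using Nat.find_spec hex, fun j hj hj' => ?_⟩
    by_cases h : j ≤ Nat.find hex
    · have h1 := Nat.find_min hex (m := Nat.find hex - j.toNat) (by omega)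
      rw [not_not] at h1
      refine Eq.trans (congrArg g ?_) h1
      omega
    · exact hz _ (by omega) (by omega)
  · have hex := exists_ne_zero_of_finite hfin (-1) (-1) (by norm_num)
    refine ⟨_, hF.shift_mem_pow hg (-1 + (Nat.find hex) * -1),
      by simpa using Nat.find_spec hex, fun j hj hj' => ?_⟩
    by_cases h : j ≤ Nat.find hex
    · have h1 := Nat.find_min hex (m := Nat.find hex - j.toNat) (by omega)
      rw [not_not] at h1
      refine Eq.trans (congrArg g ?_) h1
      omega
    · exact hz _ (by omega) (by omega)

variable [CharZero k]

theorem exists_delta (hF : IsSymbolSpace F) (b : ℕ) :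
    ∃ c : ℕ, b ≤ c ∧ ∀ e : ℕ, c ≤ e → ∀ (m : ℤ) (l : ℕ), l < e →
      ∃ u ∈ F ^ (e - b), u (m + l) ≠ 0 ∧ ∀ j : ℕ, j < e → j ≠ l → u (m + j) = 0 := by
  obtain ⟨a, ⟨g, hg, hg0, hgz⟩, ⟨g', hg', hg0', hgz'⟩⟩ := hF.exists_isolated b
  refine ⟨2 * (a + b) + 1, by omega, fun e he m l hl => ?_⟩
  obtain ⟨T, h, hT, hTl, hTc, hh, hhl, hhT⟩ : ∃ (T : Finset ℕ) (h : ℤ → k),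
      T ⊆ Finset.range e ∧ l ∉ T ∧ T.card = a + b ∧ h ∈ F ^ a ∧ h (m + l) ≠ 0 ∧
        ∀ j ∈ T, h (m + j) = 0 := by
    by_cases hlq : a + b ≤ l
    · refine ⟨Finset.Ico (l - (a + b)) l, _, ?_, by simp, by simp; omega,
        hF.shift_mem_pow hg (-(m + l)), by simpa using hg0, ?_⟩
      · intro j hj
        simp at hj ⊢
        omega
      · intro j hj
        simp only [Finset.mem_Ico] at hj
        have h1 := hgz (l - j) (by omega) (by omega)
        rw [← h1]
        congr 1
        omega
    · refine ⟨Finset.Ioc l (l + (a + b)), _, ?_, by simp, by simp,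
        hF.shift_mem_pow hg' (-(m + l)), by simpa using hg0', ?_⟩
      · intro j hj
        simp at hj ⊢
        omega
      · intro j hj
        simp only [Finset.mem_Ioc] at hj
        have h1 := hgz' (j - l) (by omega) (by omega)
        rw [← h1]
        congr 1
        omega
  let U : Finset ℕ := (Finset.range e).erase l \ T
  have hU : U.card = e - 1 - (a + b) := by
    rw [Finset.card_sdiff_of_subset, hTc, Finset.card_erase_of_mem (Finset.mem_range.2 hl),
      Finset.card_range]
    intro j hj
    exact Finset.mem_erase.2 ⟨fun h => hTl (h ▸ hj), hT hj⟩
  let P : ℤ → k := ∏ i ∈ U, fun j : ℤ => ((j - (m + i) : ℤ) : k)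
  have hP : P ∈ F ^ U.card := by
    clear hU
    clear_value U
    dsimp only [P]
    clear P
    induction U using Finset.induction_on with
    | empty => exact Submodule.one_le.1 le_rfl
    | insert i U hi ih =>
      rw [Finset.prod_insert hi, Finset.card_insert_of_notMem hi, pow_succ']
      exact Submodule.mul_mem_mul (hF.id_sub_mem (m + i)) ih
  have hPa : ∀ x, P x = ∏ i ∈ U, ((x - (m + i) : ℤ) : k) := fun x => Finset.prod_apply x U _
  refine ⟨h * P, hF.pow_le_pow (m := a + U.card) (by omega) ?_, ?_, ?_⟩
  · rw [pow_add]
    exact Submodule.mul_mem_mul hh hP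
  · rw [Pi.mul_apply, hPa]
    refine mul_ne_zero hhl (Finset.prod_ne_zero_iff.2 fun i hi => ?_)
    simp only [U, Finset.mem_sdiff, Finset.mem_erase] at hi
    exact_mod_cast sub_ne_zero.2 (by have := hi.1.1; omega)
  · intro j hj hjl
    rw [Pi.mul_apply, hPa]
    by_cases hjT : j ∈ T
    · rw [hhT j hjT, zero_mul]
    · rw [Finset.prod_eq_zero (i := j), mul_zero]
      · simp [U, hj, hjl, hjT]
      · simp

theorem exists_interpolation (hF : IsSymbolSpace F) (b : ℕ) :
    ∃ c : ℕ, b ≤ c ∧ ∀ e : ℕ, c ≤ e → ∀ (m : ℤ) (v : ℕ → k),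
      ∃ u ∈ F ^ (e - b), ∀ j : ℕ, j < e → u (m + j) = v j := by
  obtain ⟨c, hbc, hc⟩ := hF.exists_delta b
  refine ⟨c, hbc, fun e he m v => ?_⟩
  choose! u hu hu0 huz using hc e he m
  refine ⟨∑ l ∈ Finset.range e, (v l / u l (m + l)) • u l,
    Submodule.sum_mem _ fun l hl => Submodule.smul_mem _ _ (hu l (Finset.mem_range.1 hl)),
    fun j hj => ?_⟩
  rw [Finset.sum_apply, Finset.sum_eq_single j]
  · simp [hu0 j hj]
  · intro l hl hlj
    simp [huz l (Finset.mem_range.1 hl) j hj hlj.symm]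
  · intro h
    exact absurd (Finset.mem_range.2 hj) h

/-- Division with remainder by an element without zeros to the right. -/
theorem pow_le_vanishingProd_sup_span (hF : IsSymbolSpace F) (b : ℕ) {f : ℤ → k} (hf : f ∈ F ^ b)
    (hf0 : ∀ j : ℤ, b ≤ j → f j ≠ 0) :
    ∃ c : ℕ, b ≤ c ∧ ∀ e : ℕ, c ≤ e → ∀ m : ℤ, b ≤ m →
      F ^ e ≤ vanishingProd F m e ⊔ Submodule.span k {f} * F ^ (e - b) := by
  obtain ⟨c, hbc, hc⟩ := hF.exists_interpolation b
  refine ⟨c, hbc, fun e he m hm g hg => ?_⟩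
  obtain ⟨u, hu, huv⟩ := hc e he m fun j => g (m + j) / f (m + j)
  refine Submodule.mem_sup.2 ⟨g - f * u, hF.mem_vanishingProd m e (Submodule.sub_mem _ hg ?_) ?_,
    f * u, Submodule.mem_span_singleton_mul.2 ⟨u, hu, rfl⟩, sub_add_cancel _ _⟩
  · have : F ^ e = F ^ b * F ^ (e - b) := by rw [← pow_add, Nat.add_sub_cancel' (by omega)]
    rw [this]
    exact Submodule.mul_mem_mul hf hu
  · intro j hj
    rw [Pi.sub_apply, Pi.mul_apply, huv j hj, mul_div_cancel₀ _ (hf0 _ (by omega)), sub_self]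

end IsSymbolSpace

section Rees

variable {k B : Type*} [Field k] [CommRing B] [Algebra k B]

theorem coeff_mem_pow_of_mem_adjoin (F : Submodule k B) {P : B[X]}
    (hP : P ∈ Algebra.adjoin k (Polynomial.monomial 1 '' (F : Set B))) (n : ℕ) :
    P.coeff n ∈ F ^ n := by
  induction hP using Algebra.adjoin_induction generalizing n with
  | mem x hx =>
    obtain ⟨f, hf, rfl⟩ := hx
    rw [Polynomial.coeff_monomial]
    split_ifs with h
    · subst h
      simpa using hf
    · exact Submodule.zero_mem _
  | algebraMap r =>
    rw [Polynomial.algebraMap_apply, Polynomial.coeff_C]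
    split_ifs with h
    · subst h
      exact Submodule.algebraMap_mem r
    · exact Submodule.zero_mem _
  | add x y _ _ hx hy => exact Submodule.add_mem _ (hx n) (hy n)
  | mul x y _ _ hx hy =>
    rw [Polynomial.coeff_mul]
    refine Submodule.sum_mem _ fun i hi => ?_
    rw [← Finset.HasAntidiagonal.mem_antidiagonal.1 hi, pow_add]
    exact Submodule.mul_mem_mul (hx _) (hy _)

theorem monomial_mem_adjoin (F : Submodule k B) (n : ℕ) {g : B} (hg : g ∈ F ^ n) :
    Polynomial.monomial n g ∈
      Algebra.adjoin k (Polynomial.monomial 1 '' (F : Set B)) := by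
  induction hg using Submodule.pow_induction_on_left' with
  | algebraMap r =>
    rw [Polynomial.monomial_zero_left, ← Polynomial.algebraMap_apply]
    exact Subalgebra.algebraMap_mem _ r
  | add x y i _ _ hx hy =>
    rw [map_add]
    exact Subalgebra.add_mem _ hx hy
  | mem_mul m hm i x _ hx =>
    rw [Nat.succ_eq_add_one, add_comm, ← Polynomial.monomial_mul_monomial]
    exact Subalgebra.mul_mem _ (Algebra.subset_adjoin ⟨m, hm, rfl⟩) hx

theorem isNoetherianRing_adjoin_monomial {F : Submodule k B} (hF : F.FG) :
    IsNoetherianRing (Algebra.adjoin k (Polynomial.monomial 1 '' (F : Set B))) := by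
  classical
  obtain ⟨S, rfl⟩ := hF
  have h : Algebra.adjoin k (Polynomial.monomial 1 '' (Submodule.span k (S : Set B) : Set B)) =
      Algebra.adjoin k (S.image (Polynomial.monomial 1) : Finset B[X]) := by
    refine le_antisymm (Algebra.adjoin_le ?_) (Algebra.adjoin_mono ?_)
    · rintro _ ⟨f, hf, rfl⟩
      induction hf using Submodule.span_induction with
      | mem x hx => exact Algebra.subset_adjoin (by simpa using ⟨x, hx, rfl⟩)
      | zero => simp
      | add x y _ _ hx hy =>
        rw [map_add]
        exact Subalgebra.add_mem _ hx hy
      | smul a x _ hx =>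
        rw [← Polynomial.smul_monomial]
        exact Subalgebra.smul_mem _ hx a
    · rw [Finset.coe_image]
      exact Set.image_mono Submodule.subset_span
  rw [h]
  have := (Subalgebra.fg_iff_finiteType _).1 (Subalgebra.fg_adjoin_finset (R := k)
    (S.image (Polynomial.monomial (R := B) 1)))
  exact Algebra.FiniteType.isNoetherianRing k _

/-- Graded submodules of the Rees algebra of a finite-dimensional space are eventually stable. -/
theorem exists_stable_of_mul_le {F : Submodule k B} (hF : F.FG) (J : ℕ → Submodule k B)
    (hJ : ∀ n, J n ≤ F ^ n) (hFJ : ∀ n, F * J n ≤ J (n + 1)) :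
    ∃ N, ∀ n, N ≤ n → J (n + 1) ≤ F * J n := by
  have hnoeth := isNoetherianRing_adjoin_monomial hF
  have hpow : ∀ i j, F ^ i * J j ≤ J (i + j) := by
    intro i j
    induction i with
    | zero => simp
    | succ i ih =>
      rw [pow_succ', mul_assoc, add_right_comm]
      exact (mul_le_mul' le_rfl ih).trans (hFJ _)
  let R := Algebra.adjoin k (Polynomial.monomial 1 '' (F : Set B))
  let I : Ideal R :=
    { carrier := {P | ∀ n, (P : B[X]).coeff n ∈ J n}
      add_mem' := fun {P Q} hP hQ n => by
        simpa using Submodule.add_mem _ (hP n) (hQ n)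
      zero_mem' := fun n => by simp
      smul_mem' := fun Q P hP n => by
        change ((Q : B[X]) * (P : B[X])).coeff n ∈ J n
        rw [Polynomial.coeff_mul]
        refine Submodule.sum_mem _ fun i hi => ?_
        rw [← Finset.HasAntidiagonal.mem_antidiagonal.1 hi]
        exact hpow _ _ (Submodule.mul_mem_mul (coeff_mem_pow_of_mem_adjoin F Q.2 _) (hP _)) }
  obtain ⟨T, hT⟩ : I.FG := IsNoetherian.noetherian I
  refine ⟨T.sup fun t => (t : B[X]).natDegree, fun n hn g hg => ?_⟩
  let P : R := ⟨Polynomial.monomial (n + 1) g, monomial_mem_adjoin F _ (hJ _ hg)⟩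
  have hP : P ∈ I := by
    intro m
    change (Polynomial.monomial (n + 1) g).coeff m ∈ J m
    rw [Polynomial.coeff_monomial]
    split_ifs with h
    · exact h ▸ hg
    · exact Submodule.zero_mem _
  rw [← hT] at hP
  obtain ⟨r, -, hr⟩ := Submodule.mem_span_finset.1 hP
  have h1 : g = ∑ t ∈ T, ((r t : B[X]) * (t : B[X])).coeff (n + 1) := by
    have h2 : ((∑ t ∈ T, r t • t : R) : B[X]).coeff (n + 1) = g := by
      rw [hr]
      exact Polynomial.coeff_monomial_same _ _
    rw [← h2, AddSubmonoidClass.coe_finsetSum, Polynomial.finsetSum_coeff]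
    rfl
  rw [h1]
  refine Submodule.sum_mem _ fun t ht => ?_
  have htI : t ∈ I := hT ▸ Submodule.subset_span ht
  rw [Polynomial.coeff_mul]
  refine Submodule.sum_mem _ fun i hi => ?_
  have hi' := Finset.HasAntidiagonal.mem_antidiagonal.1 hi
  by_cases hin : n < i.2
  · rw [Polynomial.coeff_eq_zero_of_natDegree_lt (p := (t : B[X])), mul_zero]
    · exact Submodule.zero_mem _
    · exact lt_of_le_of_lt ((Finset.le_sup (f := fun t : R => (t : B[X]).natDegree) ht).trans hn)
        hin
  · obtain ⟨a, ha⟩ : ∃ a, i.1 = a + 1 := ⟨i.1 - 1, by omega⟩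
    have h3 : n = a + i.2 := by omega
    have h4 := Submodule.mul_mem_mul (coeff_mem_pow_of_mem_adjoin F (r t).2 i.1) (htI i.2)
    rw [ha, pow_succ', mul_assoc, ← ha] at h4
    rw [h3]
    exact mul_le_mul' le_rfl (hpow a i.2) h4

end Rees

/-- Sequences of spaces of symbols stable under multiplication by `vanishingAt F n` are eventually
generated by this multiplication. -/
theorem IsSymbolSpace.exists_stable {k : Type*} [Field k] [CharZero k]
    {F : Submodule k (ℤ → k)} (hF : IsSymbolSpace F) (L : ℕ → Submodule k (ℤ → k))
    (hle : ∀ n, L n ≤ F ^ n) (hvan : ∀ n, ∀ f ∈ L n, ∀ j : ℕ, j < n → f j = 0)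
    (hL : ∀ n : ℕ, vanishingAt F n * L n ≤ L (n + 1)) :
    ∃ N, ∀ n : ℕ, N ≤ n → L (n + 1) ≤ vanishingAt F n * L n := by
  by_cases hbot : ∀ n, L n = ⊥
  · exact ⟨0, fun n _ => by simp [hbot]⟩
  push Not at hbot
  obtain ⟨b₀, hb₀⟩ := hbot
  obtain ⟨f₀, hf₀, hf₀0⟩ := (Submodule.ne_bot_iff _).1 hb₀
  have hfin := hF.finite_zeros b₀ f₀ (hle _ hf₀) hf₀0
  obtain ⟨b, f, hfL, hf⟩ : ∃ (b : ℕ) (f : ℤ → k), f ∈ L b ∧ ∀ j : ℤ, b ≤ j → f j ≠ 0 := by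
    have hstep : ∀ r : ℕ, ∃ f ∈ L (b₀ + r), ∀ j : ℤ, (b₀ + r : ℕ) ≤ j → f₀ j ≠ 0 → f j ≠ 0 := by
      intro r
      induction r with
      | zero => exact ⟨f₀, hf₀, fun _ _ h => h⟩
      | succ r ih =>
        obtain ⟨f, hf, h⟩ := ih
        refine ⟨_, hL (b₀ + r) (Submodule.mul_mem_mul (hF.id_sub_mem_vanishingAt _) hf),
          fun j hj hj0 => ?_⟩
        rw [Pi.mul_apply]
        refine mul_ne_zero ?_ (h j (by omega) hj0)
        exact_mod_cast sub_ne_zero.2 (by omega)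
    obtain ⟨M, hM⟩ := hfin.bddAbove
    obtain ⟨f, hf, h⟩ := hstep (M + 1).toNat
    refine ⟨_, f, hf, fun j hj => h j hj fun h0 => ?_⟩
    have := hM h0
    omega
  obtain ⟨c, hbc, hc⟩ := hF.pow_le_vanishingProd_sup_span b (hle b hfL) hf
  let J : ℕ → Submodule k (ℤ → k) := fun n => ⨆ (m : ℕ) (_ : b ≤ m ∧ m ≤ n), F ^ (n - m) * L m
  have hJ : ∀ {n m : ℕ}, b ≤ m → m ≤ n → F ^ (n - m) * L m ≤ J n := fun {n m} h h' =>
    le_iSup₂_of_le (f := fun (m : ℕ) (_ : b ≤ m ∧ m ≤ n) => F ^ (n - m) * L m) m ⟨h, h'⟩ le_rfl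
  obtain ⟨N₀, hN₀⟩ := exists_stable_of_mul_le hF.fg J
    (fun n => iSup₂_le fun m hm => by
      calc F ^ (n - m) * L m ≤ F ^ (n - m) * F ^ m := mul_le_mul' le_rfl (hle m)
        _ = F ^ n := by rw [← pow_add, Nat.sub_add_cancel hm.2])
    (fun n => by
      simp only [J, Submodule.mul_iSup]
      refine iSup₂_le fun m hm => ?_
      rw [← mul_assoc, ← pow_succ', ← Nat.sub_add_comm hm.2]
      exact hJ hm.1 (by omega))
  let N := max N₀ b
  have hJN : ∀ n, N ≤ n → J n ≤ ⨆ (m : ℕ) (_ : b ≤ m ∧ m ≤ N), F ^ (n - m) * L m := by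
    intro n hn
    induction n, hn using Nat.le_induction with
    | base => exact le_rfl
    | succ n hn ih =>
      refine (hN₀ n (le_trans (le_max_left _ _) hn)).trans ((mul_le_mul' le_rfl ih).trans ?_)
      simp only [Submodule.mul_iSup]
      refine iSup₂_le fun m hm => ?_
      rw [← mul_assoc, ← pow_succ', ← Nat.sub_add_comm (hm.2.trans hn)]
      exact le_iSup₂_of_le (f := fun (m : ℕ) (_ : b ≤ m ∧ m ≤ N) => F ^ (n + 1 - m) * L m)
        m hm le_rfl
  have hbN : b ≤ N := le_max_right _ _
  refine ⟨N + c, fun n hn g hg => ?_⟩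
  have h1 : L (n + 1) ≤ vanishingAt F n * L n ⊔ Submodule.span k {f} * F ^ (n + 1 - b) := by
    have h2 : L (n + 1) ≤ J (n + 1) := by
      have := hJ (n := n + 1) (m := n + 1) (by omega) le_rfl
      rwa [Nat.sub_self, pow_zero, one_mul] at this
    refine h2.trans ((hJN _ (by omega)).trans (iSup₂_le fun m hm => ?_))
    refine (mul_le_mul' (hc (n + 1 - m) (by omega) m (by exact_mod_cast hm.1)) le_rfl).trans ?_
    rw [Submodule.sup_mul]
    refine sup_le_sup ?_ ?_
    · obtain ⟨d, rfl⟩ : ∃ d, n = m + d := ⟨n - m, by omega⟩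
      rw [show m + d + 1 - m = d + 1 by omega, vanishingProd, mul_assoc]
      push_cast
      exact mul_le_mul' le_rfl (vanishingProd_mul_le hL m d)
    · rw [mul_assoc]
      refine mul_le_mul' le_rfl ((mul_le_mul' le_rfl (hle m)).trans ?_)
      rw [← pow_add]
      exact hF.pow_le_pow (by omega)
  obtain ⟨g₁, hg₁, v, hv, rfl⟩ := Submodule.mem_sup.1 (h1 hg)
  obtain ⟨u, hu, rfl⟩ := Submodule.mem_span_singleton_mul.1 hv
  refine Submodule.add_mem _ hg₁ ?_
  obtain ⟨d, rfl⟩ : ∃ d, n = b + d := ⟨n - b, by omega⟩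
  rw [show b + d + 1 - b = d + 1 by omega] at hu
  have hu' : u ∈ vanishingProd F b (d + 1) := by
    refine hF.mem_vanishingProd _ _ hu fun j hj => ?_
    have h2 := hvan _ _ hg (b + j) (by omega)
    rw [Pi.add_apply, hvan _ _ (hL _ hg₁) (b + j) (by omega), zero_add, Pi.mul_apply] at h2
    push_cast at h2
    exact (mul_eq_zero.1 h2).resolve_left (hf _ (by omega))
  have h3 := Submodule.mul_mem_mul hu' hfL
  rw [vanishingProd, mul_assoc] at h3
  rw [mul_comm f u]
  push_cast
  exact mul_le_mul' le_rfl (vanishingProd_mul_le hL b d) h3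

theorem finite_zeros_exp_poly {k : Type*} [Field k] [CharZero k] {ι : Type*} [Fintype ι]
    (α : ι → k) (hα0 : ∀ i, α i ≠ 0)
    (hα : ∀ N : ℕ, N ≠ 0 → Function.Injective fun i => α i ^ N) (f : ι → k[X])
    (hf : ∃ i, f i ≠ 0) : {j : ℤ | ∑ i, (f i).eval (j : k) * α i ^ j = 0}.Finite := by
  obtain ⟨i₀, hi₀⟩ := hf
  have hpos : {n : ℕ | ∑ i, (f i).eval (n : k) * α i ^ n = 0}.Finite := by
    by_contra h
    exact hi₀ (exp_poly_eq_zero α hα0 hα f h i₀)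
  have hneg : {n : ℕ | ∑ i, ((f i).comp (-X)).eval (n : k) * (α i)⁻¹ ^ n = 0}.Finite := by
    by_contra h
    have h1 := exp_poly_eq_zero (fun i => (α i)⁻¹) (fun i => inv_ne_zero (hα0 i))
      (fun N hN i j hij => hα N hN (by simpa using hij)) (fun i => (f i).comp (-X)) h i₀
    apply hi₀
    rw [← Polynomial.comp_neg_X_comp_neg_X (f i₀), h1, Polynomial.zero_comp]
  refine ((hpos.image fun n : ℕ => (n : ℤ)).union (hneg.image fun n : ℕ => -(n : ℤ))).subset ?_
  intro j hj
  obtain ⟨n, rfl | rfl⟩ := j.eq_nat_or_neg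
  · exact Or.inl ⟨n, by simpa using hj, rfl⟩
  · exact Or.inr ⟨n, by simpa using hj, rfl⟩

/-- The span of the functions `1`, `j ↦ j` and `j ↦ p i ^ j`. -/
def symbolSpace {k : Type*} [Field k] {s : ℕ} (p : Fin s → k) : Submodule k (ℤ → k) :=
  Submodule.span k ({1, fun j : ℤ => (j : k)} ∪ Set.range fun i => fun j : ℤ => p i ^ j)

section SymbolSpace

variable {k : Type*} [Field k] {s : ℕ} {p : Fin s → k}

theorem one_mem_symbolSpace : (1 : ℤ → k) ∈ symbolSpace p :=
  Submodule.subset_span (Or.inl (Or.inl rfl))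

theorem id_mem_symbolSpace : (fun j : ℤ => (j : k)) ∈ symbolSpace p :=
  Submodule.subset_span (Or.inl (Or.inr rfl))

theorem zpow_mem_symbolSpace (i : Fin s) : (fun j : ℤ => p i ^ j) ∈ symbolSpace p :=
  Submodule.subset_span (Or.inr ⟨i, rfl⟩)

/-- Evaluation of polynomials in the functions `j ↦ j` and `j ↦ p i ^ j`. -/
def symbolEval (p : Fin s → k) : MvPolynomial (Fin s) k[X] →+* (ℤ → k) :=
  RingHom.pi fun j => MvPolynomial.eval₂Hom (Polynomial.evalRingHom (j : k)) fun i => p i ^ j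

theorem symbolEval_apply (P : MvPolynomial (Fin s) k[X]) (j : ℤ) : symbolEval p P j =
    MvPolynomial.eval₂ (Polynomial.evalRingHom (j : k)) (fun i => p i ^ j) P :=
  rfl

theorem mem_range_symbolEval {n : ℕ} {f : ℤ → k} (hf : f ∈ symbolSpace p ^ n) :
    f ∈ (symbolEval p).range := by
  have hC : ∀ a : k, algebraMap k (ℤ → k) a ∈ (symbolEval p).range := fun a =>
    ⟨MvPolynomial.C (Polynomial.C a), by ext j; simp [symbolEval_apply]⟩
  have h1 : ∀ g ∈ symbolSpace p, g ∈ (symbolEval p).range := by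
    intro g hg
    induction hg using Submodule.span_induction with
    | mem g hg =>
      obtain (rfl | rfl) | ⟨i, rfl⟩ := hg
      · exact Subring.one_mem _
      · exact ⟨MvPolynomial.C X, by ext j; simp [symbolEval_apply]⟩
      · exact ⟨MvPolynomial.X i, by ext j; simp [symbolEval_apply]⟩
    | zero => exact Subring.zero_mem _
    | add x y _ _ hx hy => exact Subring.add_mem _ hx hy
    | smul a x _ hx =>
      rw [Algebra.smul_def]
      exact Subring.mul_mem _ (hC a) hx
  induction hf using Submodule.pow_induction_on_left' with
  | algebraMap r => exact hC r
  | add x y i _ _ hx hy => exact Subring.add_mem _ hx hy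
  | mem_mul m hm i x _ hx => exact Subring.mul_mem _ (h1 m hm) hx

theorem shift_mem_symbolSpace (hp0 : ∀ i, p i ≠ 0) {g : ℤ → k} (hg : g ∈ symbolSpace p) (l : ℤ) :
    (fun j => g (j + l)) ∈ symbolSpace p := by
  induction hg using Submodule.span_induction with
  | mem g hg =>
    obtain (rfl | rfl) | ⟨i, rfl⟩ := hg
    · exact one_mem_symbolSpace
    · have : (fun j : ℤ => ((j + l : ℤ) : k)) = (fun j : ℤ => (j : k)) + (l : k) • (1 : ℤ → k) := by
        ext j
        simp
      rw [this]
      exact Submodule.add_mem _ id_mem_symbolSpace (Submodule.smul_mem _ _ one_mem_symbolSpace)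
    · have : (fun j : ℤ => p i ^ (j + l)) = p i ^ l • (fun j : ℤ => p i ^ j) := by
        ext j
        rw [zpow_add₀ (hp0 i), mul_comm]
        rfl
      rw [this]
      exact Submodule.smul_mem _ _ (zpow_mem_symbolSpace i)
  | zero => exact Submodule.zero_mem _
  | add x y _ _ hx hy => exact Submodule.add_mem _ hx hy
  | smul a x _ hx => exact Submodule.smul_mem _ a hx

theorem injective_prod_pow (hp0 : ∀ i, p i ≠ 0)
    (hfree : ∀ m : Fin s → ℤ, (∏ i, p i ^ m i) = 1 → ∀ i, m i = 0) (N : ℕ) (hN : N ≠ 0) :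
    Function.Injective fun a : Fin s → ℕ => (∏ i, p i ^ a i) ^ N := by
  intro a b hab
  have h1 : ∏ i, p i ^ ((N : ℤ) * ((a i : ℤ) - b i)) = 1 := by
    have h2 : ∀ i, p i ^ ((N : ℤ) * ((a i : ℤ) - b i)) = (p i ^ a i) ^ N / (p i ^ b i) ^ N := by
      intro i
      rw [mul_sub, zpow_sub₀ (hp0 i), ← pow_mul, ← pow_mul, mul_comm (a i), mul_comm (b i)]
      norm_cast
    rw [Finset.prod_congr rfl fun i _ => h2 i, Finset.prod_div_distrib, Finset.prod_pow,
      Finset.prod_pow]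
    dsimp only at hab
    rw [hab]
    exact div_self (pow_ne_zero _ (Finset.prod_ne_zero_iff.2 fun i _ => pow_ne_zero _ (hp0 i)))
  funext i
  have h3 := (mul_eq_zero.1 (hfree _ h1 i)).resolve_left (by exact_mod_cast hN)
  omega

theorem finite_zeros_of_mem_symbolSpace_pow [CharZero k] (hp0 : ∀ i, p i ≠ 0)
    (hfree : ∀ m : Fin s → ℤ, (∏ i, p i ^ m i) = 1 → ∀ i, m i = 0) {n : ℕ} {f : ℤ → k}
    (hf : f ∈ symbolSpace p ^ n) (hf0 : f ≠ 0) : {j | f j = 0}.Finite := by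
  obtain ⟨P, rfl⟩ := mem_range_symbolEval hf
  have hP0 : P ≠ 0 := by
    rintro rfl
    exact hf0 (map_zero _)
  obtain ⟨a₀, ha₀⟩ := Finset.nonempty_iff_ne_empty.2 (mt MvPolynomial.support_eq_empty.1 hP0)
  have h := finite_zeros_exp_poly (ι := P.support) (fun a => ∏ i, p i ^ (a : Fin s →₀ ℕ) i)
    (fun a => Finset.prod_ne_zero_iff.2 fun i _ => pow_ne_zero _ (hp0 i))
    (fun N hN a b hab => Subtype.ext (DFunLike.coe_injective
      (injective_prod_pow hp0 hfree N hN hab)))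
    (fun a => P.coeff a) ⟨⟨a₀, ha₀⟩, MvPolynomial.mem_support_iff.1 ha₀⟩
  refine h.subset fun j hj => ?_
  rw [Set.mem_ofPred_eq, symbolEval_apply, MvPolynomial.eval₂_eq', ← Finset.sum_coe_sort] at hj
  refine Eq.trans (Finset.sum_congr rfl fun a _ => ?_) hj
  rw [Polynomial.coe_evalRingHom, ← Finset.prod_zpow]
  congr 1
  refine Finset.prod_congr rfl fun i _ => ?_
  rw [← zpow_natCast, ← zpow_natCast, zpow_comm]

theorem exists_zeros_of_symbolSpace [CharZero k] (hs : 1 ≤ s) (hp0 : ∀ i, p i ≠ 0)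
    (hfree : ∀ m : Fin s → ℤ, (∏ i, p i ^ m i) = 1 → ∀ i, m i = 0) (b : ℕ) :
    ∃ e : ℕ, ∃ g ∈ symbolSpace p ^ e, g ≠ 0 ∧ ∀ j : ℤ, 0 ≤ j → j < e + b → g j = 0 := by
  let q : k := p ⟨0, hs⟩
  have hq0 : q ≠ 0 := hp0 _
  let Φ : (Fin (b + 1) × Fin (b + 1) → k) →ₗ[k] (ℤ → k) :=
    Fintype.linearCombination k fun x => fun j : ℤ => (j : k) ^ (x.1 : ℕ) * (q ^ j) ^ (x.2 : ℕ)
  have hΦ : ∀ c j, Φ c j = ∑ x, c x * ((j : k) ^ (x.1 : ℕ) * (q ^ j) ^ (x.2 : ℕ)) := by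
    intro c j
    simp [Φ, Fintype.linearCombination_apply, Finset.sum_apply]
  let Ψ : (Fin (b + 1) × Fin (b + 1) → k) →ₗ[k] (Fin (2 * b + b) → k) :=
    (LinearMap.funLeft k k fun i : Fin (2 * b + b) => (i : ℤ)).comp Φ
  have hker : LinearMap.ker Ψ ≠ ⊥ := by
    apply LinearMap.ker_ne_bot_of_finrank_lt
    simp
    nlinarith [Nat.le_mul_self b]
  obtain ⟨c, hc, hc0⟩ := (Submodule.ne_bot_iff _).1 hker
  refine ⟨2 * b, Φ c, ?_, ?_, ?_⟩
  · rw [Fintype.linearCombination_apply]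
    refine Submodule.sum_mem _ fun x _ => Submodule.smul_mem _ _ ?_
    rw [two_mul, pow_add]
    have h1 : (1 : Submodule k (ℤ → k)) ≤ symbolSpace p := Submodule.one_le.2 one_mem_symbolSpace
    refine Submodule.mul_mem_mul (pow_le_pow_right' h1 (Nat.lt_succ_iff.1 x.1.2) ?_)
      (pow_le_pow_right' h1 (Nat.lt_succ_iff.1 x.2.2) ?_)
    · exact Submodule.pow_mem_pow _ id_mem_symbolSpace _
    · exact Submodule.pow_mem_pow _ (zpow_mem_symbolSpace _) _
  · intro h
    have hinj : Function.Injective fun j : Fin (b + 1) => q ^ (j : ℕ) := by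
      intro i j hij
      have h1 := @injective_prod_pow k _ s p hp0 hfree 1 one_ne_zero
        (Pi.single ⟨0, hs⟩ (i : ℕ)) (Pi.single ⟨0, hs⟩ (j : ℕ)) (by
          simpa [Finset.prod_pow_eq_pow_sum, Pi.single_apply, pow_ite, Finset.prod_ite_eq']
            using hij)
      exact Fin.ext (Pi.single_injective _ h1)
    have h2 := exp_poly_independent (fun j : Fin (b + 1) => q ^ (j : ℕ))
      (fun j => pow_ne_zero _ hq0) hinj
      (fun j => ∑ i : Fin (b + 1), Polynomial.monomial (i : ℕ) (c (i, j))) (fun m => by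
        have h3 := congrFun h (m : ℤ)
        rw [hΦ, Fintype.sum_prod_type_right] at h3
        refine Eq.trans (Finset.sum_congr rfl fun j _ => ?_) h3
        rw [Polynomial.eval_finsetSum, Finset.sum_mul]
        refine Finset.sum_congr rfl fun i _ => ?_
        rw [Polynomial.eval_monomial, zpow_natCast, ← pow_mul, ← pow_mul, mul_comm m]
        push_cast
        ring)
    apply hc0
    funext ⟨i, j⟩
    have h4 := congrArg (fun f => Polynomial.coeff f i) (h2 j)
    simpa [Polynomial.finsetSum_coeff, Polynomial.coeff_monomial, Fin.val_inj] using h4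
  · intro j hj hj'
    have h1 := congrFun (LinearMap.mem_ker.1 hc) ⟨j.toNat, by omega⟩
    have h2 : ((j.toNat : ℕ) : ℤ) = j := Int.toNat_of_nonneg hj
    change Φ c ((j.toNat : ℕ) : ℤ) = 0 at h1
    rwa [h2] at h1

theorem isSymbolSpace_symbolSpace [CharZero k] (hs : 1 ≤ s) (hp0 : ∀ i, p i ≠ 0)
    (hfree : ∀ m : Fin s → ℤ, (∏ i, p i ^ m i) = 1 → ∀ i, m i = 0) :
    IsSymbolSpace (symbolSpace p) where
  fg := Submodule.fg_span ((Set.toFinite _).union (Set.finite_range _))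
  one_mem := one_mem_symbolSpace
  id_mem := id_mem_symbolSpace
  shift_mem := fun _ hg l => shift_mem_symbolSpace hp0 hg l
  finite_zeros := fun _ _ hf hf0 => finite_zeros_of_mem_symbolSpace_pow hp0 hfree hf hf0
  exists_zeros := exists_zeros_of_symbolSpace hs hp0 hfree

end SymbolSpace

/-- The elements of an ideal of order at most `n` with respect to a family of symbol maps. -/
def idealOfOrderLE {k R : Type*} [Field k] [Ring R] [Algebra k R] (sym : ℕ → R →ₗ[k] (ℤ → k))
    (I : Ideal R) (n : ℕ) : Submodule k R where
  carrier := {r | r ∈ I ∧ ∀ m, n < m → sym m r = 0}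
  add_mem' := fun {x y} hx hy =>
    ⟨I.add_mem hx.1 hy.1, fun m hm => by rw [map_add, hx.2 m hm, hy.2 m hm, add_zero]⟩
  zero_mem' := ⟨I.zero_mem, fun m _ => map_zero _⟩
  smul_mem' := fun c x hx =>
    ⟨by rw [Algebra.smul_def]; exact I.mul_mem_left _ hx.1,
      fun m hm => by rw [map_smul, hx.2 m hm, smul_zero]⟩

/-- A ring filtered by order whose symbols lie in the powers of a symbol space, and in which
symbols can be multiplied by the elements of `vanishingAt F n`, is noetherian. -/
theorem isNoetherianRing_of_symbols {k R : Type*} [Field k] [CharZero k] [Ring R] [Algebra k R]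
    {F : Submodule k (ℤ → k)} (hF : IsSymbolSpace F) (sym : ℕ → R →ₗ[k] (ℤ → k))
    (hfin : ∀ r, ∃ N, ∀ n, N < n → sym n r = 0) (hinj : ∀ r, (∀ n, sym n r = 0) → r = 0)
    (hpow : ∀ n r, sym n r ∈ F ^ n) (hvan : ∀ n r, ∀ j : ℕ, j < n → sym n r j = 0)
    (hmul : ∀ n : ℕ, ∀ w ∈ vanishingAt F n, ∃ a : R, (∀ r, sym (n + 1) (a * r) = w * sym n r) ∧
      ∀ m r, sym m r = 0 → sym (m + 1) (a * r) = 0) :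
    IsNoetherianRing R := by
  classical
  rw [isNoetherianRing_iff_ideal_fg]
  intro I
  have hlift : ∀ (J : Ideal R) (n : ℕ), vanishingAt F n * (idealOfOrderLE sym J n).map (sym n) ≤
      (idealOfOrderLE sym J (n + 1)).map (sym (n + 1)) := by
    intro J n
    refine Submodule.mul_le.2 ?_
    rintro w hw _ ⟨r, hr, rfl⟩
    obtain ⟨a, ha, ha'⟩ := hmul n w hw
    refine ⟨a * r, ⟨J.mul_mem_left _ hr.1, fun m hm => ?_⟩, ha r⟩
    obtain ⟨m, rfl⟩ : ∃ m', m = m' + 1 := ⟨m - 1, by omega⟩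
    exact ha' m r (hr.2 m (by omega))
  obtain ⟨N, hN⟩ := hF.exists_stable (fun n => (idealOfOrderLE sym I n).map (sym n))
    (fun n => by rintro _ ⟨r, -, rfl⟩; exact hpow n r)
    (fun n => by rintro _ ⟨r, -, rfl⟩; exact hvan n r) (hlift I)
  have hlow : ∀ n : ℕ, ∃ J : Ideal R, J.FG ∧ J ≤ I ∧
      ∀ r ∈ I, (∀ m, n ≤ m → sym m r = 0) → r ∈ J := by
    intro n
    induction n with
    | zero => exact ⟨⊥, Submodule.fg_bot, bot_le, fun r _ h => by
        rw [hinj r fun m => h m m.zero_le]; exact Submodule.zero_mem _⟩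
    | succ n ih =>
      obtain ⟨J, hJ, hJI, h⟩ := ih
      have hfg : ((idealOfOrderLE sym I n).map (sym n)).FG := by
        refine (hF.fg.pow n).of_le ?_
        rintro _ ⟨r, -, rfl⟩
        exact hpow n r
      obtain ⟨S, hS⟩ := hfg
      have hSI : ∀ x : S, ∃ r ∈ idealOfOrderLE sym I n, sym n r = x := fun x => by
        have : (x : ℤ → k) ∈ (idealOfOrderLE sym I n).map (sym n) :=
          hS ▸ Submodule.subset_span x.2
        exact this
      choose g hg hgx using hSI
      let J' : Ideal R := Ideal.span (Finset.univ.image g : Finset R)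
      have hgJ : ∀ x, g x ∈ J' := fun x => Ideal.subset_span (by simp)
      have hle : (idealOfOrderLE sym I n).map (sym n) ≤
          (idealOfOrderLE sym J' n).map (sym n) := by
        rw [← hS, Submodule.span_le]
        intro x hx
        exact ⟨g ⟨x, hx⟩, ⟨hgJ _, (hg ⟨x, hx⟩).2⟩, hgx ⟨x, hx⟩⟩
      have hJ'I : J' ≤ I := Ideal.span_le.2 fun x hx => by
        simp only [Finset.coe_image, Finset.coe_univ, Set.image_univ] at hx
        obtain ⟨y, rfl⟩ := hx
        exact (hg y).1
      refine ⟨J ⊔ J', Submodule.FG.sup hJ ⟨_, rfl⟩, sup_le hJI hJ'I, fun r hr hrn => ?_⟩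
      obtain ⟨r', hr', hrr'⟩ := hle ⟨r, ⟨hr, fun m hm => hrn m hm⟩, rfl⟩
      rw [← sub_add_cancel r r']
      refine Submodule.add_mem _ (Submodule.mem_sup_left (h _ (I.sub_mem hr (hJ'I hr'.1)) ?_))
        (Submodule.mem_sup_right hr'.1)
      intro m hm
      rw [map_sub]
      rcases hm.eq_or_lt with rfl | hlt
      · rw [hrr', sub_self]
      · rw [hrn m hlt, hr'.2 m hlt, sub_zero]
  obtain ⟨J, hJ, hJI, h⟩ := hlow (N + 1)
  have hhigh : ∀ n, N ≤ n → ∀ r ∈ idealOfOrderLE sym I n, r ∈ J := by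
    intro n hn
    induction n, hn using Nat.le_induction with
    | base => exact fun r hr => h r hr.1 fun m hm => hr.2 m hm
    | succ n hn ih =>
      intro r hr
      have hle : idealOfOrderLE sym I n ≤ idealOfOrderLE sym J n :=
        fun x hx => ⟨ih x hx, hx.2⟩
      obtain ⟨r', hr', hrr'⟩ := hlift J n (mul_le_mul' le_rfl (Submodule.map_mono hle)
        (hN n hn ⟨r, hr, rfl⟩))
      rw [← sub_add_cancel r r']
      refine J.add_mem (ih _ ⟨I.sub_mem hr.1 (hJI hr'.1), fun m hm => ?_⟩) hr'.1
      rw [map_sub]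
      rcases (Nat.succ_le_of_lt hm).eq_or_lt with rfl | hlt
      · rw [hrr', sub_self]
      · rw [hr.2 m hlt, hr'.2 m hlt, sub_zero]
  have hIJ : I = J := by
    refine le_antisymm (fun r hr => ?_) hJI
    obtain ⟨M, hM⟩ := hfin r
    exact hhigh (max N M) (le_max_left _ _) r ⟨hr, fun m hm => hM m (by omega)⟩
  rw [hIJ]
  exact hJ

section LaurentOperators

open LaurentPolynomial

variable {k : Type*} [Field k]

theorem coeff_apply_of_apply_T {ω : Module.End k k[T;T⁻¹]} {w : ℤ → k}
    (hω : ∀ n, ω (T n) = w n • T (n - 1)) (f : k[T;T⁻¹]) (i : ℤ) :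
    (ω f).coeff i = w (i + 1) * f.coeff (i + 1) := by
  induction f using LaurentPolynomial.induction_on' with
  | add x y hx hy =>
    rw [map_add, AddMonoidAlgebra.coeff_add, AddMonoidAlgebra.coeff_add, Finsupp.add_apply,
      Finsupp.add_apply, hx, hy, mul_add]
  | C_mul_T n a =>
    rw [← LaurentPolynomial.smul_eq_C_mul, map_smul, hω, AddMonoidAlgebra.coeff_smul_apply,
      AddMonoidAlgebra.coeff_smul_apply, AddMonoidAlgebra.coeff_smul_apply, T_apply, T_apply]
    by_cases h : n = i + 1
    · subst h
      simp
      ring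
    · rw [if_neg h, if_neg (by omega)]
      simp

/-- The coefficient function of the homogeneous component of degree `-m` of an operator. -/
def component (m : ℤ) : Module.End k k[T;T⁻¹] →ₗ[k] (ℤ → k) where
  toFun φ n := (φ (T n)).coeff (n - m)
  map_add' _ _ := rfl
  map_smul' _ _ := rfl

theorem component_apply (m : ℤ) (φ : Module.End k k[T;T⁻¹]) (n : ℤ) :
    component m φ n = (φ (T n)).coeff (n - m) :=
  rfl

theorem component_mul_left {ω : Module.End k k[T;T⁻¹]} {w : ℤ → k}
    (hω : ∀ n, ω (T n) = w n • T (n - 1)) (φ : Module.End k k[T;T⁻¹]) (m j : ℤ) :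
    component (m + 1) (ω * φ) j = w (j - m) * component m φ j := by
  rw [component_apply, component_apply, Module.End.mul_apply, coeff_apply_of_apply_T hω]
  congr 2 <;> ring_nf

theorem component_mul_right {ω : Module.End k k[T;T⁻¹]} {w : ℤ → k}
    (hω : ∀ n, ω (T n) = w n • T (n - 1)) (φ : Module.End k k[T;T⁻¹]) (m j : ℤ) :
    component (m + 1) (φ * ω) j = w j * component m φ (j - 1) := by
  rw [component_apply, component_apply, Module.End.mul_apply, hω, map_smul,
    AddMonoidAlgebra.coeff_smul_apply, smul_eq_mul]
  congr 2
  ring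

theorem eq_zero_of_component_eq_zero {φ : Module.End k k[T;T⁻¹]}
    (h : ∀ m, component m φ = 0) : φ = 0 := by
  have h1 : ∀ n : ℤ, φ (T n) = 0 := by
    intro n
    refine LaurentPolynomial.ext fun i => ?_
    have := congrFun (h (n - i)) n
    rw [component_apply, sub_sub_cancel] at this
    exact this
  refine LinearMap.ext fun f => ?_
  induction f using LaurentPolynomial.induction_on' with
  | add x y hx hy => rw [map_add, hx, hy, LinearMap.zero_apply, LinearMap.zero_apply,
      LinearMap.zero_apply, add_zero]
  | C_mul_T n a => rw [← LaurentPolynomial.smul_eq_C_mul, map_smul, h1, smul_zero,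
      LinearMap.zero_apply]

/-- The operators `Yⁿ ↦ g n • Yⁿ⁻ᵐ` with `g ∈ F ^ m` vanishing at `0, …, m - 1`. -/
def weightedOperators (F : Submodule k (ℤ → k)) (m : ℕ) : Set (Module.End k k[T;T⁻¹]) :=
  {φ | ∃ g ∈ F ^ m, (∀ j : ℕ, j < m → g j = 0) ∧ ∀ n, φ (T n) = g n • T (n - m)}

variable {F : Submodule k (ℤ → k)}

theorem mem_weightedOperators_one {ω : Module.End k k[T;T⁻¹]} {w : ℤ → k} (hw : w ∈ F)
    (hw0 : w 0 = 0) (hω : ∀ n, ω (T n) = w n • T (n - 1)) : ω ∈ weightedOperators F 1 :=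
  ⟨w, by rwa [pow_one], fun j hj => by rw [Nat.lt_one_iff.1 hj]; exact hw0, fun n => by simp [hω]⟩

theorem one_mem_weightedOperators : (1 : Module.End k k[T;T⁻¹]) ∈ weightedOperators F 0 :=
  ⟨1, by rw [pow_zero]; exact Submodule.one_le.1 le_rfl, fun _ hj => absurd hj (Nat.not_lt_zero _),
    fun n => by simp⟩

theorem mul_mem_weightedOperators (hF : IsSymbolSpace F) {a b : ℕ}
    {φ ψ : Module.End k k[T;T⁻¹]} (hφ : φ ∈ weightedOperators F a)
    (hψ : ψ ∈ weightedOperators F b) : φ * ψ ∈ weightedOperators F (a + b) := by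
  obtain ⟨g, hg, hg0, hφ⟩ := hφ
  obtain ⟨h, hh, hh0, hψ⟩ := hψ
  refine ⟨(fun j => g (j + (-b))) * h, ?_, ?_, fun n => ?_⟩
  · rw [pow_add]
    exact Submodule.mul_mem_mul (hF.shift_mem_pow hg _) hh
  · intro j hj
    rcases lt_or_ge j b with hjb | hjb
    · rw [Pi.mul_apply, hh0 j hjb, mul_zero]
    · have h1 : g (j + (-b)) = 0 := by
        have := hg0 (j - b) (by omega)
        rwa [Nat.cast_sub hjb, sub_eq_add_neg] at this
      rw [Pi.mul_apply, h1, zero_mul]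
  · rw [Module.End.mul_apply, hψ, map_smul, hφ, smul_smul, Pi.mul_apply, mul_comm, ← sub_eq_add_neg,
      Nat.cast_add, sub_add_eq_sub_sub_swap]

theorem component_of_mem_weightedOperators {m : ℕ} {φ : Module.End k k[T;T⁻¹]} {g : ℤ → k}
    (h : ∀ n, φ (T n) = g n • T (n - m)) (l : ℤ) : component l φ = if l = m then g else 0 := by
  ext n
  rw [component_apply, h, AddMonoidAlgebra.coeff_smul_apply, T_apply]
  by_cases hl : l = m
  · simp [hl]
  · rw [if_neg (by omega), if_neg hl, smul_zero, Pi.zero_apply]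

/-- The operators whose components have the form of the operators in `weightedOperators F m`. -/
def boundedOperators (F : Submodule k (ℤ → k)) : Submodule k (Module.End k k[T;T⁻¹]) where
  carrier := {φ | (∀ n : ℕ, component n φ ∈ F ^ n) ∧
    (∀ n j : ℕ, j < n → component n φ j = 0) ∧ (∀ l : ℤ, l < 0 → component l φ = 0) ∧
    ∃ N : ℕ, ∀ n : ℕ, N < n → component n φ = 0}
  zero_mem' := ⟨fun n => by simp, fun n j _ => by simp, fun l _ => by simp, 0, fun n _ => by simp⟩
  add_mem' := by
    rintro φ ψ ⟨h1, h2, h3, N, h4⟩ ⟨h1', h2', h3', N', h4'⟩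
    refine ⟨fun n => ?_, fun n j hj => ?_, fun l hl => ?_, max N N', fun n hn => ?_⟩
    · rw [map_add]
      exact Submodule.add_mem _ (h1 n) (h1' n)
    · rw [map_add, Pi.add_apply, h2 n j hj, h2' n j hj, add_zero]
    · rw [map_add, h3 l hl, h3' l hl, add_zero]
    · rw [map_add, h4 n (by omega), h4' n (by omega), add_zero]
  smul_mem' := by
    rintro c φ ⟨h1, h2, h3, N, h4⟩
    refine ⟨fun n => ?_, fun n j hj => ?_, fun l hl => ?_, N, fun n hn => ?_⟩
    · rw [map_smul]
      exact Submodule.smul_mem _ _ (h1 n)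
    · rw [map_smul, Pi.smul_apply, h2 n j hj, smul_zero]
    · rw [map_smul, h3 l hl, smul_zero]
    · rw [map_smul, h4 n hn, smul_zero]

theorem weightedOperators_subset_boundedOperators (m : ℕ) :
    weightedOperators F m ⊆ boundedOperators F := by
  rintro φ ⟨g, hg, hg0, h⟩
  have hc := component_of_mem_weightedOperators h
  refine ⟨fun n => ?_, fun n j hj => ?_, fun l hl => ?_, m, fun n hn => ?_⟩
  · rw [hc]
    split_ifs with h1
    · rwa [Nat.cast_inj.1 h1]
    · exact Submodule.zero_mem _
  · rw [hc]
    split_ifs with h1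
    · exact hg0 j (by omega)
    · rfl
  · rw [hc, if_neg (by omega)]
  · rw [hc, if_neg (by omega)]

theorem adjoin_le_boundedOperators (hF : IsSymbolSpace F) {S : Set (Module.End k k[T;T⁻¹])}
    (hS : S ⊆ weightedOperators F 1) {φ : Module.End k k[T;T⁻¹]} (hφ : φ ∈ Algebra.adjoin k S) :
    φ ∈ boundedOperators F := by
  rw [← Subalgebra.mem_toSubmodule, Algebra.adjoin_eq_span] at hφ
  refine Submodule.span_le.2 (fun ψ hψ => ?_) hφ
  have : ∃ m, ψ ∈ weightedOperators F m := by
    induction hψ using Submonoid.closure_induction with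
    | mem x hx => exact ⟨1, hS hx⟩
    | one => exact ⟨0, one_mem_weightedOperators⟩
    | mul x y _ _ hx hy =>
      obtain ⟨a, ha⟩ := hx
      obtain ⟨b, hb⟩ := hy
      exact ⟨a + b, mul_mem_weightedOperators hF ha hb⟩
  exact weightedOperators_subset_boundedOperators _ this.choose_spec

theorem eq_zero_of_mem_boundedOperators {φ : Module.End k k[T;T⁻¹]} (hφ : φ ∈ boundedOperators F)
    (h : ∀ n : ℕ, component n φ = 0) : φ = 0 := by
  refine eq_zero_of_component_eq_zero fun m => ?_
  rcases lt_or_ge m 0 with hm | hm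
  · exact hφ.2.2.1 m hm
  · rw [← Int.toNat_of_nonneg hm]
    exact h _

theorem isNoetherianRing_adjoin [CharZero k] (hF : IsSymbolSpace F)
    {S : Set (Module.End k k[T;T⁻¹])} (hS : S ⊆ weightedOperators F 1)
    (hW : ∀ w ∈ vanishingAt F 0, ∃ ω ∈ Algebra.adjoin k S, ∀ n, ω (T n) = w n • T (n - 1)) :
    IsNoetherianRing (Algebra.adjoin k S) := by
  have hA := fun r : Algebra.adjoin k S => adjoin_le_boundedOperators hF hS r.2
  refine isNoetherianRing_of_symbols hF
    (fun n => (component n).comp (Algebra.adjoin k S).val.toLinearMap)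
    (fun r => (hA r).2.2.2)
    (fun r hr => Subtype.ext (eq_zero_of_mem_boundedOperators (hA r) hr))
    (fun n r => (hA r).1 n) (fun n r j hj => (hA r).2.1 n j hj) fun n w hw => ?_
  obtain ⟨ω, hωA, hω⟩ := hW (fun j => w (j + n))
    ⟨hF.shift_mem w hw.1 n, by simpa using (mem_vanishingAt.1 hw).2⟩
  have key : ∀ (m : ℕ) (r : Algebra.adjoin k S) (j : ℤ),
      component ((m + 1 : ℕ) : ℤ) (ω * (r : Module.End k k[T;T⁻¹])) j =
        w (j - m + n) * component m (r : Module.End k k[T;T⁻¹]) j :=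
    fun m r j => by rw [Nat.cast_succ, component_mul_left hω]
  refine ⟨⟨ω, hωA⟩, fun r => ?_, fun m r hr => ?_⟩
  · ext j
    exact (key n r j).trans (by rw [sub_add_cancel]; rfl)
  · ext j
    have hr' : component m (r : Module.End k k[T;T⁻¹]) = 0 := hr
    exact (key m r j).trans (by rw [hr']; exact mul_zero _)

theorem isNoetherianRing_adjoin_op [CharZero k] (hF : IsSymbolSpace F)
    {F' : Submodule k (ℤ → k)} (hF' : IsSymbolSpace F')
    (hFF' : ∀ n : ℕ, ∀ g ∈ F ^ n, (fun j => g (-j)) ∈ F' ^ n)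
    (hF'F : ∀ g ∈ F', (fun j => g (-j)) ∈ F)
    {S : Set (Module.End k k[T;T⁻¹])} (hS : S ⊆ weightedOperators F 1)
    (hW : ∀ w ∈ vanishingAt F 0, ∃ ω ∈ Algebra.adjoin k S, ∀ n, ω (T n) = w n • T (n - 1)) :
    IsNoetherianRing (Algebra.adjoin k S)ᵐᵒᵖ := by
  have hA := fun r : Algebra.adjoin k S => adjoin_le_boundedOperators hF hS r.2
  let sym : ℕ → (Algebra.adjoin k S)ᵐᵒᵖ →ₗ[k] (ℤ → k) := fun n =>
    (LinearMap.funLeft k k fun j : ℤ => (n : ℤ) - 1 - j).comp <|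
      (component n).comp <| (Algebra.adjoin k S).val.toLinearMap.comp
        (MulOpposite.opLinearEquiv k).symm.toLinearMap
  have hsym : ∀ n r j, sym n r j = component n (r.unop : Module.End k k[T;T⁻¹]) (n - 1 - j) :=
    fun _ _ _ => rfl
  have hsym0 : ∀ n r, sym n r = 0 → component n (r.unop : Module.End k k[T;T⁻¹]) = 0 := by
    intro n r h
    ext j
    have := congrFun h (n - 1 - j)
    rwa [hsym, sub_sub_cancel] at this
  refine isNoetherianRing_of_symbols hF' sym (fun r => ?_) (fun r hr => ?_) (fun n r => ?_)
    (fun n r j hj => ?_) fun n w hw => ?_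
  · obtain ⟨N, hN⟩ := (hA r.unop).2.2.2
    refine ⟨N, fun n hn => ?_⟩
    ext j
    rw [hsym, hN n hn]
    rfl
  · exact MulOpposite.unop_injective (Subtype.ext
      (eq_zero_of_mem_boundedOperators (hA r.unop) fun n => hsym0 n r (hr n)))
  · have h1 := hF'.shift_mem_pow (hFF' n _ ((hA r.unop).1 n)) (1 - n)
    convert h1 using 1
    ext j
    exact congrArg (component n (r.unop : Module.End k k[T;T⁻¹]))
      (show (n : ℤ) - 1 - j = -(j + (1 - n)) by ring)
  · rw [hsym]
    have h1 := (hA r.unop).2.1 n (n - 1 - j) (by omega)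
    rwa [Nat.cast_sub (by omega), Nat.cast_sub (by omega), Nat.cast_one] at h1
  · obtain ⟨ω, hωA, hω⟩ := hW (fun j => w (n - j))
      ⟨by
        have h1 := hF'F _ (hF'.shift_mem w hw.1 n)
        have h2 : (fun j : ℤ => w (n - j)) = fun j => w (-j + n) :=
          funext fun j => congrArg w (by ring)
        rwa [h2], by simpa using (mem_vanishingAt.1 hw).2⟩
    have key : ∀ (m : ℕ) (r : (Algebra.adjoin k S)ᵐᵒᵖ) (j : ℤ),
        sym (m + 1) (MulOpposite.op ⟨ω, hωA⟩ * r) j = w (n - (m - j)) * sym m r j := by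
      intro m r j
      rw [hsym, hsym]
      have := component_mul_right hω (r.unop : Module.End k k[T;T⁻¹]) m (m - j)
      rw [show (m : ℤ) - j - 1 = m - 1 - j by ring] at this
      rw [← this]
      push_cast
      rw [add_sub_cancel_right]
      rfl
    refine ⟨MulOpposite.op ⟨ω, hωA⟩, fun r => ?_, fun m r hr => ?_⟩
    · ext j
      rw [key, sub_sub_cancel]
      rfl
    · ext j
      rw [key, hr]
      simp

theorem neg_mem_symbolSpace_inv {s : ℕ} {p : Fin s → k} {g : ℤ → k} (hg : g ∈ symbolSpace p) :
    (fun j => g (-j)) ∈ symbolSpace fun i => (p i)⁻¹ := by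
  induction hg using Submodule.span_induction with
  | mem g hg =>
    obtain (rfl | rfl) | ⟨i, rfl⟩ := hg
    · exact one_mem_symbolSpace
    · have : (fun j : ℤ => ((-j : ℤ) : k)) = -(fun j : ℤ => (j : k)) := by
        ext j
        simp
      rw [this]
      exact Submodule.neg_mem _ id_mem_symbolSpace
    · have : (fun j : ℤ => p i ^ (-j)) = (fun j : ℤ => (p i)⁻¹ ^ j) := by
        ext j
        rw [zpow_neg, inv_zpow]
      rw [this]
      exact zpow_mem_symbolSpace (p := fun i => (p i)⁻¹) i
  | zero => exact Submodule.zero_mem _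
  | add x y _ _ hx hy => exact Submodule.add_mem _ hx hy
  | smul a x _ hx => exact Submodule.smul_mem _ a hx

theorem neg_mem_symbolSpace_inv_pow {s : ℕ} {p : Fin s → k} {n : ℕ} {g : ℤ → k}
    (hg : g ∈ symbolSpace p ^ n) : (fun j => g (-j)) ∈ (symbolSpace fun i => (p i)⁻¹) ^ n := by
  let e : (ℤ → k) →ₐ[k] (ℤ → k) := AlgHom.pi fun j => Pi.evalAlgHom k _ (-j)
  have h1 : (symbolSpace p).map e.toLinearMap ≤ symbolSpace fun i => (p i)⁻¹ :=
    Submodule.map_le_iff_le_comap.2 fun g hg => neg_mem_symbolSpace_inv hg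
  have h2 := Submodule.mem_map_of_mem (f := e.toLinearMap) hg
  rw [Submodule.map_pow] at h2
  exact pow_le_pow_left' h1 n h2

theorem exists_mem_adjoin_of_mem_vanishingAt {s : ℕ} {p : Fin s → k} (hp1 : ∀ i, p i ≠ 1)
    {D1 : Module.End k k[T;T⁻¹]} (hD1 : ∀ n : ℤ, D1 (T n) = (n : k) • T (n - 1))
    {D : Fin s → Module.End k k[T;T⁻¹]}
    (hD : ∀ i, ∀ n : ℤ, D i (T n) = ((p i ^ n - 1) / (p i - 1)) • T (n - 1))
    {w : ℤ → k} (hw : w ∈ vanishingAt (symbolSpace p) 0) :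
    ∃ ω ∈ Algebra.adjoin k ({D1} ∪ Set.range D), ∀ n, ω (T n) = w n • T (n - 1) := by
  suffices h : ∃ c : k, ∃ ω ∈ Algebra.adjoin k ({D1} ∪ Set.range D),
      ∃ v : ℤ → k, v 0 = 0 ∧ (∀ n, w n = c + v n) ∧ ∀ n, ω (T n) = v n • T (n - 1) by
    obtain ⟨c, ω, hωA, v, hv0, hv, hω⟩ := h
    have hc : c = 0 := by
      have := hv 0
      rwa [(mem_vanishingAt.1 hw).2, hv0, add_zero, eq_comm] at this
    exact ⟨ω, hωA, fun n => by rw [hω, hv, hc, zero_add]⟩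
  obtain ⟨hw, -⟩ := hw
  induction hw using Submodule.span_induction with
  | mem g hg =>
    obtain (rfl | rfl) | ⟨i, rfl⟩ := hg
    · exact ⟨1, 0, Subalgebra.zero_mem _, 0, rfl, by simp, by simp⟩
    · exact ⟨0, D1, Algebra.subset_adjoin (Or.inl rfl), fun j => j, by simp, by simp, hD1⟩
    · refine ⟨1, (p i - 1) • D i, Subalgebra.smul_mem _
        (Algebra.subset_adjoin (Set.mem_union_right _ (Set.mem_range_self i))) _,
        fun j => p i ^ j - 1, by simp, by simp, fun n => ?_⟩
      rw [LinearMap.smul_apply, hD, smul_smul, mul_div_cancel₀ _ (sub_ne_zero.2 (hp1 i))]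
  | zero => exact ⟨0, 0, Subalgebra.zero_mem _, 0, rfl, by simp, by simp⟩
  | add x y _ _ hx hy =>
    obtain ⟨c, ω, hωA, v, hv0, hv, hω⟩ := hx
    obtain ⟨c', ω', hωA', v', hv0', hv', hω'⟩ := hy
    refine ⟨c + c', ω + ω', Subalgebra.add_mem _ hωA hωA', v + v', by simp [hv0, hv0'],
      fun n => ?_, fun n => ?_⟩
    · rw [Pi.add_apply, Pi.add_apply, hv, hv']
      ring
    · rw [LinearMap.add_apply, hω, hω', Pi.add_apply, add_smul]
  | smul a x _ hx =>
    obtain ⟨c, ω, hωA, v, hv0, hv, hω⟩ := hx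
    refine ⟨a * c, a • ω, Subalgebra.smul_mem _ hωA _, a • v, by simp [hv0],
      fun n => ?_, fun n => ?_⟩
    · rw [Pi.smul_apply, Pi.smul_apply, hv, smul_eq_mul, smul_eq_mul, mul_add]
    · rw [LinearMap.smul_apply, hω, Pi.smul_apply, smul_assoc]

theorem subset_weightedOperators_symbolSpace {s : ℕ} {p : Fin s → k}
    {D1 : Module.End k k[T;T⁻¹]} (hD1 : ∀ n : ℤ, D1 (T n) = (n : k) • T (n - 1))
    {D : Fin s → Module.End k k[T;T⁻¹]}
    (hD : ∀ i, ∀ n : ℤ, D i (T n) = ((p i ^ n - 1) / (p i - 1)) • T (n - 1)) :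
    {D1} ∪ Set.range D ⊆ weightedOperators (symbolSpace p) 1 := by
  rintro _ (rfl | ⟨i, rfl⟩)
  · exact mem_weightedOperators_one id_mem_symbolSpace (by simp) hD1
  · refine mem_weightedOperators_one (w := fun n => (p i ^ n - 1) / (p i - 1)) ?_ (by simp) (hD i)
    have : (fun n : ℤ => (p i ^ n - 1) / (p i - 1)) =
        (p i - 1)⁻¹ • ((fun n : ℤ => p i ^ n) - (1 : ℤ → k)) := by
      ext n
      simp [div_eq_inv_mul]
    rw [this]
    exact Submodule.smul_mem _ _ (Submodule.sub_mem _ (zpow_mem_symbolSpace i) one_mem_symbolSpace)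

end LaurentOperators

/-- in characteristic zero, the algebra generated by `D_1 = d/dY` together
with Eulerian derivatives `D_{p₂}, …, D_{p_t}` (the `pᵢ` distinct, `≠ 0, 1`, generating a
free abelian subgroup of `k˟` of rank `t − 1`, here `t = s + 1 ≥ 2`) is noetherian. -/
theorem stmt_5 {k : Type*} [Field k] [IsAlgClosed k] [CharZero k]
    (s : ℕ) (hs : 1 ≤ s) (p : Fin s → k)
    (hp0 : ∀ i, p i ≠ 0) (hp1 : ∀ i, p i ≠ 1)
    (hdist : Function.Injective p)
    (hfree : ∀ m : Fin s → ℤ, (∏ i, p i ^ m i) = 1 → ∀ i, m i = 0)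
    (D1 : Module.End k (LaurentPolynomial k))
    (hD1 : ∀ n : ℤ, D1 (LaurentPolynomial.T n) = (n : k) • LaurentPolynomial.T (n - 1))
    (D : Fin s → Module.End k (LaurentPolynomial k))
    (hD : ∀ i, ∀ n : ℤ, D i (LaurentPolynomial.T n)
        = ((p i ^ n - 1) / (p i - 1)) • LaurentPolynomial.T (n - 1)) :
    IsNoetherianRing (Algebra.adjoin k ({D1} ∪ Set.range D)) ∧
      IsNoetherianRing (↥(Algebra.adjoin k ({D1} ∪ Set.range D)))ᵐᵒᵖ := by
  have hp0' : ∀ i, (p i)⁻¹ ≠ 0 := fun i => inv_ne_zero (hp0 i)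
  have hfree' : ∀ m : Fin s → ℤ, (∏ i, (p i)⁻¹ ^ m i) = 1 → ∀ i, m i = 0 := by
    intro m hm
    refine hfree m ?_
    rw [Finset.prod_congr rfl fun i _ => inv_zpow (p i) (m i), Finset.prod_inv_distrib] at hm
    exact inv_eq_one.1 hm
  have hF := isSymbolSpace_symbolSpace hs hp0 hfree
  have hS := subset_weightedOperators_symbolSpace hD1 hD
  have hW : ∀ w ∈ vanishingAt (symbolSpace p) 0, _ := fun w hw =>
    exists_mem_adjoin_of_mem_vanishingAt hp1 hD1 hD hw
  refine ⟨isNoetherianRing_adjoin hF hS hW, isNoetherianRing_adjoin_op hF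
    (isSymbolSpace_symbolSpace hs hp0' hfree') (fun n g hg => neg_mem_symbolSpace_inv_pow hg)
    (fun g hg => ?_) hS hW⟩
  have h := neg_mem_symbolSpace_inv hg
  simpa only [inv_inv] using h
end
end

section
/- Assume k has characteristic p > 0 and let y ∈ k be transcendental over the prime subfield 𝔽_p. Then the k-subalgebra of End_k(k[Y,Y⁻¹]) generated by the two Eulerian derivatives D_y and D_{y+1} is neither left noetherian nor right noetherian. -/
set_option synthInstance.maxHeartbeats 1000000
set_option maxHeartbeats 4000000
set_option maxSynthPendingDepth 3

noncomputable section

section ExponentialFunctions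

variable {k : Type*} [Field k]

/-- Evaluation of a polynomial in two variables along the orbit `n ↦ (g 0 ^ n, g 1 ^ n)`. -/
def orbitEval (g : Fin 2 → k) : MvPolynomial (Fin 2) k →ₐ[k] (ℤ → k) :=
  MvPolynomial.aeval fun i n => g i ^ n

/-- The span of `1` and the two functions `n ↦ g i ^ n`. -/
def orbitSpan (g : Fin 2 → k) : Submodule k (ℤ → k) :=
  Submodule.span k (insert 1 (Set.range fun (i : Fin 2) (n : ℤ) => g i ^ n))

/-- The function `n ↦ g i ^ (n - c) - 1`, which vanishes at `c`. -/
def orbitShift (g : Fin 2 → k) (i : Fin 2) (c : ℤ) : ℤ → k := fun n => g i ^ (n - c) - 1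

lemma one_mem_orbitSpan (g : Fin 2 → k) : 1 ∈ orbitSpan g :=
  Submodule.subset_span (Set.mem_insert _ _)

lemma zpow_mem_orbitSpan (g : Fin 2 → k) (i : Fin 2) : (fun n : ℤ => g i ^ n) ∈ orbitSpan g :=
  Submodule.subset_span (Set.mem_insert_of_mem _ ⟨i, rfl⟩)

lemma orbitSpan_pow_le (g : Fin 2 → k) (d : ℕ) : orbitSpan g ^ d ≤ orbitSpan g ^ (d + 1) := by
  intro x hx
  rw [pow_succ, ← mul_one x]
  exact Submodule.mul_mem_mul hx (one_mem_orbitSpan g)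

lemma orbitShift_eq {g : Fin 2 → k} (hg : ∀ i, g i ≠ 0) (i : Fin 2) (c : ℤ) :
    orbitShift g i c = g i ^ (-c) • (fun n : ℤ => g i ^ n) - 1 := by
  funext n
  simp [orbitShift, zpow_sub₀ (hg i), div_eq_mul_inv, mul_comm]

lemma orbitShift_mem {g : Fin 2 → k} (hg : ∀ i, g i ≠ 0) (i : Fin 2) (c : ℤ) :
    orbitShift g i c ∈ orbitSpan g := by
  rw [orbitShift_eq hg]
  exact Submodule.sub_mem _ (Submodule.smul_mem _ _ (zpow_mem_orbitSpan g i)) (one_mem_orbitSpan g)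

lemma orbitEval_orbitShift {g : Fin 2 → k} (hg : ∀ i, g i ≠ 0) (i : Fin 2) (c : ℤ) :
    orbitEval g (MvPolynomial.C (g i ^ (-c)) * MvPolynomial.X i - 1) = orbitShift g i c := by
  rw [orbitShift_eq hg]
  funext n
  simp [orbitEval]

lemma exists_eq_const_add_of_mem_orbitSpan {g : Fin 2 → k} (hg : ∀ i, g i ≠ 0) (c : ℤ)
    {F : ℤ → k} (hF : F ∈ orbitSpan g) :
    ∃ γ α β : k, F = γ • (1 : ℤ → k) + α • orbitShift g 0 c + β • orbitShift g 1 c := by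
  induction hF using Submodule.span_induction with
  | mem x hx =>
    rcases hx with rfl | ⟨i, rfl⟩
    · exact ⟨1, 0, 0, by simp⟩
    · have h (j : Fin 2) (n : ℤ) : g j ^ n = g j ^ c * g j ^ (n - c) := by
        rw [← zpow_add₀ (hg j)]; congr 1; ring
      fin_cases i
      · refine ⟨g 0 ^ c, g 0 ^ c, 0, ?_⟩
        funext n
        simp [orbitShift, h 0 n]; ring
      · refine ⟨g 1 ^ c, 0, g 1 ^ c, ?_⟩
        funext n
        simp [orbitShift, h 1 n]; ring
  | zero => exact ⟨0, 0, 0, by simp⟩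
  | add x y _ _ hx hy =>
    obtain ⟨γ, α, β, rfl⟩ := hx
    obtain ⟨γ', α', β', rfl⟩ := hy
    exact ⟨γ + γ', α + α', β + β', by module⟩
  | smul t x _ hx =>
    obtain ⟨γ, α, β, rfl⟩ := hx
    exact ⟨t * γ, t * α, t * β, by module⟩

lemma exists_eq_const_add_of_mem_pow {g : Fin 2 → k} (hg : ∀ i, g i ≠ 0) (c : ℤ) (d : ℕ)
    {F : ℤ → k} (hF : F ∈ orbitSpan g ^ (d + 1)) :
    ∃ γ : k, ∃ A ∈ orbitSpan g ^ d, ∃ B ∈ orbitSpan g ^ d,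
      F = γ • (1 : ℤ → k) + orbitShift g 0 c * A + orbitShift g 1 c * B := by
  induction d generalizing F with
  | zero =>
    rw [zero_add, pow_one] at hF
    obtain ⟨γ, α, β, rfl⟩ := exists_eq_const_add_of_mem_orbitSpan hg c hF
    have h1 : (1 : ℤ → k) ∈ orbitSpan g ^ 0 := by
      rw [pow_zero]; exact Submodule.one_le.mp le_rfl
    refine ⟨γ, α • 1, Submodule.smul_mem _ _ h1, β • 1, Submodule.smul_mem _ _ h1, ?_⟩
    simp
  | succ d ih =>
    rw [pow_succ] at hF
    refine Submodule.mul_induction_on hF (fun G hG H hH => ?_) ?_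
    · obtain ⟨δ, A, hA, B, hB, hGe⟩ := ih hG
      obtain ⟨γ, α, β, rfl⟩ := exists_eq_const_add_of_mem_orbitSpan hg c hH
      refine ⟨γ * δ, γ • A + α • G, ?_, γ • B + β • G, ?_, ?_⟩
      · exact add_mem (Submodule.smul_mem _ _ (orbitSpan_pow_le g d hA)) (Submodule.smul_mem _ _ hG)
      · exact add_mem (Submodule.smul_mem _ _ (orbitSpan_pow_le g d hB)) (Submodule.smul_mem _ _ hG)
      · have h : G * (γ • (1 : ℤ → k)) = γ • (δ • (1 : ℤ → k) + orbitShift g 0 c * A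
            + orbitShift g 1 c * B) := by rw [← hGe, mul_smul_comm, mul_one]
        rw [mul_add, mul_add, h]
        simp only [mul_add, smul_add, smul_smul, smul_mul_assoc, mul_smul_comm, mul_comm G]
        abel
    · rintro _ _ ⟨γ, A, hA, B, hB, rfl⟩ ⟨γ', A', hA', B', hB', rfl⟩
      refine ⟨γ + γ', A + A', add_mem hA hA', B + B', add_mem hB hB', ?_⟩
      rw [add_smul]
      ring

lemma prod_orbitShift_mem {g : Fin 2 → k} (hg : ∀ i, g i ≠ 0) (S : Finset ℕ) :
    ∏ j ∈ S, orbitShift g 0 j ∈ orbitSpan g ^ S.card := by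
  classical
  induction S using Finset.induction_on with
  | empty => rw [Finset.prod_empty, Finset.card_empty, pow_zero]; exact Submodule.one_le.mp le_rfl
  | insert j S hj ih =>
    rw [Finset.prod_insert hj, Finset.card_insert_of_notMem hj, pow_succ']
    exact Submodule.mul_mem_mul (orbitShift_mem hg _ _) ih

lemma orbitShift_ne_zero {g : Fin 2 → k} (hroot : ∀ i (n : ℤ), n ≠ 0 → g i ^ n ≠ 1)
    (i : Fin 2) {c n : ℤ} (h : n ≠ c) : orbitShift g i c n ≠ 0 :=
  sub_ne_zero.mpr (hroot i _ (sub_ne_zero.mpr h))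

lemma exists_interpolation {g : Fin 2 → k} (hg : ∀ i, g i ≠ 0)
    (hroot : ∀ i (n : ℤ), n ≠ 0 → g i ^ n ≠ 1) (d : ℕ) (r : ℕ → k) :
    ∃ f : ℤ → k, (∀ x ∈ orbitSpan g, x * f ∈ orbitSpan g ^ d) ∧ ∀ i < d, f i = r i := by
  induction d with
  | zero => exact ⟨0, fun x _ => by simp, fun i hi => by omega⟩
  | succ d ih =>
    obtain ⟨f, hf, hfr⟩ := ih
    set π : ℤ → k := ∏ j ∈ Finset.range d, orbitShift g 0 j with hπ
    have hπd : π d ≠ 0 := by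
      rw [hπ, Finset.prod_apply, Finset.prod_ne_zero_iff]
      intro j hj
      have := Finset.mem_range.mp hj
      exact orbitShift_ne_zero hroot 0 (by omega)
    refine ⟨f + ((r d - f d) / π d) • π, fun x hx => ?_, fun i hi => ?_⟩
    · rw [mul_add, mul_smul_comm]
      refine add_mem (orbitSpan_pow_le g d (hf x hx)) (Submodule.smul_mem _ _ ?_)
      rw [pow_succ']
      refine Submodule.mul_mem_mul hx ?_
      simpa using prod_orbitShift_mem hg (Finset.range d)
    · rcases Nat.lt_succ_iff_lt_or_eq.mp hi with hi | rfl
      · have : π i = 0 := by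
          rw [hπ, Finset.prod_apply]
          exact Finset.prod_eq_zero (Finset.mem_range.mpr hi) (by simp [orbitShift])
        simp [hfr i hi, this]
      · simp [div_mul_cancel₀ _ hπd]

lemma exists_eq_of_vanishing {g : Fin 2 → k} (hg : ∀ i, g i ≠ 0)
    (hroot : ∀ i (n : ℤ), n ≠ 0 → g i ^ n ≠ 1) (d : ℕ) {F : ℤ → k}
    (hF : F ∈ orbitSpan g ^ (d + 1)) (h0 : ∀ i : ℕ, i < d + 1 → F i = 0) :
    ∃ A ∈ orbitSpan g ^ d, ∃ B ∈ orbitSpan g ^ d, (∀ i : ℕ, i < d → A i = 0) ∧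
      (∀ i : ℕ, i < d → B i = 0) ∧ F = orbitShift g 0 d * A + orbitShift g 1 d * B := by
  obtain ⟨γ, A, hA, B, hB, hFe⟩ := exists_eq_const_add_of_mem_pow hg d d hF
  have hγ : γ = 0 := by
    have := h0 d (by omega)
    rw [hFe] at this
    simpa [orbitShift] using this
  obtain ⟨f, hf, hfr⟩ := exists_interpolation hg hroot d (fun i => -A i / orbitShift g 1 d i)
  have hFe' : F = orbitShift g 0 d * (A + orbitShift g 1 d * f)
      + orbitShift g 1 d * (B - orbitShift g 0 d * f) := by
    rw [hFe, hγ, zero_smul]; ring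
  have hw (i : ℕ) (hi : i < d) : orbitShift g 1 d i ≠ 0 := orbitShift_ne_zero hroot 1 (by omega)
  have hA0 (i : ℕ) (hi : i < d) : (A + orbitShift g 1 d * f) i = 0 := by
    rw [Pi.add_apply, Pi.mul_apply, hfr i hi, mul_div_cancel₀ _ (hw i hi), add_neg_cancel]
  refine ⟨A + orbitShift g 1 d * f, add_mem hA (hf _ (orbitShift_mem hg _ _)),
    B - orbitShift g 0 d * f, sub_mem hB (hf _ (orbitShift_mem hg _ _)), hA0, fun i hi => ?_, hFe'⟩
  have := h0 i (by omega)
  rw [hFe', Pi.add_apply, Pi.mul_apply, Pi.mul_apply, hA0 i hi, mul_zero, zero_add] at this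
  exact (mul_eq_zero.mp this).resolve_left (hw i hi)

lemma orbitEval_injective {g : Fin 2 → k} (hg : ∀ i, g i ≠ 0)
    (hind : ∀ m m' : Fin 2 →₀ ℕ, ∏ i, g i ^ m i = ∏ i, g i ^ m' i → m = m') :
    Function.Injective (orbitEval g) := by
  rw [injective_iff_map_eq_zero]
  intro Q hQ
  let χ (m : Fin 2 →₀ ℕ) : Multiplicative ℤ →* k :=
    { toFun n := (∏ i, g i ^ m i) ^ n.toAdd
      map_one' := by simp
      map_mul' x y := by
        rw [toAdd_mul, zpow_add₀ (Finset.prod_ne_zero_iff.mpr fun i _ => pow_ne_zero _ (hg i))] }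
  have hχ : Function.Injective χ := fun m m' h => hind m m' <| by
    simpa [χ] using DFunLike.congr_fun h (Multiplicative.ofAdd 1)
  have hli := (linearIndependent_monoidHom (Multiplicative ℤ) k).comp χ hχ
  have hz := linearIndependent_iff'.mp hli Q.support (fun m => Q.coeff m) <| by
    funext n
    have := congrFun hQ n.toAdd
    rw [orbitEval, MvPolynomial.aeval_def, MvPolynomial.eval₂_eq'] at this
    simp only [Finset.sum_apply, Pi.mul_apply, Pi.zero_apply, Finset.prod_apply, Pi.pow_apply,
      Pi.algebraMap_apply, Algebra.algebraMap_self, RingHom.id_apply] at this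
    simp only [Finset.sum_apply, Pi.smul_apply, Pi.zero_apply, smul_eq_mul]
    rw [← this]
    refine Finset.sum_congr rfl fun m _ => ?_
    simp only [χ, Function.comp_apply, MonoidHom.coe_mk, OneHom.coe_mk]
    rw [← Finset.prod_zpow]
    congr 1
    refine Finset.prod_congr rfl fun i _ => ?_
    rw [← zpow_natCast, ← zpow_natCast, zpow_comm]
  ext m
  by_cases hm : m ∈ Q.support
  · exact hz m hm
  · simpa using hm

lemma zpow_ne_one_of_independent {g : Fin 2 → k}
    (hind : ∀ m m' : Fin 2 →₀ ℕ, ∏ i, g i ^ m i = ∏ i, g i ^ m' i → m = m')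
    (i : Fin 2) (n : ℤ) (hn : n ≠ 0) : g i ^ n ≠ 1 := by
  intro h
  have h' : g i ^ n.natAbs = 1 := by
    rcases Int.natAbs_eq n with e | e
    · rw [e, zpow_natCast] at h; simpa using h
    · rw [e, zpow_neg, inv_eq_one, zpow_natCast] at h; simpa using h
  have := hind (Finsupp.single i n.natAbs) 0 <| by
    fin_cases i <;> simpa [Fin.prod_univ_two] using h'
  simp [hn] at this

end ExponentialFunctions

section Chain

variable {k E : Type*} [Field k] [AddCommGroup E] [Module k E]

/-- The elements whose components are the restrictions to the orbit of multiples `ℓ * Q` of `ℓ`,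
where the cofactor `Q` in degree `d` vanishes at those `s r < d` with `N ≤ r`. -/
def cofactorVanishing (g : Fin 2 → k) (c : ℤ → E →ₗ[k] (ℤ → k)) (ℓ : MvPolynomial (Fin 2) k)
    (s : ℕ → ℕ) (N : ℕ) : Submodule k E where
  carrier := {x | ∀ d : ℤ, ∃ Q, c d x = orbitEval g (ℓ * Q) ∧
    ∀ r, N ≤ r → (s r : ℤ) < d → orbitEval g Q (s r) = 0}
  zero_mem' d := ⟨0, by simp⟩
  add_mem' {x y} hx hy d := by
    obtain ⟨Q, hQ, hQ'⟩ := hx d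
    obtain ⟨R, hR, hR'⟩ := hy d
    refine ⟨Q + R, by rw [map_add, hQ, hR, mul_add, map_add], fun r hr hd => ?_⟩
    rw [map_add, Pi.add_apply, hQ' r hr hd, hR' r hr hd, add_zero]
  smul_mem' t x hx d := by
    obtain ⟨Q, hQ, hQ'⟩ := hx d
    refine ⟨t • Q, by rw [map_smul, hQ, mul_smul_comm, map_smul], fun r hr hd => ?_⟩
    rw [map_smul, Pi.smul_apply, hQ' r hr hd, smul_zero]

lemma cofactorVanishing_mono (g : Fin 2 → k) (c : ℤ → E →ₗ[k] (ℤ → k))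
    (ℓ : MvPolynomial (Fin 2) k) (s : ℕ → ℕ) : Monotone (cofactorVanishing g c ℓ s) := by
  intro M N h x hx d
  obtain ⟨Q, hQ, hQ'⟩ := hx d
  exact ⟨Q, hQ, fun r hr => hQ' r (h.trans hr)⟩

/-- Operators `μ 0`, `μ 1` of degree one acting on components by multiplication with multiples of
`n ↦ g i ^ (n - d) - 1`. -/
def ActsByShift (g κ : Fin 2 → k) (c : ℤ → E →ₗ[k] (ℤ → k)) (μ : Fin 2 → E →ₗ[k] E) : Prop :=
  ∀ i d x, c (d + 1) (μ i x) = κ i • (orbitShift g i d * c d x)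

lemma ActsByShift.mem_cofactorVanishing {g κ : Fin 2 → k} {c : ℤ → E →ₗ[k] (ℤ → k)}
    {μ : Fin 2 → E →ₗ[k] E} (hμ : ActsByShift g κ c μ) (hg : ∀ i, g i ≠ 0)
    {ℓ : MvPolynomial (Fin 2) k} {s : ℕ → ℕ} {N : ℕ} (i : Fin 2) {x : E}
    (hx : x ∈ cofactorVanishing g c ℓ s N) : μ i x ∈ cofactorVanishing g c ℓ s N := by
  intro d
  obtain ⟨Q, hQ, hQ'⟩ := hx (d - 1)
  refine ⟨κ i • ((MvPolynomial.C (g i ^ (-(d - 1))) * MvPolynomial.X i - 1) * Q), ?_,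
    fun r hr hd => ?_⟩
  · have := hμ i (d - 1) x
    rw [sub_add_cancel] at this
    rw [this, hQ, mul_smul_comm, map_smul, ← orbitEval_orbitShift hg, ← map_mul]
    congr 2
    ring
  · rw [map_smul, map_mul, orbitEval_orbitShift hg, Pi.smul_apply, Pi.mul_apply]
    rcases (show (s r : ℤ) < d - 1 ∨ (s r : ℤ) = d - 1 by omega) with h | h
    · rw [hQ' r hr h, mul_zero, smul_zero]
    · rw [h]; simp [orbitShift]

lemma ActsByShift.exists_component_eq {g κ : Fin 2 → k} {c : ℤ → E →ₗ[k] (ℤ → k)}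
    {μ : Fin 2 → E →ₗ[k] E} (hμ : ActsByShift g κ c μ) (hg : ∀ i, g i ≠ 0)
    (hroot : ∀ i (n : ℤ), n ≠ 0 → g i ^ n ≠ 1) (hκ : ∀ i, κ i ≠ 0)
    {B : Submodule k E} (hB : ∀ i, ∀ x ∈ B, μ i x ∈ B)
    {e : E} (he : e ∈ B) (hce : ∀ d, c d e = if d = 0 then 1 else 0) (d : ℕ) {F : ℤ → k}
    (hF : F ∈ orbitSpan g ^ d) (h0 : ∀ i : ℕ, i < d → F i = 0) :
    ∃ x ∈ B, ∀ j : ℤ, c j x = if j = d then F else 0 := by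
  induction d generalizing F with
  | zero =>
    rw [pow_zero, Submodule.mem_one] at hF
    obtain ⟨t, rfl⟩ := hF
    refine ⟨t • e, B.smul_mem t he, fun j => ?_⟩
    rw [map_smul, hce]
    split_ifs <;> simp_all [Algebra.algebraMap_eq_smul_one]
  | succ d ih =>
    obtain ⟨G, hG, H, hH, hG0, hH0, rfl⟩ := exists_eq_of_vanishing hg hroot d hF h0
    obtain ⟨x, hx, hcx⟩ := ih hG hG0
    obtain ⟨z, hz, hcz⟩ := ih hH hH0
    refine ⟨(κ 0)⁻¹ • μ 0 x + (κ 1)⁻¹ • μ 1 z,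
      add_mem (B.smul_mem _ (hB 0 x hx)) (B.smul_mem _ (hB 1 z hz)), fun j => ?_⟩
    obtain ⟨j, rfl⟩ : ∃ j', j = j' + 1 := ⟨j - 1, by ring⟩
    rw [map_add, map_smul, map_smul, hμ, hμ, smul_smul, smul_smul, inv_mul_cancel₀ (hκ 0),
      inv_mul_cancel₀ (hκ 1), one_smul, one_smul, hcx, hcz]
    by_cases h : j = d
    · simp [h]
    · simp [h]

lemma ActsByShift.exists_mem_notMem {g κ : Fin 2 → k} {c : ℤ → E →ₗ[k] (ℤ → k)}
    {μ : Fin 2 → E →ₗ[k] E} (hμ : ActsByShift g κ c μ) (hg : ∀ i, g i ≠ 0)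
    (hind : ∀ m m' : Fin 2 →₀ ℕ, ∏ i, g i ^ m i = ∏ i, g i ^ m' i → m = m') (hκ : ∀ i, κ i ≠ 0)
    {B : Submodule k E} (hB : ∀ i, ∀ x ∈ B, μ i x ∈ B)
    {e : E} (he : e ∈ B) (hce : ∀ d, c d e = if d = 0 then 1 else 0)
    {ℓ : MvPolynomial (Fin 2) k} (hℓ : ℓ ≠ 0) (hℓ2 : orbitEval g ℓ ∈ orbitSpan g ^ 2)
    {s : ℕ → ℕ} (hs : StrictMono s) (hsℓ : ∀ r, orbitEval g ℓ (s r) = 0) {N : ℕ} (hN : 0 < N) :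
    ∃ x ∈ B, x ∈ cofactorVanishing g c ℓ s (N + 1) ∧ x ∉ cofactorVanishing g c ℓ s N := by
  have hroot := zpow_ne_one_of_independent hind
  set S := (Finset.range (s N)).erase (s 0) with hS
  have hs0 : s 0 < s N := hs hN
  have hcard : S.card + 1 = s N := by
    rw [hS, Finset.card_erase_add_one (Finset.mem_range.mpr hs0), Finset.card_range]
  let Q : MvPolynomial (Fin 2) k :=
    ∏ j ∈ S, (MvPolynomial.C (g 0 ^ (-(j : ℤ))) * MvPolynomial.X 0 - 1)
  have hQ : orbitEval g Q = ∏ j ∈ S, orbitShift g 0 j := by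
    rw [map_prod]
    exact Finset.prod_congr rfl fun j _ => orbitEval_orbitShift hg 0 j
  have hQN : orbitEval g Q (s N) ≠ 0 := by
    rw [hQ, Finset.prod_apply, Finset.prod_ne_zero_iff]
    intro j hj
    have := Finset.mem_range.mp (Finset.mem_of_mem_erase hj)
    exact orbitShift_ne_zero hroot 0 (by omega)
  have hmem : orbitEval g (ℓ * Q) ∈ orbitSpan g ^ (s N + 1) := by
    rw [map_mul, ← hcard, show S.card + 1 + 1 = 2 + S.card by ring, pow_add, hQ]
    exact Submodule.mul_mem_mul hℓ2 (prod_orbitShift_mem hg S)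
  obtain ⟨x, hxB, hx⟩ := hμ.exists_component_eq hg hroot hκ hB he hce _ hmem <| by
    intro i hi
    rw [map_mul, Pi.mul_apply]
    rcases Nat.lt_succ_iff_lt_or_eq.mp hi with hi | rfl
    · by_cases h : i = s 0
      · rw [h, hsℓ, zero_mul]
      · rw [hQ, Finset.prod_apply, Finset.prod_eq_zero (i := i) (by simp [hS, h, hi])
          (by simp [orbitShift]), mul_zero]
    · rw [hsℓ, zero_mul]
  refine ⟨x, hxB, fun d => ?_, fun hxN => ?_⟩
  · rw [hx]
    split_ifs with h
    · refine ⟨Q, rfl, fun r hr hd => ?_⟩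
      have : s N < s r := hs hr
      omega
    · exact ⟨0, by simp⟩
  · obtain ⟨R, hR, hR'⟩ := hxN ((s N + 1 : ℕ) : ℤ)
    rw [hx, if_pos rfl] at hR
    rw [mul_left_cancel₀ hℓ (orbitEval_injective hg hind hR)] at hQN
    exact hQN (hR' N le_rfl (by push_cast; omega))

end Chain
section Noetherian

lemma not_isNoetherianRing_of_chain {R : Type*} [Ring R] (I : ℕ → Ideal R) (hI : Monotone I)
    (h : ∀ N, ∃ x ∈ I (N + 1), x ∉ I N) : ¬ IsNoetherianRing R := by
  intro hR
  obtain ⟨n, hn⟩ := monotone_stabilizes_iff_noetherian.mpr hR ⟨I, hI⟩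
  obtain ⟨x, hx, hx'⟩ := h n
  have h' : I n = I (n + 1) := hn (n + 1) n.le_succ
  exact hx' (h' ▸ hx)

variable {k E : Type*} [Field k] [Ring E] [Algebra k E] {S : Set E} {W : Submodule k E}

lemma adjoin_mul_mem (hW : ∀ s ∈ S, ∀ w ∈ W, s * w ∈ W) {x w : E}
    (hx : x ∈ Algebra.adjoin k S) (hw : w ∈ W) : x * w ∈ W := by
  induction hx using Algebra.adjoin_induction generalizing w with
  | mem x hx => exact hW x hx w hw
  | algebraMap r => rw [← Algebra.smul_def]; exact W.smul_mem r hw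
  | add x y _ _ hx hy => rw [add_mul]; exact add_mem (hx hw) (hy hw)
  | mul x y _ _ hx hy => rw [mul_assoc]; exact hx (hy hw)

lemma mul_adjoin_mem (hW : ∀ s ∈ S, ∀ w ∈ W, w * s ∈ W) {x w : E}
    (hx : x ∈ Algebra.adjoin k S) (hw : w ∈ W) : w * x ∈ W := by
  induction hx using Algebra.adjoin_induction generalizing w with
  | mem x hx => exact hW x hx w hw
  | algebraMap r => rw [← Algebra.commutes, ← Algebra.smul_def]; exact W.smul_mem r hw
  | add x y _ _ hx hy => rw [mul_add]; exact add_mem (hx hw) (hy hw)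
  | mul x y _ _ hx hy => rw [← mul_assoc]; exact hy (hx hw)

lemma not_isNoetherianRing_adjoin (W : ℕ → Submodule k E) (hmono : Monotone W)
    (hW : ∀ N, ∀ s ∈ S, ∀ w ∈ W N, s * w ∈ W N)
    (h : ∀ N, ∃ x ∈ Algebra.adjoin k S, x ∈ W (N + 1) ∧ x ∉ W N) :
    ¬ IsNoetherianRing (Algebra.adjoin k S) := by
  let I (N : ℕ) : Ideal (Algebra.adjoin k S) :=
    { carrier := {a | (a : E) ∈ W N}
      zero_mem' := (W N).zero_mem
      add_mem' := fun {a b} ha hb => (W N).add_mem ha hb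
      smul_mem' := fun a b hb => adjoin_mul_mem (hW N) a.2 hb }
  refine not_isNoetherianRing_of_chain I (fun M N hMN a ha => hmono hMN ha) fun N => ?_
  obtain ⟨x, hx, hx1, hx2⟩ := h N
  exact ⟨⟨x, hx⟩, hx1, hx2⟩

lemma not_isNoetherianRing_adjoin_op (W : ℕ → Submodule k E) (hmono : Monotone W)
    (hW : ∀ N, ∀ s ∈ S, ∀ w ∈ W N, w * s ∈ W N)
    (h : ∀ N, ∃ x ∈ Algebra.adjoin k S, x ∈ W (N + 1) ∧ x ∉ W N) :
    ¬ IsNoetherianRing (Algebra.adjoin k S)ᵐᵒᵖ := by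
  let I (N : ℕ) : Ideal (Algebra.adjoin k S)ᵐᵒᵖ :=
    { carrier := {a | (a.unop : E) ∈ W N}
      zero_mem' := (W N).zero_mem
      add_mem' := fun {a b} ha hb => (W N).add_mem ha hb
      smul_mem' := fun a b hb => mul_adjoin_mem (hW N) a.unop.2 hb }
  refine not_isNoetherianRing_of_chain I (fun M N hMN a ha => hmono hMN ha) fun N => ?_
  obtain ⟨x, hx, hx1, hx2⟩ := h N
  exact ⟨MulOpposite.op ⟨x, hx⟩, hx1, hx2⟩

end Noetherian

section EulerianDerivatives

open LaurentPolynomial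

variable {k : Type*} [Field k]

/-- The functional sending `x` to the coefficient of `T (m n)` in `x (T (l n))`, as `n` varies. -/
def matrixCoeff (l m : ℤ → ℤ) : Module.End k k[T;T⁻¹] →ₗ[k] (ℤ → k) where
  toFun x n := (x (T (l n))).coeff (m n)
  map_add' x y := by funext n; simp
  map_smul' t x := by funext n; simp

lemma coeff_eulerian {q : k} {D : Module.End k k[T;T⁻¹]}
    (hD : ∀ n : ℤ, D (T n) = ((q ^ n - 1) / (q - 1)) • T (n - 1)) (f : k[T;T⁻¹]) (m : ℤ) :
    (D f).coeff m = ((q ^ (m + 1) - 1) / (q - 1)) * f.coeff (m + 1) := by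
  induction f using LaurentPolynomial.induction_on' with
  | add f g hf hg => simp [hf, hg, mul_add]
  | C_mul_T n t =>
    rw [← smul_eq_C_mul, map_smul, hD]
    simp only [AddMonoidAlgebra.coeff_smul, Finsupp.smul_apply, T_apply, smul_eq_mul]
    by_cases h : n = m + 1
    · subst h; simp; ring
    · rw [if_neg h, if_neg (by omega)]; simp

lemma pow_mul_add_one_pow_injective {F : Type*} [Field F] [Algebra F k] {y : k}
    (hy : Transcendental F y) (m m' : Fin 2 →₀ ℕ)
    (h : ∏ i, (![y, y + 1] : Fin 2 → k) i ^ m i = ∏ i, (![y, y + 1] : Fin 2 → k) i ^ m' i) :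
    m = m' := by
  open Polynomial in
  simp only [Fin.prod_univ_two, Matrix.cons_val_zero, Matrix.cons_val_one] at h
  have hp : (X ^ m 0 * (X + 1) ^ m 1 : F[X]) = X ^ m' 0 * (X + 1) ^ m' 1 :=
    transcendental_iff_injective.mp hy (by simpa using h)
  have hX : (X + 1 : F[X]) ≠ 0 := (monic_X_add_C (1 : F)).ne_zero
  have hne (a b : ℕ) : (X ^ a * (X + 1) ^ b : F[X]) ≠ 0 :=
    mul_ne_zero (pow_ne_zero _ X_ne_zero) (pow_ne_zero _ hX)
  have hroot (a b : ℕ) : rootMultiplicity 0 (X ^ a * (X + 1) ^ b : F[X]) = a := by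
    rw [rootMultiplicity_mul (hne a b), rootMultiplicity_eq_zero (p := (X + 1 : F[X]) ^ b)
      (by simp [IsRoot])]
    simpa using rootMultiplicity_X_sub_C_pow (0 : F) a
  have h0 : m 0 = m' 0 := by rw [← hroot (m 0) (m 1), hp, hroot]
  have h1 : m 1 = m' 1 := by
    rw [h0] at hp
    have := congrArg natDegree (mul_left_cancel₀ (pow_ne_zero _ X_ne_zero) hp)
    have hd (b : ℕ) : natDegree ((X + 1 : F[X]) ^ b) = b := by
      rw [natDegree_pow, ← C_1, natDegree_X_add_C, mul_one]
    rwa [hd, hd] at this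
  ext i
  fin_cases i
  exacts [h0, h1]

/-- The data attached to a pair of Eulerian derivatives yield elements of the algebra they
generate that separate the steps of the chain of cofactor conditions. -/
lemma exists_mem_adjoin_of_actsByShift {g κ : Fin 2 → k} {D : Fin 2 → Module.End k k[T;T⁻¹]}
    {c : ℤ → Module.End k k[T;T⁻¹] →ₗ[k] (ℤ → k)}
    {μ : Fin 2 → Module.End k k[T;T⁻¹] →ₗ[k] Module.End k k[T;T⁻¹]}
    (hμ : ActsByShift g κ c μ)
    (hμD : ∀ i, μ i = LinearMap.mulLeft k (D i) ∨ μ i = LinearMap.mulRight k (D i))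
    (hg : ∀ i, g i ≠ 0)
    (hind : ∀ m m' : Fin 2 →₀ ℕ, ∏ i, g i ^ m i = ∏ i, g i ^ m' i → m = m') (hκ : ∀ i, κ i ≠ 0)
    (hc : ∀ d, c d 1 = if d = 0 then 1 else 0)
    {ℓ : MvPolynomial (Fin 2) k} {n : ℤ} (hℓ : orbitEval g ℓ n ≠ 0)
    (hℓ2 : orbitEval g ℓ ∈ orbitSpan g ^ 2)
    {s : ℕ → ℕ} (hs : StrictMono s) (hsℓ : ∀ r, orbitEval g ℓ (s r) = 0) (N : ℕ) :
    ∃ x ∈ Algebra.adjoin k (Set.range D),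
      x ∈ cofactorVanishing g c ℓ s (N + 1 + 1) ∧ x ∉ cofactorVanishing g c ℓ s (N + 1) := by
  have hDm (i : Fin 2) : D i ∈ Algebra.adjoin k (Set.range D) :=
    Algebra.subset_adjoin ⟨i, rfl⟩
  refine hμ.exists_mem_notMem hg hind hκ (B := (Algebra.adjoin k (Set.range D)).toSubmodule)
    (fun i x hx => ?_) (one_mem (Algebra.adjoin k (Set.range D))) hc
    (fun h => hℓ (by simp [h])) hℓ2 hs hsℓ N.succ_pos
  rcases hμD i with h | h
  · rw [h]; exact (Algebra.adjoin k (Set.range D)).mul_mem (hDm i) hx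
  · rw [h]; exact (Algebra.adjoin k (Set.range D)).mul_mem hx (hDm i)

lemma actsByShift_mulLeft {q : Fin 2 → k} {D : Fin 2 → Module.End k k[T;T⁻¹]}
    (hD : ∀ i, ∀ n : ℤ, D i (T n) = ((q i ^ n - 1) / (q i - 1)) • T (n - 1)) :
    ActsByShift q (fun i => (q i - 1)⁻¹) (fun d => matrixCoeff id (fun n => n - d))
      (fun i => LinearMap.mulLeft k (D i)) := by
  intro i d x
  funext n
  simp only [matrixCoeff, LinearMap.coe_mk, AddHom.coe_mk, LinearMap.mulLeft_apply,
    Module.End.mul_apply, coeff_eulerian (hD i), orbitShift, Pi.smul_apply, Pi.mul_apply,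
    smul_eq_mul, id_eq, show n - (d + 1) + 1 = n - d by ring]
  ring

lemma actsByShift_mulRight {q : Fin 2 → k} {D : Fin 2 → Module.End k k[T;T⁻¹]}
    (hD : ∀ i, ∀ n : ℤ, D i (T n) = ((q i ^ n - 1) / (q i - 1)) • T (n - 1)) :
    ActsByShift (fun i => (q i)⁻¹) (fun i => (q i - 1)⁻¹)
      (fun d => matrixCoeff (fun n => d - 1 - n) (fun n => -1 - n))
      (fun i => LinearMap.mulRight k (D i)) := by
  intro i d x
  funext n
  simp only [matrixCoeff, LinearMap.coe_mk, AddHom.coe_mk, LinearMap.mulRight_apply,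
    Module.End.mul_apply, hD i, map_smul, orbitShift, Pi.smul_apply, Pi.mul_apply,
    AddMonoidAlgebra.coeff_smul, Finsupp.smul_apply, smul_eq_mul, inv_zpow', neg_sub,
    show d + 1 - 1 - n = d - n by ring, show d - n - 1 = d - 1 - n by ring]
  ring

end EulerianDerivatives

/-- in characteristic `p > 0`, for `y` transcendental over the prime
subfield `𝔽_p`, the algebra generated by the Eulerian derivatives `D_y` and `D_{y+1}`
is neither left nor right noetherian. -/
theorem stmt_6 {k : Type*} [Field k] [IsAlgClosed k]
    (p : ℕ) [Fact p.Prime] [CharP k p] [Algebra (ZMod p) k]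
    (y : k) (hy : Transcendental (ZMod p) y)
    (D1 D2 : Module.End k (LaurentPolynomial k))
    (hD1 : ∀ n : ℤ, D1 (LaurentPolynomial.T n)
        = ((y ^ n - 1) / (y - 1)) • LaurentPolynomial.T (n - 1))
    (hD2 : ∀ n : ℤ, D2 (LaurentPolynomial.T n)
        = (((y + 1) ^ n - 1) / ((y + 1) - 1)) • LaurentPolynomial.T (n - 1)) :
    ¬ IsNoetherianRing (Algebra.adjoin k ({D1, D2} : Set (Module.End k (LaurentPolynomial k)))) ∧
    ¬ IsNoetherianRing
        (↥(Algebra.adjoin k ({D1, D2} : Set (Module.End k (LaurentPolynomial k)))))ᵐᵒᵖ := by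
  have hy0 : y ≠ 0 := fun h => hy (h ▸ isAlgebraic_zero)
  have hind := pow_mul_add_one_pow_injective hy
  have hy1 : y + 1 ≠ 0 := fun h => hy <| by
    rw [eq_neg_of_add_eq_zero_left h]
    exact isAlgebraic_one.neg
  have hy2 : y - 1 ≠ 0 := fun h => hy <| by
    rw [sub_eq_zero.mp h]
    exact isAlgebraic_one
  have hp : p.Prime := Fact.out
  have hfrob (r : ℕ) : (y + 1) ^ p ^ r = y ^ p ^ r + 1 := by
    rw [add_pow_char_pow, one_pow]
  set q : Fin 2 → k := ![y, y + 1] with hq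
  have hq0 (i : Fin 2) : q i ≠ 0 := by fin_cases i <;> simpa [hq]
  have hκ (i : Fin 2) : (q i - 1)⁻¹ ≠ 0 := by
    refine inv_ne_zero ?_
    fin_cases i <;> simpa [hq]
  set D : Fin 2 → Module.End k (LaurentPolynomial k) := ![D1, D2] with hDdef
  have hD (i : Fin 2) (n : ℤ) : D i (LaurentPolynomial.T n)
      = ((q i ^ n - 1) / (q i - 1)) • LaurentPolynomial.T (n - 1) := by
    fin_cases i
    exacts [hD1 n, hD2 n]
  have hrange : ({D1, D2} : Set (Module.End k (LaurentPolynomial k))) = Set.range D := by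
    rw [hDdef, Matrix.range_cons, Matrix.range_cons, Matrix.range_empty, Set.union_empty,
      Set.singleton_union]
  rw [hrange]
  constructor
  · let ℓ : MvPolynomial (Fin 2) k := MvPolynomial.X 1 - MvPolynomial.X 0 - 1
    have hℓ (n : ℤ) : orbitEval q ℓ n = (y + 1) ^ n - y ^ n - 1 := by
      simp [ℓ, orbitEval, hq]
    have hμ := actsByShift_mulLeft hD
    refine not_isNoetherianRing_adjoin
      (fun N => cofactorVanishing q _ ℓ (fun r => p ^ r) (N + 1))
      (fun M N h => cofactorVanishing_mono _ _ _ _ (Nat.succ_le_succ h)) ?_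
      (exists_mem_adjoin_of_actsByShift hμ (fun i => Or.inl rfl) hq0 hind hκ ?_
        (n := 0) ?_ ?_ (pow_right_strictMono₀ hp.one_lt) ?_)
    · rintro N _ ⟨i, rfl⟩ x hx
      exact hμ.mem_cofactorVanishing hq0 i hx
    · intro d
      funext n
      by_cases h : d = 0
      · simp [matrixCoeff, h]
      · simp [matrixCoeff, h, LaurentPolynomial.T_apply, show ¬ n = n - d by omega]
    · simp [hℓ]
    · refine orbitSpan_pow_le q 1 ?_
      rw [pow_one]
      simp only [ℓ, orbitEval, map_sub, MvPolynomial.aeval_X, map_one]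
      exact sub_mem (sub_mem (zpow_mem_orbitSpan q 1) (zpow_mem_orbitSpan q 0))
        (one_mem_orbitSpan q)
    · intro r
      rw [hℓ, zpow_natCast, zpow_natCast, hfrob]
      ring
  · set g : Fin 2 → k := fun i => (q i)⁻¹ with hgdef
    have hg0 (i : Fin 2) : g i ≠ 0 := inv_ne_zero (hq0 i)
    have hgind (m m' : Fin 2 →₀ ℕ) (h : ∏ i, g i ^ m i = ∏ i, g i ^ m' i) : m = m' :=
      hind m m' <| by
        simp only [hgdef, inv_pow, Finset.prod_inv_distrib] at h
        exact inv_injective h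
    let ℓ : MvPolynomial (Fin 2) k := g 0 • MvPolynomial.X 0 - g 1 • MvPolynomial.X 1
      - (g 0 * g 1) • (MvPolynomial.X 0 * MvPolynomial.X 1)
    have hℓ (n : ℤ) : orbitEval g ℓ n
        = y ^ (-(n + 1)) - (y + 1) ^ (-(n + 1)) - y ^ (-(n + 1)) * (y + 1) ^ (-(n + 1)) := by
      have h (i : Fin 2) : g i * g i ^ n = q i ^ (-(n + 1)) := by
        rw [← zpow_one_add₀ (hg0 i), hgdef, inv_zpow', add_comm]
      have e0 : q 0 = y := rfl
      have e1 : q 1 = y + 1 := rfl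
      rw [← e1, ← e0, ← h, ← h]
      simp only [ℓ, orbitEval, map_sub, map_smul, map_mul, MvPolynomial.aeval_X, Pi.sub_apply,
        Pi.smul_apply, Pi.mul_apply, smul_eq_mul]
      ring
    have hμ := actsByShift_mulRight hD
    refine not_isNoetherianRing_adjoin_op
      (fun N => cofactorVanishing g _ ℓ (fun r => p ^ r - 1) (N + 1))
      (fun M N h => cofactorVanishing_mono _ _ _ _ (Nat.succ_le_succ h)) ?_
      (exists_mem_adjoin_of_actsByShift hμ (fun i => Or.inr rfl) hg0 hgind hκ ?_
        (n := -1) ?_ ?_ ?_ ?_)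
    · rintro N _ ⟨i, rfl⟩ x hx
      exact hμ.mem_cofactorVanishing hg0 i hx
    · intro d
      funext n
      by_cases h : d = 0
      · simp [matrixCoeff, h]
      · simp [matrixCoeff, h, LaurentPolynomial.T_apply,
          show ¬ d - 1 - n = -1 - n by omega]
    · change orbitEval g ℓ (-1) ≠ 0
      simp [hℓ]
    · have hP (i : Fin 2) := zpow_mem_orbitSpan g i
      have hP2 (i : Fin 2) : (fun n : ℤ => g i ^ n) ∈ orbitSpan g ^ 2 :=
        orbitSpan_pow_le g 1 (by rw [pow_one]; exact hP i)
      simp only [ℓ, orbitEval, map_sub, map_smul, map_mul, MvPolynomial.aeval_X]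
      refine sub_mem (sub_mem (Submodule.smul_mem _ _ (hP2 0)) (Submodule.smul_mem _ _ (hP2 1)))
        (Submodule.smul_mem _ _ ?_)
      rw [pow_two]
      exact Submodule.mul_mem_mul (hP 0) (hP 1)
    · intro a b hab
      have h1 : p ^ a < p ^ b := Nat.pow_lt_pow_right hp.one_lt hab
      have h2 : 0 < p ^ a := pow_pos hp.pos a
      change p ^ a - 1 < p ^ b - 1
      omega
    · intro r
      have h2 : 1 ≤ p ^ r := pow_pos hp.pos r
      rw [hℓ, Nat.cast_sub h2, Nat.cast_one, sub_add_cancel, zpow_neg, zpow_neg, zpow_natCast,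
        zpow_natCast]
      have ha : y ^ p ^ r ≠ 0 := pow_ne_zero _ hy0
      have hb : (y + 1) ^ p ^ r ≠ 0 := pow_ne_zero _ hy1
      rw [hfrob] at hb ⊢
      field_simp
      ring
end
end

section
/- Assume k has characteristic 0. Let L be an invertible (t+1)×(t+1) matrix over k and let v ∈ k^{t+1} be a nonzero vector. Suppose that for every nonzero homogeneous polynomial F ∈ k[x_0,…,x_t] there exists n ∈ ℤ with F(Lⁿv) ≠ 0 (i.e. the orbit {Lⁿv : n ∈ ℤ}, viewed in P^t, is Zariski dense). Then for every nonzero homogeneous F ∈ k[x_0,…,x_t] the set {n ∈ ℤ : F(Lⁿv) = 0} is finite (i.e. the orbit is critically dense in P^t). -/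
set_option synthInstance.maxHeartbeats 1000000
set_option maxHeartbeats 4000000

noncomputable section

open Polynomial in
theorem Polynomial.card_le_natDegree_map_of_isRoot {A B : Type*} [CommRing A] [IsDomain A]
    [CommRing B] [IsDomain B] (f : A →+* B) {P : A[X]} (hP : P.map f ≠ 0) {Z : Finset A}
    (hZ : ∀ z ∈ Z, P.IsRoot z) : Z.card ≤ (P.map f).natDegree := by
  have hP0 : P ≠ 0 := by rintro rfl; simp at hP
  have hdvd : (Z.val.map fun z => X - C z).prod ∣ P := by
    rw [Multiset.prod_X_sub_C_dvd_iff_le_roots hP0, Multiset.le_iff_subset Z.nodup]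
    intro z hz
    exact (mem_roots hP0).2 (hZ z hz)
  have hmonic : (Z.val.map fun z => X - C z).prod.Monic := monic_multisetProd_X_sub_C Z.val
  have := natDegree_le_of_dvd ((mapRingHom f).map_dvd hdvd) hP
  simpa [hmonic.natDegree_map f] using this

namespace PadicInt

variable {p : ℕ} [Fact p.Prime]

theorem natCast_factorial_dvd_pow (j : ℕ) : ((j.factorial : ℕ) : ℤ_[p]) ∣ (p : ℤ_[p]) ^ j := by
  have hne : ((j.factorial : ℕ) : ℤ_[p]) ≠ 0 := Nat.cast_ne_zero.2 j.factorial_ne_zero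
  rw [unitCoeff_spec hne]
  refine (Units.mul_left_dvd).2 (pow_dvd_pow _ ?_)
  have hval : ((j.factorial : ℕ) : ℤ_[p]).valuation = padicValNat p j.factorial := by
    have h := valuation_coe ((j.factorial : ℕ) : ℤ_[p])
    rw [coe_natCast, Padic.valuation_natCast] at h
    exact_mod_cast h.symm
  rw [hval]
  exact padicValNat_factorial_le p j

theorem toZMod_eq_zero_iff_dvd (x : ℤ_[p]) : toZMod x = 0 ↔ (p : ℤ_[p]) ∣ x := by
  rw [← RingHom.mem_ker, ker_toZMod, maximalIdeal_eq_span_p, Ideal.mem_span_singleton]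

theorem eq_zero_of_forall_pow_dvd {x : ℤ_[p]} (h : ∀ n : ℕ, (p : ℤ_[p]) ^ n ∣ x) : x = 0 := by
  by_contra hx
  have := h (x.valuation + 1)
  rw [← Ideal.mem_span_singleton, mem_span_pow_iff_le_valuation x hx] at this
  omega

/-- A Strassmann-type bound for functions given by a rapidly convergent series of falling
factorials. -/
theorem forall_eq_zero_of_sum_descFactorial {d : ℕ → ℤ_[p]} (hd : ∀ j, (p : ℤ_[p]) ^ j ∣ d j)
    {g : ℕ → ℤ_[p]}
    (hg : ∀ n, g n = ∑ j ∈ Finset.range (n + 1), d j * (n.descFactorial j : ℤ_[p]))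
    (hinf : {n | g n = 0}.Infinite) (j : ℕ) : d j = 0 := by
  classical
  by_contra hj
  obtain ⟨e, he⟩ : ∃ e : ℕ, ∃ j, ¬ (p : ℤ_[p]) ^ (e + 1) ∣ d j := by
    by_contra! h
    refine hj (eq_zero_of_forall_pow_dvd fun n => (pow_dvd_pow _ n.le_succ).trans (h n j))
  obtain ⟨e, ⟨j₀, hj₀⟩, hmin⟩ : ∃ e : ℕ, (∃ j, ¬ (p : ℤ_[p]) ^ (e + 1) ∣ d j) ∧
      ∀ i, (p : ℤ_[p]) ^ e ∣ d i := by
    have hex : ∃ e : ℕ, ∃ j, ¬ (p : ℤ_[p]) ^ (e + 1) ∣ d j := ⟨e, he⟩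
    refine ⟨Nat.find hex, Nat.find_spec hex, fun i => ?_⟩
    rcases hn : Nat.find hex with _ | m
    · simp
    · by_contra hi
      exact Nat.find_min hex (m := m) (by omega) ⟨i, hi⟩
  have hbound : ∀ i, ¬ (p : ℤ_[p]) ^ (e + 1) ∣ d i → i ≤ e := fun i hi => by
    by_contra! hlt
    exact hi ((pow_dvd_pow _ hlt).trans (hd i))
  let J := Nat.findGreatest (fun i => ¬ (p : ℤ_[p]) ^ (e + 1) ∣ d i) e
  have hJ : ¬ (p : ℤ_[p]) ^ (e + 1) ∣ d J :=
    Nat.findGreatest_spec (P := fun i => ¬ (p : ℤ_[p]) ^ (e + 1) ∣ d i) (hbound _ hj₀) hj₀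
  have hJlast : ∀ i, J < i → (p : ℤ_[p]) ^ (e + 1) ∣ d i := fun i hi => by
    by_contra hi'
    exact hi.not_ge (Nat.le_findGreatest (hbound i hi') hi')
  choose c hc using hmin
  have hp0 : (p : ℤ_[p]) ^ e ≠ 0 := pow_ne_zero _ (Nat.cast_ne_zero.2 (Fact.out : p.Prime).ne_zero)
  have hcdvd : ∀ i, toZMod (c i) = 0 ↔ (p : ℤ_[p]) ^ (e + 1) ∣ d i := fun i => by
    rw [toZMod_eq_zero_iff_dvd, hc i, pow_succ, mul_dvd_mul_iff_left hp0]
  obtain ⟨Z, hZ, hZcard⟩ := hinf.exists_subset_card_eq (J + 1)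
  let N := Z.sup id + J
  let P : Polynomial ℤ_[p] := ∑ i ∈ Finset.range (N + 1),
    Polynomial.C (c i) * descPochhammer ℤ_[p] i
  have hroot : ∀ n ∈ Z, P.IsRoot (n : ℤ_[p]) := fun n hn => by
    have hnN : n ≤ N := (Finset.le_sup (f := id) hn).trans (Nat.le_add_right _ _)
    have h0 : g n = 0 := hZ hn
    have : (p : ℤ_[p]) ^ e * P.eval (n : ℤ_[p]) = g n := by
      rw [hg, Polynomial.eval_finsetSum, Finset.mul_sum]
      symm
      refine Finset.sum_subset_zero_on_sdiff (Finset.range_mono (by omega)) ?_ ?_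
      · intro i hi
        have : n < i := by
          have := (Finset.mem_sdiff.1 hi).2
          rw [Finset.mem_range] at this
          omega
        simp [descPochhammer_eval_eq_descFactorial, Nat.descFactorial_of_lt this]
      · intro i _
        simp [descPochhammer_eval_eq_descFactorial, hc i, mul_assoc]
    rw [h0] at this
    exact (mul_eq_zero.1 this).resolve_left hp0
  have hmap : P.map toZMod = ∑ i ∈ Finset.range (J + 1),
      Polynomial.C (toZMod (c i)) * descPochhammer (ZMod p) i := by
    simp only [P, Polynomial.map_sum, Polynomial.map_mul, Polynomial.map_C, descPochhammer_map]
    symm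
    refine Finset.sum_subset_zero_on_sdiff
      (Finset.range_mono (by omega)) (fun i hi => ?_) (fun _ _ => rfl)
    have : J < i := by
          have := (Finset.mem_sdiff.1 hi).2
          rw [Finset.mem_range] at this
          omega
    rw [(hcdvd i).2 (hJlast i this)]
    simp
  have hdeg : (P.map toZMod).natDegree ≤ J := by
    rw [hmap]
    refine Polynomial.natDegree_sum_le_of_forall_le _ _ fun i hi => ?_
    refine (Polynomial.natDegree_C_mul_le _ _).trans ?_
    rw [descPochhammer_natDegree]
    exact Nat.lt_succ_iff.1 (Finset.mem_range.1 hi)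
  have hcoeff : (P.map toZMod).coeff J = toZMod (c J) := by
    rw [hmap, Polynomial.finsetSum_coeff, Finset.sum_range_succ, Finset.sum_eq_zero, zero_add,
      Polynomial.coeff_C_mul]
    · have := (monic_descPochhammer (ZMod p) J).coeff_natDegree
      rw [descPochhammer_natDegree] at this
      rw [this, mul_one]
    · intro i hi
      rw [Polynomial.coeff_C_mul, Polynomial.coeff_eq_zero_of_natDegree_lt, mul_zero]
      rw [descPochhammer_natDegree]
      exact Finset.mem_range.1 hi
  have hne : P.map toZMod ≠ 0 := fun h => by
    rw [h, Polynomial.coeff_zero] at hcoeff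
    exact hJ ((hcdvd J).1 hcoeff.symm)
  have hcard := Polynomial.card_le_natDegree_map_of_isRoot toZMod hne
    (Z := Z.image (Nat.cast : ℕ → ℤ_[p])) (by simpa using hroot)
  rw [Finset.card_image_of_injective _ Nat.cast_injective, hZcard] at hcard
  omega

theorem forall_eq_zero_of_fwdDiff_dvd {g : ℕ → ℤ_[p]}
    (hg : ∀ j, ((p : ℤ_[p]) ^ 2) ^ j ∣ (fwdDiff 1)^[j] g 0)
    (hinf : {n | g n = 0}.Infinite) (n : ℕ) : g n = 0 := by
  have hd : ∀ j, ∃ d : ℤ_[p], (p : ℤ_[p]) ^ j ∣ d ∧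
      (fwdDiff 1)^[j] g 0 = (j.factorial : ℤ_[p]) * d := fun j => by
    obtain ⟨c, hc⟩ := hg j
    obtain ⟨u, hu⟩ := natCast_factorial_dvd_pow (p := p) j
    exact ⟨p ^ j * (u * c), dvd_mul_right _ _, by
      rw [hc, ← pow_mul, mul_comm 2, pow_mul, pow_two]; nth_rw 1 [hu]; ring⟩
  choose d hdvd hd using hd
  have key : ∀ n, g n = ∑ j ∈ Finset.range (n + 1), d j * (n.descFactorial j : ℤ_[p]) := by
    intro n
    have := shift_eq_sum_fwdDiff_iter 1 g n 0
    simp only [smul_eq_mul, mul_one, zero_add] at this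
    rw [this]
    refine Finset.sum_congr rfl fun j _ => ?_
    rw [hd, Nat.descFactorial_eq_factorial_mul_choose, nsmul_eq_mul]
    push_cast
    ring
  rw [key]
  exact Finset.sum_eq_zero fun j _ => by
    rw [forall_eq_zero_of_sum_descFactorial hdvd key hinf j, zero_mul]

end PadicInt

theorem pow_dvd_fwdDiff_iter_mul {S : Type*} [CommRing S] (q : S) (k : ℕ) :
    ∀ (a b : ℕ) (f g : ℕ → S), (∀ i n, q ^ (a + i) ∣ (fwdDiff 1)^[i] f n) →
      (∀ i n, q ^ (b + i) ∣ (fwdDiff 1)^[i] g n) →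
      ∀ n, q ^ (a + b + k) ∣ (fwdDiff 1)^[k] (fun n => f n * g n) n := by
  induction k with
  | zero =>
    intro a b f g hf hg n
    simpa [pow_add] using mul_dvd_mul (hf 0 n) (hg 0 n)
  | succ k ih =>
    intro a b f g hf hg n
    have hΔ : fwdDiff 1 (fun n => f n * g n) =
        (fun n => fwdDiff 1 f n * g (n + 1)) + fun n => f n * fwdDiff 1 g n := by
      ext n
      simp only [fwdDiff, Pi.add_apply]
      ring
    rw [Function.iterate_succ_apply, hΔ, fwdDiff_iter_add, Pi.add_apply]
    refine dvd_add ?_ ?_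
    · have := ih (a + 1) b (fwdDiff 1 f) (fun n => g (n + 1))
        (fun i n => by
          have := hf (i + 1) n
          rwa [Function.iterate_succ_apply, show a + (i + 1) = a + 1 + i by ring] at this)
        (fun i n => by rw [fwdDiff_iter_comp_add]; exact hg i (n + 1)) n
      rwa [show a + 1 + b + k = a + b + (k + 1) by ring] at this
    · have := ih a (b + 1) f (fwdDiff 1 g) hf
        (fun i n => by
          have := hg (i + 1) n
          rwa [Function.iterate_succ_apply, show b + (i + 1) = b + 1 + i by ring] at this) n
      rwa [show a + (b + 1) + k = a + b + (k + 1) by ring] at this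

theorem pow_dvd_fwdDiff_iter_eval {S σ : Type*} [CommRing S] (q : S) {u : ℕ → σ → S}
    (hu : ∀ s i n, q ^ i ∣ (fwdDiff 1)^[i] (fun n => u n s) n) (F : MvPolynomial σ S) :
    ∀ i n, q ^ i ∣ (fwdDiff 1)^[i] (fun n => MvPolynomial.eval (u n) F) n := by
  induction F using MvPolynomial.induction_on with
  | C a =>
    intro i n
    rcases i with _ | i
    · simp
    · have h0 : ∀ i : ℕ, (fwdDiff 1)^[i] (fun _ : ℕ => (0 : S)) = fun _ => 0 := fun i => by
        induction i with
        | zero => rfl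
        | succ i ih => rw [Function.iterate_succ_apply, fwdDiff_const, ih]
      simp [Function.iterate_succ_apply, h0]
  | add F G hF hG =>
    intro i n
    have : (fun n => MvPolynomial.eval (u n) (F + G)) =
        (fun n => MvPolynomial.eval (u n) F) + fun n => MvPolynomial.eval (u n) G := by
      ext n; simp
    rw [this, fwdDiff_iter_add]
    exact dvd_add (hF i n) (hG i n)
  | mul_X F s hF =>
    intro i n
    simpa using pow_dvd_fwdDiff_iter_mul q i 0 0 _ (fun n => u n s)
      (by simpa using hF) (by simpa using hu s) n

theorem fwdDiff_iter_pow_mulVec {S ι : Type*} [CommRing S] [Fintype ι] [DecidableEq ι] (q : S)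
    {M B : Matrix ι ι S} (hM : M = 1 + q • B) (s : ι) (k : ℕ) (w : ι → S) :
    (fwdDiff 1)^[k] (fun n => (M ^ n).mulVec w s) =
      fun n => q ^ k * (M ^ n).mulVec ((B ^ k).mulVec w) s := by
  induction k generalizing w with
  | zero => simp
  | succ k ih =>
    have : fwdDiff 1 (fun n => (M ^ n).mulVec w s) =
        q • fun n => (M ^ n).mulVec (B.mulVec w) s := by
      ext n
      have : M.mulVec w = w + q • B.mulVec w := by
        rw [hM, Matrix.add_mulVec, Matrix.one_mulVec, Matrix.smul_mulVec]
      simp only [fwdDiff, Pi.smul_apply, pow_succ, ← Matrix.mulVec_mulVec, this,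
        Matrix.mulVec_add, Matrix.mulVec_smul, Pi.add_apply]
      ring
    rw [Function.iterate_succ_apply, this, fwdDiff_iter_const_smul, ih]
    ext n
    simp only [Pi.smul_apply, smul_eq_mul, Matrix.mulVec_mulVec, pow_succ]
    ring

theorem fwdDiff_iter_comp_linearMap {R S T : Type*} [CommRing R] [AddCommGroup S] [Module R S]
    [AddCommGroup T] [Module R T] (l : S →ₗ[R] T) (f : ℕ → S) (k : ℕ) :
    (fwdDiff 1)^[k] (fun n => l (f n)) = fun n => l ((fwdDiff 1)^[k] f n) := by
  induction k generalizing f with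
  | zero => rfl
  | succ k ih =>
    have : fwdDiff 1 (fun n => l (f n)) = fun n => l (fwdDiff 1 f n) := by
      ext n; simp [fwdDiff]
    rw [Function.iterate_succ_apply, this, ih, Function.iterate_succ_apply]

section PadicIntegral

variable {p : ℕ} [Fact p.Prime] {S ι : Type*} [CommRing S] [Algebra ℤ_[p] S]
  [Module.Free ℤ_[p] S] [Fintype ι] [DecidableEq ι]

theorem eval_pow_mulVec_eq_zero_of_infinite {M B : Matrix ι ι S}
    (hM : M = 1 + algebraMap ℤ_[p] S ((p : ℤ_[p]) ^ 2) • B) (w : ι → S) (F : MvPolynomial ι S)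
    (hinf : {n : ℕ | MvPolynomial.eval ((M ^ n).mulVec w) F = 0}.Infinite) (n : ℕ) :
    MvPolynomial.eval ((M ^ n).mulVec w) F = 0 := by
  let b := Module.Free.chooseBasis ℤ_[p] S
  refine b.ext_elem fun j => ?_
  rw [map_zero, Finsupp.zero_apply]
  refine PadicInt.forall_eq_zero_of_fwdDiff_dvd
    (g := fun n => b.coord j (MvPolynomial.eval ((M ^ n).mulVec w) F)) (fun i => ?_)
    (hinf.mono fun n hn => ?_) n
  · rw [fwdDiff_iter_comp_linearMap]
    beta_reduce
    obtain ⟨c, hc⟩ := pow_dvd_fwdDiff_iter_eval (algebraMap ℤ_[p] S ((p : ℤ_[p]) ^ 2))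
      (u := fun n => (M ^ n).mulVec w)
      (fun s i n => ⟨_, congrFun (fwdDiff_iter_pow_mulVec _ hM s i w) n⟩) F i 0
    rw [hc, ← map_pow, ← Algebra.smul_def, map_smul]
    exact dvd_mul_right _ _
  · have : MvPolynomial.eval ((M ^ n).mulVec w) F = 0 := hn
    simp only [Set.mem_ofPred_eq, this, map_zero]

variable (p) in
theorem exists_pow_eq_one_add_smul [Module.Finite ℤ_[p] S] (L : GL ι S) (N : ℕ) : 
    ∃ m : ℕ, 0 < m ∧ ∃ B : Matrix ι ι S,
    ((L ^ m : GL ι S) : Matrix ι ι S) = 1 + algebraMap ℤ_[p] S ((p : ℤ_[p]) ^ N) • B := by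
  let b := Module.Free.chooseBasis ℤ_[p] S
  let r : ℕ → ι → ι → Module.Free.ChooseBasisIndex ℤ_[p] S → ZMod (p ^ N) := fun n s t j =>
    PadicInt.toZModPow N (b.repr (((L ^ n : GL ι S) : Matrix ι ι S) s t) j)
  have : NeZero (p ^ N) := ⟨pow_ne_zero _ (Fact.out : p.Prime).ne_zero⟩
  obtain ⟨i, j, hij, hr⟩ : ∃ i j, i < j ∧ r i = r j := by
    obtain ⟨i, j, hne, h⟩ := Finite.exists_ne_map_eq_of_infinite r
    rcases hne.lt_or_gt with h' | h'
    · exact ⟨i, j, h', h⟩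
    · exact ⟨j, i, h', h.symm⟩
  have hdvd : ∀ s t, ∃ c : S, ((L ^ j : GL ι S) : Matrix ι ι S) s t -
      ((L ^ i : GL ι S) : Matrix ι ι S) s t = algebraMap ℤ_[p] S ((p : ℤ_[p]) ^ N) * c := by
    intro s t
    have : ∀ e, ∃ c : ℤ_[p], b.repr (((L ^ j : GL ι S) : Matrix ι ι S) s t -
      ((L ^ i : GL ι S) : Matrix ι ι S) s t) e = (p : ℤ_[p]) ^ N * c := fun e => by
      have h := congrFun (congrFun (congrFun hr s) t) e
      change (p : ℤ_[p]) ^ N ∣ _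
      rw [← Ideal.mem_span_singleton, ← PadicInt.ker_toZModPow, RingHom.mem_ker, map_sub,
        Finsupp.sub_apply, map_sub, sub_eq_zero]
      exact h.symm
    choose c hc using this
    refine ⟨∑ e, c e • b e, ?_⟩
    rw [← Algebra.smul_def, Finset.smul_sum, ← b.sum_repr (_ - _)]
    refine Finset.sum_congr rfl fun e _ => ?_
    rw [hc, mul_smul]
  choose C hC using hdvd
  refine ⟨j - i, Nat.sub_pos_of_lt hij, Matrix.of C * ((L ^ i)⁻¹ : GL ι S).1, ?_⟩
  have h1 : ((L ^ j : GL ι S) : Matrix ι ι S) =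
      (L ^ i : GL ι S).1 + algebraMap ℤ_[p] S ((p : ℤ_[p]) ^ N) • Matrix.of C := by
    ext s t
    rw [Matrix.add_apply, Matrix.smul_apply, smul_eq_mul, Matrix.of_apply, ← hC]
    ring
  rw [pow_sub L hij.le, Units.val_mul, h1, add_mul, ← Units.val_mul, mul_inv_cancel,
    Units.val_one, Matrix.smul_mul]

end PadicIntegral

theorem exists_forall_eval_zpow_mulVec_eq_zero (p : ℕ) [Fact p.Prime] {S ι : Type*} [CommRing S]
    [Algebra ℤ_[p] S] [Module.Finite ℤ_[p] S] [Module.Free ℤ_[p] S] [Fintype ι] [DecidableEq ι]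
    (L : GL ι S) (v : ι → S) (F : MvPolynomial ι S)
    (hinf : {n : ℕ | MvPolynomial.eval ((L ^ n : GL ι S).1.mulVec v) F = 0}.Infinite) :
    ∃ m : ℕ, 0 < m ∧ ∃ a : ℕ, ∀ n : ℤ,
      MvPolynomial.eval ((L ^ (a + m * n) : GL ι S).1.mulVec v) F = 0 := by
  obtain ⟨m, hm, B, hB⟩ := exists_pow_eq_one_add_smul p L 2
  obtain ⟨a, ha⟩ : ∃ a : ℕ,
      {n : ℕ | MvPolynomial.eval ((L ^ (a + m * n) : GL ι S).1.mulVec v) F = 0}.Infinite := by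
    by_contra! h
    refine hinf (((Set.finite_lt_nat m).biUnion fun a _ => (h a).image (fun n => a + m * n)).subset
      fun n hn => ?_)
    simp only [Set.mem_iUnion]
    refine ⟨n % m, Nat.mod_lt _ hm, n / m, ?_, Nat.mod_add_div n m⟩
    rw [Set.mem_ofPred_eq, Nat.mod_add_div]
    exact hn
  refine ⟨m, hm, a, fun n => ?_⟩
  let K : ℕ := n.natAbs
  have key : ∀ i : ℕ, ((L ^ m : GL ι S).1 ^ i).mulVec
      ((L ^ (a - m * K : ℤ) : GL ι S).1.mulVec v) =
        (L ^ (a + m * (i - K) : ℤ) : GL ι S).1.mulVec v := by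
    intro i
    rw [Matrix.mulVec_mulVec, ← Units.val_pow_eq_pow_val, ← Units.val_mul, ← pow_mul,
      ← zpow_natCast, ← zpow_add]
    congr 3
    push_cast
    ring
  have := eval_pow_mulVec_eq_zero_of_infinite hB ((L ^ (a - m * K : ℤ) : GL ι S).1.mulVec v) F
    ((ha.image (f := fun n => n + K) (add_left_injective K).injOn).mono ?_) (n + K).toNat
  · rw [key] at this
    rwa [show (((n + K).toNat : ℤ) - K) = n by omega] at this
  · rintro _ ⟨i, hi, rfl⟩
    rw [Set.mem_ofPred_eq, key]
    rw [Set.mem_ofPred_eq, ← zpow_natCast] at hi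
    push_cast at hi ⊢
    rwa [add_sub_cancel_right]

theorem PadicInt.exists_algebraicIndependent (p : ℕ) [Fact p.Prime] (d : ℕ) :
    ∃ ξ : Fin d → ℤ_[p], AlgebraicIndependent ℚ (fun i => (ξ i : ℚ_[p])) := by
  have hfrac : Algebra.IsAlgebraic (Algebra.adjoin ℚ (Set.range ((↑) : ℤ_[p] → ℚ_[p]))) ℚ_[p] := by
    refine ⟨fun x => ?_⟩
    obtain ⟨a, b, hb, rfl⟩ := IsFractionRing.div_surjective (A := ℤ_[p]) x
    have hmem : ∀ a : ℤ_[p], IsAlgebraic (Algebra.adjoin ℚ (Set.range ((↑) : ℤ_[p] → ℚ_[p])))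
        (algebraMap ℤ_[p] ℚ_[p] a) := fun a =>
      isAlgebraic_algebraMap (⟨a, Algebra.subset_adjoin ⟨a, rfl⟩⟩ :
        Algebra.adjoin ℚ (Set.range ((↑) : ℤ_[p] → ℚ_[p])))
    rw [div_eq_mul_inv]
    exact (hmem a).mul (hmem b).inv
  obtain ⟨t, hts, ht⟩ := exists_isTranscendenceBasis_subset (R := ℚ)
    (Set.range ((↑) : ℤ_[p] → ℚ_[p]))
  have hinf : Infinite t := by
    by_contra hfin
    rw [not_infinite_iff_finite] at hfin
    have hcard : Cardinal.mk ℚ_[p] ≤ Cardinal.aleph0 := by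
      have := ht.isAlgebraic
      refine (Algebra.IsAlgebraic.cardinalMk_le_max
        (Algebra.adjoin ℚ (Set.range ((↑) : t → ℚ_[p]))) ℚ_[p]).trans (max_le ?_ le_rfl)
      rw [← Cardinal.mk_congr ht.1.aevalEquiv.toEquiv]
      refine MvPolynomial.cardinalMk_le_max.trans ?_
      simp
    exact (Cardinal.aleph0_lt_continuum.trans_le
      (continuum_le_cardinal_of_nontriviallyNormedField ℚ_[p])).not_ge hcard
  let e : Fin d ↪ t := (Fin.valEmbedding).trans (Infinite.natEmbedding t)
  choose ξ hξ using fun i => hts (e i).2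
  refine ⟨ξ, ?_⟩
  simp only [hξ]
  exact ht.1.comp e e.injective

theorem exists_prime_forall_not_dvd_den (C : Finset ℚ) :
    ∃ p : ℕ, p.Prime ∧ ∀ c ∈ C, ¬ p ∣ c.den := by
  obtain ⟨p, hle, hp⟩ := Nat.exists_infinite_primes (C.sup Rat.den + 1)
  refine ⟨p, hp, fun c hc h => ?_⟩
  have := Nat.le_of_dvd c.den_pos h
  have := Finset.le_sup (f := Rat.den) hc
  omega

/-- A finitely generated domain of characteristic zero embeds into a finite free `ℤ_[p]`-algebra
for some prime `p`. -/
theorem exists_embedding_finite_free_padicInt.{u} {k : Type u} [Field k] [CharZero k]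
    (T : Finset k) :
    ∃ (p : ℕ) (_ : Fact p.Prime) (S : Type) (_ : CommRing S) (_ : Algebra ℤ_[p] S)
      (_ : Module.Finite ℤ_[p] S) (_ : Module.Free ℤ_[p] S) (R : Type u) (_ : CommRing R)
      (κ : R →+* k) (ψ : R →+* S),
      (T : Set k) ⊆ Set.range κ ∧ Function.Injective κ ∧ Function.Injective ψ := by
  classical
  let A := Algebra.adjoin ℚ (T : Set k)
  have hA : Algebra.FiniteType ℚ A := A.fg_iff_finiteType.1 ⟨T, rfl⟩
  obtain ⟨d, g, hginj, hgint⟩ := exists_integral_inj_algHom_of_fg ℚ A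
  choose P hPmonic hProot using hgint
  let τ : T → A := fun a => ⟨a, Algebra.subset_adjoin a.2⟩
  obtain ⟨p, hp, hden⟩ := exists_prime_forall_not_dvd_den
    (Finset.univ.biUnion fun a : T => (P (τ a)).support.biUnion fun i => ((P (τ a)).coeff i).coeffs)
  have : Fact p.Prime := ⟨hp⟩
  obtain ⟨ξ, hξ⟩ := PadicInt.exists_algebraicIndependent p d
  let Ω := AlgebraicClosure ℚ_[p]
  let θ : MvPolynomial (Fin d) ℚ →ₐ[ℚ] Ω :=
    (IsScalarTower.toAlgHom ℚ ℚ_[p] Ω).comp (MvPolynomial.aeval fun i => (ξ i : ℚ_[p]))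
  have hθinj : Function.Injective θ := (algebraMap ℚ_[p] Ω).injective.comp hξ
  obtain ⟨φ, hφinj, hφ⟩ : ∃ φ : A →+* Ω, Function.Injective φ ∧ ∀ q, φ (g q) = θ q := by
    let := g.toRingHom.toAlgebra
    let := θ.toRingHom.toAlgebra
    have : Algebra.IsIntegral (MvPolynomial (Fin d) ℚ) A := ⟨fun x => ⟨P x, hPmonic x, hProot x⟩⟩
    have : FaithfulSMul (MvPolynomial (Fin d) ℚ) A :=
      (faithfulSMul_iff_algebraMap_injective _ _).2 hginj
    have : FaithfulSMul (MvPolynomial (Fin d) ℚ) Ω :=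
      (faithfulSMul_iff_algebraMap_injective _ _).2 hθinj
    let φ : A →ₐ[MvPolynomial (Fin d) ℚ] Ω := IsAlgClosed.lift
    refine ⟨φ.toRingHom, ?_, φ.commutes⟩
    rw [RingHom.injective_iff_ker_eq_bot]
    refine Ideal.eq_bot_of_comap_eq_bot (R := MvPolynomial (Fin d) ℚ) ?_
    rw [eq_bot_iff]
    intro q hq
    have : θ q = 0 := (φ.commutes q).symm.trans hq
    exact hθinj (this.trans (map_zero θ).symm)
  have hθint : ∀ q : MvPolynomial (Fin d) ℚ, (∀ c ∈ q.coeffs, ¬ p ∣ c.den) →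
      θ q ∈ (algebraMap ℤ_[p] Ω).range := by
    intro q hq
    have hrat : ∀ c ∈ q.coeffs, algebraMap ℚ Ω c ∈ (algebraMap ℤ_[p] Ω).range := fun c hc => by
      obtain ⟨z, hz⟩ : ∃ z : ℤ_[p], algebraMap ℤ_[p] ℚ_[p] z = algebraMap ℚ ℚ_[p] c :=
        ⟨⟨(c : ℚ_[p]), Padic.norm_rat_le_one (hq c hc)⟩, rfl⟩
      refine ⟨z, ?_⟩
      rw [IsScalarTower.algebraMap_apply ℤ_[p] ℚ_[p] Ω, hz, ← IsScalarTower.algebraMap_apply]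
    have hvar : ∀ i, θ (MvPolynomial.X i) ∈ (algebraMap ℤ_[p] Ω).range := fun i =>
      ⟨ξ i, by
        rw [IsScalarTower.algebraMap_apply ℤ_[p] ℚ_[p] Ω]
        simp [θ]⟩
    rw [q.as_sum, map_sum]
    refine Subring.sum_mem _ fun m hm => ?_
    rw [MvPolynomial.monomial_eq, map_mul, Finsupp.prod, map_prod]
    refine Subring.mul_mem _ ?_ (Subring.prod_mem _ fun i _ => ?_)
    · rw [← MvPolynomial.algebraMap_eq, AlgHom.commutes]
      exact hrat _ (MvPolynomial.coeff_mem_coeffs m (MvPolynomial.mem_support_iff.1 hm))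
    · rw [map_pow]
      exact Subring.pow_mem _ (hvar i) _
  have hint : ∀ a : T, IsIntegral ℤ_[p] (φ (τ a)) := by
    intro a
    have hlift : (P (τ a)).map θ.toRingHom ∈ Polynomial.lifts (algebraMap ℤ_[p] Ω) := by
      rw [Polynomial.lifts_iff_coeff_lifts]
      intro i
      rw [Polynomial.coeff_map]
      by_cases hi : i ∈ (P (τ a)).support
      · exact hθint _ fun c hc => hden c (Finset.mem_biUnion.2
          ⟨a, Finset.mem_univ _, Finset.mem_biUnion.2 ⟨i, hi, hc⟩⟩)
      · rw [Polynomial.notMem_support_iff.1 hi, map_zero]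
        exact ⟨0, map_zero _⟩
    obtain ⟨Q, hQ, -, hQmonic⟩ := Polynomial.lifts_and_natDegree_eq_and_monic hlift
      ((hPmonic (τ a)).map _)
    refine ⟨Q, hQmonic, ?_⟩
    have hcomp : φ.comp g.toRingHom = θ.toRingHom := RingHom.ext hφ
    rw [← Polynomial.eval_map, hQ, Polynomial.eval_map, ← hcomp, ← Polynomial.hom_eval₂,
      hProot, map_zero]
  let S := Algebra.adjoin ℤ_[p] (Set.range fun a : T => φ (τ a))
  have hSfin : Module.Finite ℤ_[p] S := Module.Finite.iff_fg.2
    (fg_adjoin_of_finite (Set.finite_range _) (by rintro _ ⟨a, rfl⟩; exact hint a))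
  have : FaithfulSMul ℤ_[p] Ω := (faithfulSMul_iff_algebraMap_injective _ _).2 <| by
    rw [IsScalarTower.algebraMap_eq ℤ_[p] ℚ_[p] Ω]
    exact (algebraMap ℚ_[p] Ω).injective.comp (IsFractionRing.injective ℤ_[p] ℚ_[p])
  have hSfree : Module.Free ℤ_[p] S := Module.free_of_finite_type_torsion_free'
  let R : Subring A := S.toSubring.comap φ
  refine ⟨p, inferInstance, S, inferInstance, inferInstance, hSfin, hSfree, R, inferInstance,
    A.val.toRingHom.comp R.subtype, (φ.comp R.subtype).codRestrict S fun x => x.2,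
    fun a ha => ⟨⟨τ ⟨a, ha⟩, Algebra.subset_adjoin ⟨⟨a, ha⟩, rfl⟩⟩, rfl⟩,
    Subtype.val_injective.comp Subtype.val_injective, fun x y hxy => ?_⟩
  exact Subtype.val_injective (hφinj (congrArg Subtype.val hxy))

theorem map_eval_zpow_mulVec {R S ι : Type*} [CommRing R] [CommRing S] [Fintype ι] [DecidableEq ι]
    (f : R →+* S) (L : GL ι R) (v : ι → R) (F : MvPolynomial ι R) (n : ℤ) :
    f (MvPolynomial.eval ((L ^ n : GL ι R).1.mulVec v) F) =
      MvPolynomial.eval ((Matrix.GeneralLinearGroup.map f L ^ n : GL ι S).1.mulVec (f ∘ v))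
        (MvPolynomial.map f F) := by
  rw [MvPolynomial.map_eval, ← map_zpow]
  congr 2
  ext i
  exact RingHom.map_mulVec f _ _ _

theorem exists_map_generalLinearGroup_eq {R S ι : Type*} [CommRing R] [CommRing S] [Fintype ι]
    [DecidableEq ι] {f : R →+* S} (hf : Function.Injective f) (L : GL ι S)
    (h : ∀ i j, L.1 i j ∈ Set.range f) (h' : ∀ i j, L⁻¹.1 i j ∈ Set.range f) :
    ∃ L₀ : GL ι R, Matrix.GeneralLinearGroup.map f L₀ = L := by
  choose M hM using h
  choose M' hM' using h'
  have hfM : f.mapMatrix (Matrix.of M) = L.1 := by ext i j; simp [hM]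
  have hfM' : f.mapMatrix (Matrix.of M') = L⁻¹.1 := by ext i j; simp [hM']
  have hinj : Function.Injective (f.mapMatrix : Matrix ι ι R →+* Matrix ι ι S) :=
    Matrix.map_injective hf
  refine ⟨⟨Matrix.of M, Matrix.of M', hinj ?_, hinj ?_⟩, ?_⟩
  · rw [map_mul, hfM, hfM', map_one, ← Units.val_mul, mul_inv_cancel, Units.val_one]
  · rw [map_mul, hfM, hfM', map_one, ← Units.val_mul, inv_mul_cancel, Units.val_one]
  · exact Units.ext hfM

/-- A Skolem–Mahler–Lech theorem for polynomial functions along forward linear orbits. -/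
theorem exists_forall_eval_zpow_mulVec_eq_zero_of_infinite_nat {k ι : Type*} [Field k] [CharZero k]
    [Fintype ι] [DecidableEq ι] (L : GL ι k) (v : ι → k) (F : MvPolynomial ι k)
    (hinf : {n : ℕ | MvPolynomial.eval ((L ^ n : GL ι k).1.mulVec v) F = 0}.Infinite) :
    ∃ m : ℕ, 0 < m ∧ ∃ a : ℕ, ∀ n : ℤ,
      MvPolynomial.eval ((L ^ (a + m * n) : GL ι k).1.mulVec v) F = 0 := by
  classical
  obtain ⟨p, _, S, _, _, _, _, R, _, κ, ψ, hT, hκ, hψ⟩ :=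
    exists_embedding_finite_free_padicInt
      (Finset.univ.image (fun ij : ι × ι => L.1 ij.1 ij.2) ∪
        Finset.univ.image (fun ij : ι × ι => L⁻¹.1 ij.1 ij.2) ∪ Finset.univ.image v ∪ F.coeffs)
  obtain ⟨L, rfl⟩ := exists_map_generalLinearGroup_eq hκ L
    (fun i j => hT <| by
      simp only [Finset.coe_union, Finset.coe_image, Finset.coe_univ, Set.image_univ]
      exact .inl (.inl (.inl ⟨(i, j), rfl⟩)))
    (fun i j => hT <| by
      simp only [Finset.coe_union, Finset.coe_image, Finset.coe_univ, Set.image_univ]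
      exact .inl (.inl (.inr ⟨(i, j), rfl⟩)))
  obtain ⟨F, rfl⟩ := MvPolynomial.mem_range_map_iff_coeffs_subset.2
    (show (F.coeffs : Set k) ⊆ Set.range κ from fun c hc => hT (by
      rw [Finset.coe_union]
      exact .inr hc))
  have hv : ∀ i, v i ∈ Set.range κ := fun i => hT <| by
      simp only [Finset.coe_union, Finset.coe_image, Finset.coe_univ, Set.image_univ]
      exact .inl (.inr ⟨i, rfl⟩)
  choose w hw using hv
  obtain rfl : κ ∘ w = v := funext hw
  clear hT hw
  have htransfer : ∀ n : ℤ,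
      MvPolynomial.eval ((Matrix.GeneralLinearGroup.map κ L ^ n : GL ι k).1.mulVec (κ ∘ w))
        (MvPolynomial.map κ F) = 0 ↔
      MvPolynomial.eval ((Matrix.GeneralLinearGroup.map ψ L ^ n : GL ι S).1.mulVec (ψ ∘ w))
        (MvPolynomial.map ψ F) = 0 := fun n => by
    rw [← map_eval_zpow_mulVec, ← map_eval_zpow_mulVec, map_eq_zero_iff κ hκ,
      map_eq_zero_iff ψ hψ]
  obtain ⟨m, hm, a, h⟩ := exists_forall_eval_zpow_mulVec_eq_zero p
    (Matrix.GeneralLinearGroup.map ψ L) (ψ ∘ w) (MvPolynomial.map ψ F)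
    (hinf.mono fun n hn => by
      have := (htransfer n).1
      simp only [zpow_natCast] at this
      exact this hn)
  exact ⟨m, hm, a, fun n => (htransfer _).2 (h n)⟩

/-- A Skolem–Mahler–Lech theorem for polynomial functions along two-sided linear orbits. -/
theorem exists_forall_eval_zpow_mulVec_eq_zero_of_infinite {k ι : Type*} [Field k] [CharZero k]
    [Fintype ι] [DecidableEq ι] (L : GL ι k) (v : ι → k) (F : MvPolynomial ι k)
    (hinf : {n : ℤ | MvPolynomial.eval ((L ^ n : GL ι k).1.mulVec v) F = 0}.Infinite) :
    ∃ m : ℕ, 0 < m ∧ ∃ a : ℤ, ∀ n : ℤ,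
      MvPolynomial.eval ((L ^ (a + m * n) : GL ι k).1.mulVec v) F = 0 := by
  by_cases hpos : {n : ℕ | MvPolynomial.eval ((L ^ n : GL ι k).1.mulVec v) F = 0}.Infinite
  · obtain ⟨m, hm, a, h⟩ := exists_forall_eval_zpow_mulVec_eq_zero_of_infinite_nat L v F hpos
    exact ⟨m, hm, a, h⟩
  by_cases hneg : {n : ℕ | MvPolynomial.eval ((L⁻¹ ^ n : GL ι k).1.mulVec v) F = 0}.Infinite
  · obtain ⟨m, hm, a, h⟩ := exists_forall_eval_zpow_mulVec_eq_zero_of_infinite_nat L⁻¹ v F hneg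
    refine ⟨m, hm, -a, fun n => ?_⟩
    have := h (-n)
    rwa [inv_zpow', show -((a : ℤ) + m * -n) = -a + m * n by ring] at this
  rw [Set.not_infinite] at hpos hneg
  refine absurd (((hpos.image fun n : ℕ => (n : ℤ)).union
    (hneg.image fun n : ℕ => -(n : ℤ))).subset fun n hn => ?_) hinf
  obtain ⟨i, rfl | rfl⟩ := n.eq_nat_or_neg
  · refine .inl ⟨i, ?_, rfl⟩
    rw [Set.mem_ofPred_eq, zpow_natCast] at hn
    exact hn
  · refine .inr ⟨i, ?_, rfl⟩
    rw [Set.mem_ofPred_eq, zpow_neg, zpow_natCast, ← inv_pow] at hn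
    exact hn

namespace MvPolynomial

variable {R ι : Type*} [CommRing R] [Fintype ι]

/-- Precomposition of a polynomial with the linear map given by a matrix. -/
def compMatrix (M : Matrix ι ι R) (F : MvPolynomial ι R) : MvPolynomial ι R :=
  bind₁ (fun i => ∑ j, C (M i j) * X j) F

theorem eval_compMatrix (M : Matrix ι ι R) (F : MvPolynomial ι R) (x : ι → R) :
    eval x (compMatrix M F) = eval (M.mulVec x) F := by
  induction F using MvPolynomial.induction_on with
  | C a => simp [compMatrix]
  | add F G hF hG => simp_all [compMatrix]
  | mul_X F i hF => simp_all [compMatrix, Matrix.mulVec, dotProduct]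

theorem IsHomogeneous.compMatrix {F : MvPolynomial ι R} {d : ℕ} (hF : F.IsHomogeneous d)
    (M : Matrix ι ι R) : (F.compMatrix M).IsHomogeneous d := by
  have := hF.aeval (fun i => ∑ j, C (M i j) * X j) (n := 1) fun i =>
    IsHomogeneous.sum _ _ _ fun j _ => by
      simpa using (isHomogeneous_C ι (M i j)).mul (isHomogeneous_X R j)
  rwa [one_mul] at this

theorem compMatrix_ne_zero {k : Type*} [Field k] [Infinite k] [DecidableEq ι] (L : GL ι k)
    {F : MvPolynomial ι k} (hF : F ≠ 0) : F.compMatrix L.1 ≠ 0 := by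
  refine fun h => hF (funext fun x => ?_)
  have := eval_compMatrix L.1 F (L⁻¹.1.mulVec x)
  rw [h, map_zero, Matrix.mulVec_mulVec, ← Units.val_mul, mul_inv_cancel, Units.val_one,
    Matrix.one_mulVec] at this
  rw [← this, map_zero]

end MvPolynomial

/-- in characteristic `0`, if the orbit `{Lⁿv : n ∈ ℤ}` of a nonzero vector
`v` under an invertible matrix `L`, viewed in `ℙ^t`, is Zariski dense, then it is
critically dense: every nonzero homogeneous polynomial vanishes at only finitely many
points of the orbit. -/
theorem stmt_14 {k : Type*} [Field k] [IsAlgClosed k] [CharZero k]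
    (t : ℕ) (ht : 1 ≤ t)
    (L : GL (Fin (t + 1)) k) (v : Fin (t + 1) → k) (hv : v ≠ 0)
    (hdense : ∀ F : MvPolynomial (Fin (t + 1)) k, F ≠ 0 → (∃ d, F.IsHomogeneous d) →
      ∃ n : ℤ, MvPolynomial.eval
        (((L ^ n : GL (Fin (t + 1)) k) : Matrix (Fin (t + 1)) (Fin (t + 1)) k).mulVec v) F ≠ 0) :
    ∀ F : MvPolynomial (Fin (t + 1)) k, F ≠ 0 → (∃ d, F.IsHomogeneous d) →
      {n : ℤ | MvPolynomial.eval
        (((L ^ n : GL (Fin (t + 1)) k) : Matrix (Fin (t + 1)) (Fin (t + 1)) k).mulVec v) F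
          = 0}.Finite := by
  rintro F hF ⟨d, hd⟩
  by_contra hinf
  obtain ⟨m, hm, a, h⟩ := exists_forall_eval_zpow_mulVec_eq_zero_of_infinite L v F hinf
  obtain ⟨n, hn⟩ := hdense (∏ j ∈ Finset.range m, F.compMatrix (L ^ j : GL (Fin (t + 1)) k).1)
    (Finset.prod_ne_zero_iff.2 fun j _ => MvPolynomial.compMatrix_ne_zero (L ^ j) hF)
    ⟨_, MvPolynomial.IsHomogeneous.prod _ _ (fun _ => d) fun j _ => hd.compMatrix _⟩
  refine hn ?_
  rw [map_prod]
  have hm' : (m : ℤ) ≠ 0 := by positivity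
  have hr := Int.emod_nonneg (a - n) hm'
  have hlt := Int.emod_lt_of_pos (a - n) (Int.natCast_pos.2 hm)
  refine Finset.prod_eq_zero (i := ((a - n) % m).toNat) (Finset.mem_range.2 (by omega)) ?_
  rw [MvPolynomial.eval_compMatrix, Matrix.mulVec_mulVec, ← Units.val_mul, ← zpow_natCast,
    ← zpow_add, Int.toNat_of_nonneg hr]
  have := h (-((a - n) / m))
  rwa [show a + m * -((a - n) / m) = (a - n) % m + n by
    have := Int.emod_add_mul_ediv (a - n) m
    linarith] at this
end
end
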